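/- arXiv:2307.01562 — 3 statements merged into one kernel-verified Lean document; each statement's English description precedes it below -/
import Mathlib

section
/- Let T be a non-mixing measure-preserving automorphism of a standard Borel probability space (X, 𝓑, μ). Then there exists a T-invariant sub-σ-algebra 𝓐 ⊆ 𝓑 which is nontrivial mod μ (there exists A ∈ 𝓐 with 0 < μ(A) < 1) such that for every probability space (Y, 𝓒, ν) and every mixing measure-preserving automorphism S of (Y, ν), every probability measure ρ on the measurable space (X × Y, 𝓐 ⊗ 𝓒) that is invariant under T × S and has marginals μ restricted to 𝓐 and ν is equal to the product measure (μ|𝓐) ⊗ ν. -/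
open MeasureTheory Filter Topology

/-- A measure-preserving transformation `S` of `(Y, ν)` is mixing if
`ν (A ∩ S^{-n} B) → ν A * ν B` for all measurable sets `A`, `B`. -/
def MeasureMixing {Y : Type*} [MeasurableSpace Y] (S : Y → Y) (ν : Measure Y) : Prop :=
  ∀ A B : Set Y, MeasurableSet A → MeasurableSet B →
    Tendsto (fun n => ν (A ∩ S^[n] ⁻¹' B)) atTop (𝓝 (ν A * ν B))

/-!
Fix an ultrafilter `U` on times and let `𝓐` be generated by all weak limits along `U` of bounded
orbits `h ∘ T^n`. If `𝓐` were trivial for every `U`, every such limit would be constant, which is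
mixing; so for a non-mixing `T` some `U` gives a nontrivial `𝓐`.

For disjointness, let `F₁, …, F_k` be weak limits for a joining `R = T × S`, `S` mixing, and let
`q` be a mean-zero function on the mixing side. Induction on `k` shows that `F₁ ⋯ F_k q` integrates
to zero: as `F₁` is a weak limit, the van der Corput trick bounds this integral by correlations of
`F₂ ⋯ F_k q` along `R`, in which weak lower semicontinuity of the norm replaces the products
`(F_i ∘ R^a) (F_i ∘ R^b)` by weak limits again. The induction hypothesis then leaves only the
correlations of `q` under `S`, which tend to zero. Products of weak limits determine measures on
`𝓐`, whence independence. A joining of the factor `𝓐` is first lifted to a joining of `T` by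
disintegration over `𝓐`.
-/

open scoped ENNReal RealInnerProductSpace

section UnitBounded

/-- Measurable real functions with values in `[-1, 1]`. The pointwise rather than almost
everywhere bound keeps the notion independent of a measure. -/
structure IsUnitBounded {X : Type*} [MeasurableSpace X] (f : X → ℝ) : Prop where
  measurable : Measurable f
  norm_le_one : ∀ x, ‖f x‖ ≤ 1

namespace IsUnitBounded

variable {X Y : Type*} [MeasurableSpace X] [MeasurableSpace Y] {f g : X → ℝ}

theorem comp (hf : IsUnitBounded f) {π : Y → X} (hπ : Measurable π) :
    IsUnitBounded (fun y => f (π y)) :=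
  ⟨hf.measurable.comp hπ, fun y => hf.norm_le_one (π y)⟩

theorem mul (hf : IsUnitBounded f) (hg : IsUnitBounded g) :
    IsUnitBounded (fun x => f x * g x) where
  measurable := hf.measurable.mul hg.measurable
  norm_le_one x := by
    rw [norm_mul]
    exact mul_le_one₀ (hf.norm_le_one x) (norm_nonneg _) (hg.norm_le_one x)

theorem prod {ι : Type*} {s : Finset ι} {f : ι → X → ℝ} (hf : ∀ i ∈ s, IsUnitBounded (f i)) :
    IsUnitBounded (fun x => ∏ i ∈ s, f i x) where
  measurable := s.measurable_fun_prod fun i hi => (hf i hi).measurable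
  norm_le_one x := by
    rw [norm_prod]
    exact Finset.prod_le_one (fun _ _ => norm_nonneg _) fun i hi => (hf i hi).norm_le_one x

theorem indicator_one {s : Set X} (hs : MeasurableSet s) :
    IsUnitBounded (s.indicator (1 : X → ℝ)) where
  measurable := measurable_one.indicator hs
  norm_le_one x := by by_cases hx : x ∈ s <;> simp [hx]

theorem memLp (hf : IsUnitBounded f) (p : ℝ≥0∞) (μ : Measure X) [IsFiniteMeasure μ] :
    MemLp f p μ :=
  .of_bound hf.measurable.aestronglyMeasurable 1 (.of_forall hf.norm_le_one)

theorem mul_memLp (hf : IsUnitBounded f) {p : ℝ≥0∞} {μ : Measure X} [IsFiniteMeasure μ]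
    (hg : MemLp g p μ) : MemLp (fun x => f x * g x) p μ :=
  hg.mul (hf.memLp ⊤ μ)

theorem abs_integral_le_one (hf : IsUnitBounded f) (μ : Measure X) [IsProbabilityMeasure μ] :
    |∫ x, f x ∂μ| ≤ 1 := by
  simpa using norm_integral_le_of_norm_le_const (μ := μ) (.of_forall hf.norm_le_one)

end IsUnitBounded

end UnitBounded

section WeakCompactness

theorem exists_tendsto_inner_of_norm_le {ι E : Type*} [NormedAddCommGroup E]
    [InnerProductSpace ℝ E] [CompleteSpace E] (U : Ultrafilter ι) {v : ι → E} {r : ℝ}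
    (hv : ∀ i, ‖v i‖ ≤ r) :
    ∃ w : E, ∀ u, Tendsto (fun i => ⟪v i, u⟫) U (𝓝 ⟪w, u⟫) := by
  let d : ι → WeakDual ℝ E := fun i => StrongDual.toWeakDual (InnerProductSpace.toDual ℝ E (v i))
  have hd : ∀ i, d i ∈ WeakDual.toStrongDual ⁻¹' Metric.closedBall (0 : StrongDual ℝ E) r :=
    fun i => by simpa [d] using hv i
  obtain ⟨w, -, hw⟩ := (WeakDual.isCompact_closedBall (𝕜 := ℝ) (0 : StrongDual ℝ E) r
    ).ultrafilter_le_nhds (U.map d) (tendsto_principal.2 (.of_forall hd))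
  refine ⟨(InnerProductSpace.toDual ℝ E).symm (WeakDual.toStrongDual w), fun u => ?_⟩
  rw [InnerProductSpace.toDual_symm_apply]
  exact ((WeakDual.eval_continuous u).tendsto w).comp hw

variable {X : Type*} [MeasurableSpace X] {μ : Measure X}

theorem inner_toLp_toLp {f g : X → ℝ} (hf : MemLp f 2 μ) (hg : MemLp g 2 μ) :
    ⟪hf.toLp f, hg.toLp g⟫ = ∫ x, f x * g x ∂μ := by
  rw [L2.inner_def]
  refine integral_congr_ae ?_
  filter_upwards [hf.coeFn_toLp, hg.coeFn_toLp] with x hfx hgx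
  rw [hfx, hgx, Real.inner_apply]

theorem ae_norm_le_one_of_norm_setIntegral_le [IsFiniteMeasure μ] {f : X → ℝ}
    (hf : Integrable f μ) (h : ∀ s, MeasurableSet s → ‖∫ x in s, f x ∂μ‖ ≤ μ.real s) :
    ∀ᵐ x ∂μ, ‖f x‖ ≤ 1 := by
  have hle : f ≤ᵐ[μ] fun _ => 1 :=
    ae_le_of_forall_setIntegral_le hf (integrable_const 1) fun s hs _ => by
      simpa using (abs_le.1 (h s hs)).2
  have hge : (fun _ => -1) ≤ᵐ[μ] f :=
    ae_le_of_forall_setIntegral_le (integrable_const (-1)) hf fun s hs _ => by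
      simpa using (abs_le.1 (h s hs)).1
  filter_upwards [hle, hge] with x hx hx' using abs_le.2 ⟨hx', hx⟩

theorem integral_mul_indicator_one {s : Set X} (hs : MeasurableSet s) (f : X → ℝ) :
    ∫ x, f x * s.indicator 1 x ∂μ = ∫ x in s, f x ∂μ := by
  rw [← integral_indicator hs]
  congr with x
  by_cases hx : x ∈ s <;> simp [hx]

theorem exists_memLp_tendsto_integral_mul [IsFiniteMeasure μ] {ι : Type*} (U : Ultrafilter ι)
    {v : ι → X → ℝ} (hv : ∀ i, IsUnitBounded (v i)) :
    ∃ f : X → ℝ, Measurable f ∧ MemLp f 2 μ ∧ ∀ φ : X → ℝ, MemLp φ 2 μ →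
      Tendsto (fun i => ∫ x, v i x * φ x ∂μ) U (𝓝 (∫ x, f x * φ x ∂μ)) := by
  have hvL := fun i => (hv i).memLp 2 μ
  have hbound (i) : ‖(hvL i).toLp (v i)‖ ≤ measureUnivNNReal μ ^ (2 : ℝ≥0∞).toReal⁻¹ * 1 :=
    Lp.norm_le_of_ae_bound zero_le_one <| (hvL i).coeFn_toLp.mono fun x hx => by
      simpa only [hx] using (hv i).norm_le_one x
  obtain ⟨w, hw⟩ := exists_tendsto_inner_of_norm_le U hbound
  refine ⟨w, (Lp.stronglyMeasurable w).measurable, Lp.memLp w, fun φ hφ => ?_⟩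
  have hlim := hw (hφ.toLp φ)
  rw [← Lp.toLp_coeFn w (Lp.memLp w), inner_toLp_toLp] at hlim
  simpa only [inner_toLp_toLp] using hlim

theorem exists_isUnitBounded_tendsto_integral_mul [IsFiniteMeasure μ] {ι : Type*}
    (U : Ultrafilter ι) {v : ι → X → ℝ} (hv : ∀ i, IsUnitBounded (v i)) :
    ∃ F : X → ℝ, IsUnitBounded F ∧ ∀ φ : X → ℝ, MemLp φ 2 μ →
      Tendsto (fun i => ∫ x, v i x * φ x ∂μ) U (𝓝 (∫ x, F x * φ x ∂μ)) := by
  obtain ⟨f, hfm, hf, hlim⟩ := exists_memLp_tendsto_integral_mul (μ := μ) U hv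
  have hf1 : ∀ᵐ x ∂μ, ‖f x‖ ≤ 1 :=
    ae_norm_le_one_of_norm_setIntegral_le (hf.integrable one_le_two) fun s hs => by
      have h := (hlim _ ((IsUnitBounded.indicator_one hs).memLp 2 μ)).norm
      simp only [integral_mul_indicator_one hs] at h
      refine le_of_tendsto h (.of_forall fun i => ?_)
      simpa using norm_setIntegral_le_of_norm_le_const (measure_lt_top μ s)
        fun x _ => (hv i).norm_le_one x
  refine ⟨fun x => max (-1) (min 1 (f x)), ⟨by fun_prop, fun x => ?_⟩, fun φ hφ => ?_⟩
  · exact abs_le.2 ⟨le_max_left _ _, max_le (by norm_num) (min_le_left _ _)⟩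
  · convert hlim φ hφ using 2
    refine integral_congr_ae ?_
    filter_upwards [hf1] with x hx
    rw [min_eq_right (abs_le.1 hx).2, max_eq_right (abs_le.1 hx).1]

end WeakCompactness

section WeakLimit

variable {X Z : Type*} [MeasurableSpace X] [MeasurableSpace Z]

/-- `F` is a weak limit in `L²(μ)` of the functions `h ∘ T^n` along the filter `U` on times. -/
structure IsWeakLimit (U : Filter ℕ) (T : X → X) (μ : Measure X) (h F : X → ℝ) : Prop where
  isUnitBounded_source : IsUnitBounded h
  isUnitBounded_limit : IsUnitBounded F
  tendsto : ∀ φ : X → ℝ, MemLp φ 2 μ →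
    Tendsto (fun n => ∫ x, h (T^[n] x) * φ x ∂μ) U (𝓝 (∫ x, F x * φ x ∂μ))

theorem exists_isWeakLimit (U : Ultrafilter ℕ) {T : X → X} (hT : Measurable T) (μ : Measure X)
    [IsFiniteMeasure μ] {h : X → ℝ} (hh : IsUnitBounded h) : ∃ F, IsWeakLimit U T μ h F := by
  obtain ⟨F, hF, hlim⟩ := exists_isUnitBounded_tendsto_integral_mul (μ := μ) U
    fun n => hh.comp (hT.iterate n)
  exact ⟨F, hh, hF, hlim⟩

theorem exists_memLp_forall_integral_comp_mul_eq {μ : Measure X} {ρ : Measure Z} {π : Z → X}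
    (hπ : MeasurePreserving π ρ μ) {Ψ : Z → ℝ} (hΨ : MemLp Ψ 2 ρ) :
    ∃ u : X → ℝ, MemLp u 2 μ ∧
      ∀ f : X → ℝ, MemLp f 2 μ → ∫ z, f (π z) * Ψ z ∂ρ = ∫ x, f x * u x ∂μ := by
  let L : Lp ℝ 2 μ →L[ℝ] Lp ℝ 2 ρ := (Lp.compMeasurePreservingₗᵢ ℝ π hπ).toContinuousLinearMap
  let u : Lp ℝ 2 μ := L.adjoint (hΨ.toLp Ψ)
  refine ⟨u, Lp.memLp u, fun f hf => ?_⟩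
  calc ∫ z, f (π z) * Ψ z ∂ρ = ⟪L (hf.toLp f), hΨ.toLp Ψ⟫ :=
        (inner_toLp_toLp (hf.comp_measurePreserving hπ) hΨ).symm
    _ = ⟪hf.toLp f, u⟫ := (L.adjoint_inner_right _ _).symm
    _ = ∫ x, f x * u x ∂μ := by
        rw [← inner_toLp_toLp hf (Lp.memLp u), Lp.toLp_coeFn]

theorem IsWeakLimit.comp {U : Filter ℕ} {T : X → X} {R : Z → Z} {μ : Measure X} {ρ : Measure Z}
    [IsFiniteMeasure μ] {h F : X → ℝ} (hF : IsWeakLimit U T μ h F) (hT : Measurable T)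
    {π : Z → X} (hπ : MeasurePreserving π ρ μ) (hsemi : Function.Semiconj π R T) :
    IsWeakLimit U R ρ (fun z => h (π z)) (fun z => F (π z)) where
  isUnitBounded_source := hF.isUnitBounded_source.comp hπ.measurable
  isUnitBounded_limit := hF.isUnitBounded_limit.comp hπ.measurable
  tendsto Ψ hΨ := by
    obtain ⟨u, hu, hadj⟩ := exists_memLp_forall_integral_comp_mul_eq hπ hΨ
    have hit : ∀ n z, π (R^[n] z) = T^[n] (π z) := fun n => hsemi.iterate_right n
    simp only [hit]
    rw [hadj F (hF.isUnitBounded_limit.memLp 2 μ)]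
    refine (hF.tendsto u hu).congr fun n => ?_
    exact (hadj _ ((hF.isUnitBounded_source.comp (hT.iterate n)).memLp 2 μ)).symm

/-- All weak limits along `U` of orbits `h ∘ T^n` of unit-bounded functions. -/
def weakLimits (U : Filter ℕ) (T : X → X) (μ : Measure X) : Set (X → ℝ) :=
  {F | ∃ h, IsWeakLimit U T μ h F}

/-- The σ-algebra generated by the weak limits along `U`. It is the factor of the theorem. -/
abbrev weakLimitSpace (U : Filter ℕ) (T : X → X) (μ : Measure X) : MeasurableSpace X :=
  ⨆ F ∈ weakLimits U T μ, MeasurableSpace.comap F inferInstance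

theorem isUnitBounded_of_mem_weakLimits {U : Filter ℕ} {T : X → X} {μ : Measure X} {F : X → ℝ}
    (hF : F ∈ weakLimits U T μ) : IsUnitBounded F :=
  hF.choose_spec.isUnitBounded_limit

theorem weakLimitSpace_le (U : Filter ℕ) (T : X → X) (μ : Measure X) :
    weakLimitSpace U T μ ≤ ‹MeasurableSpace X› :=
  iSup₂_le fun _ hF => (isUnitBounded_of_mem_weakLimits hF).measurable.comap_le

theorem measurable_of_mem_weakLimits {U : Filter ℕ} {T : X → X} {μ : Measure X} {F : X → ℝ}
    (hF : F ∈ weakLimits U T μ) : Measurable[weakLimitSpace U T μ] F :=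
  measurable_iff_comap_le.2 (le_iSup₂_of_le F hF le_rfl)

theorem comp_mem_weakLimits {U : Filter ℕ} {T : X → X} {R : Z → Z} {μ : Measure X} {ρ : Measure Z}
    [IsFiniteMeasure μ] (hT : Measurable T) {π : Z → X} (hπ : MeasurePreserving π ρ μ)
    (hsemi : Function.Semiconj π R T) {F : X → ℝ} (hF : F ∈ weakLimits U T μ) :
    (fun z => F (π z)) ∈ weakLimits U R ρ :=
  let ⟨h, hF⟩ := hF
  ⟨fun z => h (π z), hF.comp hT hπ hsemi⟩

theorem measurable_weakLimitSpace {U : Filter ℕ} {T : X → X} {R : Z → Z} {μ : Measure X}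
    {ρ : Measure Z} [IsFiniteMeasure μ] (hT : Measurable T) {π : Z → X}
    (hπ : MeasurePreserving π ρ μ) (hsemi : Function.Semiconj π R T) :
    Measurable[weakLimitSpace U R ρ, weakLimitSpace U T μ] π := by
  rw [measurable_iff_comap_le, MeasurableSpace.comap_iSup]
  refine iSup_le fun F => ?_
  rw [MeasurableSpace.comap_iSup]
  refine iSup_le fun hF => ?_
  rw [MeasurableSpace.comap_comp]
  exact le_iSup₂_of_le (fun z => F (π z)) (comp_mem_weakLimits hT hπ hsemi hF) le_rfl

end WeakLimit

section VanDerCorput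

theorem exists_finset_le_dist_of_infinite {E : Set ℕ} (hE : E.Infinite) (M K : ℕ) :
    ∃ s : Finset ℕ, s.card = K ∧ ↑s ⊆ E ∧ (s : Set ℕ).Pairwise fun m n => M ≤ m.dist n := by
  induction K with
  | zero => exact ⟨∅, by simp⟩
  | succ K ih =>
    obtain ⟨s, hcard, hsE, hs⟩ := ih
    obtain ⟨n, hnE, hn⟩ := hE.exists_gt (s.sup id + M)
    have hgap : ∀ m ∈ s, m + M < n := fun m hm => by
      have : m ≤ s.sup id := Finset.le_sup (f := id) hm
      omega
    refine ⟨insert n s, ?_, ?_, ?_⟩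
    · rw [Finset.card_insert_of_notMem fun h => by have := hgap n h; omega, hcard]
    · simpa [Set.insert_subset_iff] using ⟨hnE, hsE⟩
    · rw [Finset.coe_insert, Set.pairwise_insert]
      refine ⟨hs, fun m hm _ => ?_⟩
      have := hgap m hm
      simp only [Nat.dist]
      omega

theorem sum_sum_dist_le {D : ℕ → ℝ} {ε : ℝ} (hε : 0 ≤ ε) {s : Finset ℕ}
    (hs : (s : Set ℕ).Pairwise fun m n => D (m.dist n) ≤ ε) :
    ∑ m ∈ s, ∑ n ∈ s, D (m.dist n) ≤ s.card * (D 0 + s.card * ε) := by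
  rw [← nsmul_eq_mul]
  refine Finset.sum_le_card_nsmul _ _ _ fun m hm => ?_
  rw [← Finset.add_sum_erase s _ hm, Nat.dist_self]
  gcongr
  calc ∑ n ∈ s.erase m, D (m.dist n) ≤ (s.erase m).card * ε := by
        rw [← nsmul_eq_mul]
        refine Finset.sum_le_card_nsmul _ _ _ fun n hn => ?_
        exact hs hm (Finset.mem_of_mem_erase hn) (Finset.ne_of_mem_erase hn).symm
    _ ≤ s.card * ε := by gcongr; exact Finset.erase_subset m s

theorem eq_zero_of_sq_sum_le_sum_sum_dist {l : Filter ℕ} [l.NeBot] (hl : l ≤ atTop)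
    {a D : ℕ → ℝ} {c : ℝ} (ha : Tendsto a l (𝓝 c)) (hD : Tendsto D atTop (𝓝 0))
    (hsum : ∀ s : Finset ℕ, (∑ n ∈ s, a n) ^ 2 ≤ ∑ m ∈ s, ∑ n ∈ s, D (m.dist n)) : c = 0 := by
  by_contra hc
  have hc2 : 0 < c ^ 2 := by positivity
  have hE : {n | c ^ 2 / 2 < c * a n}.Infinite := by
    refine Nat.frequently_atTop_iff_infinite.1 (Frequently.filter_mono ?_ hl)
    exact ((ha.const_mul c).eventually_const_lt (by linarith)).frequently
  obtain ⟨M, hM⟩ := eventually_atTop.1 (hD.eventually_le_const (show 0 < c ^ 2 / 8 by positivity))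
  obtain ⟨K, hK⟩ := exists_nat_gt (8 * |D 0| / c ^ 2)
  obtain ⟨s, hcard, hsE, hgap⟩ := exists_finset_le_dist_of_infinite hE M K
  have hK0 : (0 : ℝ) < K := hK.trans_le' (by positivity)
  have hlower : K * (c ^ 2 / 2) ≤ c * ∑ n ∈ s, a n := by
    rw [Finset.mul_sum, ← hcard, ← nsmul_eq_mul]
    exact Finset.card_nsmul_le_sum _ _ _ fun n hn => (hsE hn).le
  have hupper : (∑ n ∈ s, a n) ^ 2 ≤ K * (D 0 + K * (c ^ 2 / 8)) :=
    hcard ▸ (hsum s).trans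
      (sum_sum_dist_le (by positivity) (hgap.imp fun _ _ h => hM _ h))
  have hchain : c ^ 2 * K * (K * (c ^ 2 / 4)) ≤ c ^ 2 * K * (D 0 + K * (c ^ 2 / 8)) := calc
    c ^ 2 * K * (K * (c ^ 2 / 4)) = (K * (c ^ 2 / 2)) ^ 2 := by ring
    _ ≤ (c * ∑ n ∈ s, a n) ^ 2 := by gcongr
    _ = c ^ 2 * (∑ n ∈ s, a n) ^ 2 := mul_pow _ _ _
    _ ≤ c ^ 2 * (K * (D 0 + K * (c ^ 2 / 8))) := by gcongr
    _ = c ^ 2 * K * (D 0 + K * (c ^ 2 / 8)) := by ring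
  rw [div_lt_iff₀ hc2] at hK
  linarith [le_of_mul_le_mul_left hchain (by positivity), le_abs_self (D 0)]

end VanDerCorput

section SquareIntegrals

variable {Z : Type*} [MeasurableSpace Z] {ρ : Measure Z}

theorem integral_comp_of_measurePreserving {X E : Type*} [MeasurableSpace X]
    [NormedAddCommGroup E] [NormedSpace ℝ E] {μ : Measure X} {π : Z → X}
    (hπ : MeasurePreserving π ρ μ) {f : X → E} (hf : AEStronglyMeasurable f μ) :
    ∫ z, f (π z) ∂ρ = ∫ x, f x ∂μ := by
  rw [← hπ.map_eq] at hf ⊢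
  exact (integral_map hπ.aemeasurable hf).symm

theorem integral_sq_sum {ι : Type*} {s : Finset ι} {f : ι → Z → ℝ}
    (hf : ∀ i ∈ s, MemLp (f i) 2 ρ) :
    ∫ z, (∑ i ∈ s, f i z) ^ 2 ∂ρ = ∑ i ∈ s, ∑ j ∈ s, ∫ z, f i z * f j z ∂ρ := by
  have hint : ∀ i ∈ s, ∀ j ∈ s, Integrable (fun z => f i z * f j z) ρ :=
    fun i hi j hj => (hf i hi).integrable_mul (hf j hj)
  simp only [sq, Finset.sum_mul_sum]
  rw [integral_finsetSum _ fun i hi => integrable_finsetSum _ (hint i hi)]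
  exact Finset.sum_congr rfl fun i hi => integral_finsetSum _ (hint i hi)

theorem integral_sq_le_of_tendsto {ι : Type*} {l : Filter ι} [l.NeBot] {x : ι → Z → ℝ} {y : Z → ℝ}
    (hx : ∀ i, MemLp (x i) 2 ρ) (hy : MemLp y 2 ρ) {b : ι → ℝ} {β : ℝ}
    (hxy : Tendsto (fun i => ∫ z, x i z * y z ∂ρ) l (𝓝 (∫ z, y z ^ 2 ∂ρ)))
    (hxb : ∀ i, ∫ z, x i z ^ 2 ∂ρ ≤ b i) (hb : Tendsto b l (𝓝 β)) :
    ∫ z, y z ^ 2 ∂ρ ≤ β := by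
  have hlim : Tendsto (fun i => b i - 2 * ∫ z, x i z * y z ∂ρ + ∫ z, y z ^ 2 ∂ρ) l
      (𝓝 (β - 2 * ∫ z, y z ^ 2 ∂ρ + ∫ z, y z ^ 2 ∂ρ)) :=
    (hb.sub (hxy.const_mul 2)).add_const _
  have hnonneg : 0 ≤ β - 2 * ∫ z, y z ^ 2 ∂ρ + ∫ z, y z ^ 2 ∂ρ := by
    refine ge_of_tendsto hlim (.of_forall fun i => ?_)
    calc 0 ≤ ∫ z, (x i z - y z) ^ 2 ∂ρ := integral_nonneg fun z => sq_nonneg _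
      _ = ∫ z, x i z ^ 2 - 2 * (x i z * y z) + y z ^ 2 ∂ρ := by
        congr with z
        ring
      _ = ∫ z, x i z ^ 2 ∂ρ - 2 * ∫ z, x i z * y z ∂ρ + ∫ z, y z ^ 2 ∂ρ := by
        have hxyi : Integrable (fun z => 2 * (x i z * y z)) ρ :=
          ((hx i).integrable_mul hy).const_mul 2
        have hdiff : Integrable (fun z => x i z ^ 2 - 2 * (x i z * y z)) ρ :=
          (hx i).integrable_sq.sub hxyi
        rw [integral_add hdiff hy.integrable_sq, integral_sub (hx i).integrable_sq hxyi,
          integral_const_mul]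
      _ ≤ _ := by gcongr; exact hxb i
  linarith

theorem IsUnitBounded.sq_integral_mul_le [IsProbabilityMeasure ρ] {f g : Z → ℝ}
    (hf : IsUnitBounded f) (hg : MemLp g 2 ρ) :
    (∫ z, f z * g z ∂ρ) ^ 2 ≤ ∫ z, g z ^ 2 ∂ρ := by
  have hfg : MemLp (fun z => f z * g z) 2 ρ := hf.mul_memLp hg
  have hvar := ProbabilityTheory.variance_nonneg (fun z => f z * g z) ρ
  rw [ProbabilityTheory.variance_eq_sub hfg, sub_nonneg] at hvar
  refine hvar.trans (integral_mono hfg.integrable_sq hg.integrable_sq fun z => ?_)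
  simp only [Pi.pow_apply, mul_pow]
  exact mul_le_of_le_one_left (sq_nonneg _) ((sq_le_one_iff_abs_le_one _).2 (hf.norm_le_one z))

theorem sq_sum_integral_iterate_le [IsProbabilityMeasure ρ] {R : Z → Z}
    (hR : MeasurePreserving R ρ ρ) {h w : Z → ℝ} (hh : IsUnitBounded h) (hw : IsUnitBounded w)
    {s : Finset ℕ} {N : ℕ} (hN : ∀ n ∈ s, n ≤ N) :
    (∑ n ∈ s, ∫ z, h (R^[n] z) * w z ∂ρ) ^ 2 ≤ ∫ z, (∑ n ∈ s, w (R^[N - n] z)) ^ 2 ∂ρ := by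
  -- Shifting the `n`-th term by `N - n` gives all the terms the common factor `h ∘ R^N`.
  have hhN : IsUnitBounded fun z => h (R^[N] z) := hh.comp (hR.measurable.iterate N)
  have hwit : ∀ n, IsUnitBounded fun z => w (R^[n] z) := fun n => hw.comp (hR.measurable.iterate n)
  have hshift : ∀ n ∈ s, ∫ z, h (R^[n] z) * w z ∂ρ = ∫ z, h (R^[N] z) * w (R^[N - n] z) ∂ρ := by
    intro n hn
    have hmeas := ((hh.comp (hR.measurable.iterate n)).mul hw).measurable
    rw [← integral_comp_of_measurePreserving (hR.iterate (N - n)) hmeas.aestronglyMeasurable]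
    simp only [← Function.iterate_add_apply, Nat.add_sub_cancel' (hN n hn)]
  rw [Finset.sum_congr rfl hshift,
    ← integral_finsetSum _ fun n _ => ((hhN.mul (hwit _)).memLp 1 ρ).integrable le_rfl]
  simp only [← Finset.mul_sum]
  exact hhN.sq_integral_mul_le (memLp_finsetSum _ fun n _ => (hwit _).memLp 2 ρ)

end SquareIntegrals

section ProductsOfWeakLimits

variable {Z : Type*} [MeasurableSpace Z] {U : Filter ℕ} {R : Z → Z} {ρ : Measure Z}
  [IsFiniteMeasure ρ]

theorem IsWeakLimit.tendsto_integral_sum_mul {h F : ℕ → Z → ℝ}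
    (hF : ∀ n, IsWeakLimit U R ρ (h n) (F n)) (hR : Measurable R) {p : ℕ → Z → ℝ}
    (hp : ∀ n, IsUnitBounded (p n)) (s : Finset ℕ) {φ : Z → ℝ} (hφ : MemLp φ 2 ρ) :
    Tendsto (fun k => ∫ z, (∑ n ∈ s, h n (R^[k] z) * p n z) * φ z ∂ρ) U
      (𝓝 (∫ z, (∑ n ∈ s, F n z * p n z) * φ z ∂ρ)) := by
  have hpφ : ∀ n, MemLp (fun z => p n z * φ z) 2 ρ := fun n => (hp n).mul_memLp hφ
  have hint : ∀ {f : Z → ℝ}, IsUnitBounded f → ∀ n, Integrable (fun z => f z * (p n z * φ z)) ρ :=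
    fun hf n => (hf.mul_memLp (hpφ n)).integrable one_le_two
  simp only [Finset.sum_mul, mul_assoc]
  rw [integral_finsetSum _ fun n _ => hint (hF n).isUnitBounded_limit n]
  refine (tendsto_finsetSum s fun n _ => (hF n).tendsto _ (hpφ n)).congr fun k => ?_
  exact (integral_finsetSum _ fun n _ =>
    hint ((hF n).isUnitBounded_source.comp (hR.iterate k)) n).symm

theorem IsWeakLimit.integral_sq_sum_prod_le [U.NeBot] {ι : Type*} (t : Finset ι)
    {h F : ι → ℕ → Z → ℝ} {G : ι → ℕ → ℕ → Z → ℝ} (hR : Measurable R)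
    (hF : ∀ i n, IsWeakLimit U R ρ (h i n) (F i n))
    (hG : ∀ i n m, IsWeakLimit U R ρ (fun z => h i n z * h i m z) (G i n m)) (s : Finset ℕ)
    {u : ℕ → Z → ℝ} (hu : ∀ n, IsUnitBounded (u n)) :
    ∫ z, (∑ n ∈ s, (∏ i ∈ t, F i n z) * u n z) ^ 2 ∂ρ ≤
      ∑ n ∈ s, ∑ m ∈ s, ∫ z, (∏ i ∈ t, G i n m z) * (u n z * u m z) ∂ρ := by
  classical
  induction t using Finset.induction_on generalizing u with
  | empty =>
    simp only [Finset.prod_empty, one_mul]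
    exact (integral_sq_sum fun n _ => (hu n).memLp 2 ρ).le
  | insert j t hj ih =>
    -- Weak lower semicontinuity of the norm lets `h j n ∘ R^k` stand in for `F j n`; the induction
    -- hypothesis applies with this factor absorbed into `u`, and `k → U` turns it into `G j n m`.
    simp only [Finset.prod_insert hj, mul_assoc]
    have hp : ∀ n, IsUnitBounded fun z => (∏ i ∈ t, F i n z) * u n z := fun n =>
      (IsUnitBounded.prod fun i _ => (hF i n).isUnitBounded_limit).mul (hu n)
    have hv : ∀ n m, IsUnitBounded fun z => (∏ i ∈ t, G i n m z) * (u n z * u m z) := fun n m =>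
      (IsUnitBounded.prod fun i _ => (hG i n m).isUnitBounded_limit).mul ((hu n).mul (hu m))
    have hhk : ∀ k n, IsUnitBounded fun z => h j n (R^[k] z) := fun k n =>
      (hF j n).isUnitBounded_source.comp (hR.iterate k)
    have hy : MemLp (fun z => ∑ n ∈ s, F j n z * ((∏ i ∈ t, F i n z) * u n z)) 2 ρ :=
      memLp_finsetSum _ fun n _ => ((hF j n).isUnitBounded_limit.mul (hp n)).memLp 2 ρ
    refine integral_sq_le_of_tendsto (l := U)
      (x := fun k z => ∑ n ∈ s, h j n (R^[k] z) * ((∏ i ∈ t, F i n z) * u n z))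
      (fun k => memLp_finsetSum _ fun n _ => ((hhk k n).mul (hp n)).memLp 2 ρ) hy
      ?_ (fun k => ?_)
      (tendsto_finsetSum s fun n _ => tendsto_finsetSum s fun m _ =>
        (hG j n m).tendsto _ ((hv n m).memLp 2 ρ))
    · simpa only [sq] using IsWeakLimit.tendsto_integral_sum_mul (hF j) hR hp s hy
    · convert ih (u := fun n z => h j n (R^[k] z) * u n z) fun n => (hhk k n).mul (hu n) using 4
      · congr with n
        ring
      · congr 1 with z
        ring

end ProductsOfWeakLimits

section Mixing

variable {Y Z : Type*} [MeasurableSpace Y] [MeasurableSpace Z]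

/-- The indicator of `C` minus its mean `ν C`: the functions orthogonal to the constants against
which weak limits are tested. -/
noncomputable def centeredIndicator (ν : Measure Y) (C : Set Y) (y : Y) : ℝ :=
  C.indicator 1 y - ν.real C

theorem isUnitBounded_centeredIndicator (ν : Measure Y) [IsProbabilityMeasure ν] {C : Set Y}
    (hC : MeasurableSet C) : IsUnitBounded (centeredIndicator ν C) where
  measurable := (measurable_one.indicator hC).sub_const _
  norm_le_one y := by
    have h0 : 0 ≤ ν.real C := measureReal_nonneg
    have h1 : ν.real C ≤ 1 := measureReal_le_one
    rw [Real.norm_eq_abs, abs_le]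
    by_cases hy : y ∈ C <;> simp only [centeredIndicator, Set.indicator_of_mem,
      Set.indicator_of_notMem, hy, not_false_eq_true, Pi.one_apply] <;> constructor <;> linarith

theorem integral_centeredIndicator (ν : Measure Y) [IsProbabilityMeasure ν] {C : Set Y}
    (hC : MeasurableSet C) : ∫ y, centeredIndicator ν C y ∂ν = 0 := by
  simp only [centeredIndicator]
  rw [integral_sub ((integrable_const 1).indicator hC) (integrable_const _),
    integral_indicator_one hC]
  simp

theorem centeredIndicator_mul (ν : Measure Y) (C D : Set Y) (y : Y) :
    centeredIndicator ν C y * centeredIndicator ν D y =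
      centeredIndicator ν (C ∩ D) y - ν.real C * centeredIndicator ν D y
        - ν.real D * centeredIndicator ν C y + (ν.real (C ∩ D) - ν.real C * ν.real D) := by
  simp only [centeredIndicator, Set.inter_indicator_one, Pi.mul_apply]
  ring

theorem centeredIndicator_preimage {ν : Measure Y} {S : Y → Y} (hS : MeasurePreserving S ν ν)
    {C : Set Y} (hC : MeasurableSet C) (y : Y) :
    centeredIndicator ν (S ⁻¹' C) y = centeredIndicator ν C (S y) := by
  simp only [centeredIndicator, hS.measureReal_preimage hC.nullMeasurableSet]
  rfl

theorem integral_mul_centeredIndicator_mul {ν : Measure Y} [IsProbabilityMeasure ν]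
    {ρ : Measure Z} [IsFiniteMeasure ρ] {τ : Z → Y} (hτ : Measurable τ) {Φ : Z → ℝ}
    (hΦ : IsUnitBounded Φ)
    (horth : ∀ C, MeasurableSet C → ∫ z, Φ z * centeredIndicator ν C (τ z) ∂ρ = 0) {C D : Set Y}
    (hC : MeasurableSet C) (hD : MeasurableSet D) :
    ∫ z, Φ z * (centeredIndicator ν C (τ z) * centeredIndicator ν D (τ z)) ∂ρ =
      (ν.real (C ∩ D) - ν.real C * ν.real D) * ∫ z, Φ z ∂ρ := by
  have hint : ∀ C, MeasurableSet C → Integrable (fun z => Φ z * centeredIndicator ν C (τ z)) ρ :=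
    fun C hC => ((hΦ.mul ((isUnitBounded_centeredIndicator ν hC).comp hτ)).memLp 1 ρ).integrable
      le_rfl
  have hexp : ∀ z, Φ z * (centeredIndicator ν C (τ z) * centeredIndicator ν D (τ z)) =
      Φ z * centeredIndicator ν (C ∩ D) (τ z) - ν.real C * (Φ z * centeredIndicator ν D (τ z))
        - ν.real D * (Φ z * centeredIndicator ν C (τ z))
        + (ν.real (C ∩ D) - ν.real C * ν.real D) * Φ z := fun z => by
    rw [centeredIndicator_mul]
    ring
  simp only [hexp]
  rw [integral_add, integral_sub, integral_sub]
  · simp only [integral_const_mul, horth _ (hC.inter hD), horth _ hC, horth _ hD]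
    ring
  · exact hint _ (hC.inter hD)
  · exact (hint _ hD).const_mul _
  · exact (hint _ (hC.inter hD)).sub ((hint _ hD).const_mul _)
  · exact (hint _ hC).const_mul _
  · exact ((hint _ (hC.inter hD)).sub ((hint _ hD).const_mul _)).sub ((hint _ hC).const_mul _)
  · exact ((hΦ.memLp 1 ρ).integrable le_rfl).const_mul _

theorem measureReal_preimage_iterate_inter {ν : Measure Y} {S : Y → Y}
    (hS : MeasurePreserving S ν ν) {C : Set Y} (hC : MeasurableSet C) (a b : ℕ) :
    ν.real (S^[a] ⁻¹' C ∩ S^[b] ⁻¹' C) = ν.real (C ∩ S^[a.dist b] ⁻¹' C) := by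
  wlog hab : a ≤ b generalizing a b
  · rw [Set.inter_comm, this b a (by omega), Nat.dist_comm]
  obtain ⟨d, rfl⟩ := Nat.exists_eq_add_of_le hab
  have hset : S^[a] ⁻¹' C ∩ S^[a + d] ⁻¹' C = S^[a] ⁻¹' (C ∩ S^[d] ⁻¹' C) := by
    rw [add_comm a d, Function.iterate_add]
    rfl
  rw [hset, (hS.iterate a).measureReal_preimage
    (hC.inter ((hS.measurable.iterate d) hC)).nullMeasurableSet, Nat.dist_eq_sub_of_le hab,
    Nat.add_sub_cancel_left]

theorem MeasureMixing.tendsto_abs_measureReal_sub {ν : Measure Y} [IsFiniteMeasure ν]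
    {S : Y → Y} (hS : MeasureMixing S ν) {C : Set Y} (hC : MeasurableSet C) :
    Tendsto (fun n => |ν.real (C ∩ S^[n] ⁻¹' C) - ν.real C * ν.real C|) atTop (𝓝 0) := by
  have hlim := (ENNReal.tendsto_toReal (ENNReal.mul_ne_top (measure_ne_top ν C)
    (measure_ne_top ν C))).comp (hS C C hC hC)
  rw [ENNReal.toReal_mul] at hlim
  simpa [Measure.real] using (hlim.sub_const (ν.real C * ν.real C)).abs

variable {U : Ultrafilter ℕ} {R : Z → Z} {ρ : Measure Z} [IsProbabilityMeasure ρ] {S : Y → Y}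
  {ν : Measure Y} [IsProbabilityMeasure ν] {τ : Z → Y} {ι : Type*}

theorem integral_mul_centeredIndicator_iterate_mul_le (hS : MeasurePreserving S ν ν)
    (hτ : Measurable τ) {Φ : Z → ℝ} (hΦ : IsUnitBounded Φ)
    (horth : ∀ C, MeasurableSet C → ∫ z, Φ z * centeredIndicator ν C (τ z) ∂ρ = 0) {C : Set Y}
    (hC : MeasurableSet C) (a b : ℕ) :
    ∫ z, Φ z * (centeredIndicator ν C (S^[a] (τ z)) * centeredIndicator ν C (S^[b] (τ z))) ∂ρ ≤
      |ν.real (C ∩ S^[a.dist b] ⁻¹' C) - ν.real C * ν.real C| := by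
  have hCit : ∀ n, MeasurableSet (S^[n] ⁻¹' C) := fun n => hS.measurable.iterate n hC
  simp only [← centeredIndicator_preimage (hS.iterate _) hC]
  rw [integral_mul_centeredIndicator_mul hτ hΦ horth (hCit a) (hCit b),
    measureReal_preimage_iterate_inter hS hC, (hS.iterate a).measureReal_preimage
      hC.nullMeasurableSet, (hS.iterate b).measureReal_preimage hC.nullMeasurableSet]
  refine (le_abs_self _).trans ?_
  rw [abs_mul]
  exact mul_le_of_le_one_right (abs_nonneg _) (hΦ.abs_integral_le_one ρ)

theorem sq_sum_integral_iterate_mul_prod_le (hR : MeasurePreserving R ρ ρ)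
    (hS : MeasurePreserving S ν ν) (hτ : Measurable τ) (hsemi : Function.Semiconj τ R S)
    {t : Finset ι}
    (horth : ∀ G : ι → Z → ℝ, (∀ i, G i ∈ weakLimits U R ρ) → ∀ C, MeasurableSet C →
      ∫ z, (∏ i ∈ t, G i z) * centeredIndicator ν C (τ z) ∂ρ = 0)
    {g : Z → ℝ} (hg : IsUnitBounded g) {F : ι → Z → ℝ} (hF : ∀ i, F i ∈ weakLimits U R ρ)
    {C : Set Y} (hC : MeasurableSet C) (s : Finset ℕ) :
    (∑ n ∈ s, ∫ z, g (R^[n] z) * ((∏ i ∈ t, F i z) * centeredIndicator ν C (τ z)) ∂ρ) ^ 2 ≤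
      ∑ n ∈ s, ∑ m ∈ s, |ν.real (C ∩ S^[n.dist m] ⁻¹' C) - ν.real C * ν.real C| := by
  choose h hF using hF
  set N := s.sup id
  have hN : ∀ n ∈ s, n ≤ N := fun n hn => Finset.le_sup (f := id) hn
  have hFit (i n) : IsWeakLimit U R ρ (fun z => h i (R^[N - n] z)) fun z => F i (R^[N - n] z) :=
    (hF i).comp hR.measurable (hR.iterate _) (Function.Commute.iterate_self R _)
  choose G hG using fun i n m => exists_isWeakLimit U hR.measurable ρ
    ((hFit i n).isUnitBounded_source.mul (hFit i m).isUnitBounded_source)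
  have hq : IsUnitBounded fun z => centeredIndicator ν C (τ z) :=
    (isUnitBounded_centeredIndicator ν hC).comp hτ
  have hw : IsUnitBounded fun z => (∏ i ∈ t, F i z) * centeredIndicator ν C (τ z) :=
    (IsUnitBounded.prod fun i _ => (hF i).isUnitBounded_limit).mul hq
  refine (sq_sum_integral_iterate_le hR hg hw hN).trans ?_
  refine (IsWeakLimit.integral_sq_sum_prod_le t hR.measurable hFit hG s
    fun n => hq.comp (hR.measurable.iterate (N - n))).trans ?_
  refine Finset.sum_le_sum fun n hn => Finset.sum_le_sum fun m hm => ?_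
  have hdist : (N - n).dist (N - m) = n.dist m := by
    have := hN n hn
    have := hN m hm
    simp only [Nat.dist]
    omega
  have hit : ∀ k z, τ (R^[k] z) = S^[k] (τ z) := fun k => hsemi.iterate_right k
  simp only [hit]
  rw [← hdist]
  exact integral_mul_centeredIndicator_iterate_mul_le hS hτ
    (IsUnitBounded.prod fun i _ => (hG i n m).isUnitBounded_limit)
    (horth _ fun i => ⟨_, hG i n m⟩) hC _ _

theorem integral_prod_weakLimits_mul_centeredIndicator (hU : (U : Filter ℕ) ≤ atTop)
    (hR : MeasurePreserving R ρ ρ) (hS : MeasurePreserving S ν ν) (hmix : MeasureMixing S ν)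
    (hτ : MeasurePreserving τ ρ ν) (hsemi : Function.Semiconj τ R S) (t : Finset ι)
    {F : ι → Z → ℝ} (hF : ∀ i, F i ∈ weakLimits U R ρ) {C : Set Y} (hC : MeasurableSet C) :
    ∫ z, (∏ i ∈ t, F i z) * centeredIndicator ν C (τ z) ∂ρ = 0 := by
  classical
  induction t using Finset.induction_on generalizing F C with
  | empty =>
    simp only [Finset.prod_empty, one_mul]
    rw [integral_comp_of_measurePreserving hτ
      (isUnitBounded_centeredIndicator ν hC).measurable.aestronglyMeasurable,
      integral_centeredIndicator ν hC]
  | insert j t hj ih =>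
    simp only [Finset.prod_insert hj, mul_assoc]
    obtain ⟨h, hFj⟩ := hF j
    have hw : IsUnitBounded fun z => (∏ i ∈ t, F i z) * centeredIndicator ν C (τ z) :=
      (IsUnitBounded.prod fun i _ => isUnitBounded_of_mem_weakLimits (hF i)).mul
        ((isUnitBounded_centeredIndicator ν hC).comp hτ.measurable)
    exact eq_zero_of_sq_sum_le_sum_sum_dist hU (hFj.tendsto _ (hw.memLp 2 ρ))
      (hmix.tendsto_abs_measureReal_sub hC) <|
        sq_sum_integral_iterate_mul_prod_le hR hS hτ.measurable hsemi
          (fun _ hG _ hD => ih hG hD) hFj.isUnitBounded_source hF hC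

end Mixing

section MultiplicativeSystems

open scoped BoundedContinuousFunction

theorem ext_of_forall_mem_closure_integral_eq {E : Type*} [TopologicalSpace E] [PolishSpace E]
    [MeasurableSpace E] [BorelSpace E] {P P' : Measure E} [IsFiniteMeasure P] [IsFiniteMeasure P']
    {M : Set (E →ᵇ ℝ)} (hM : ∀ x y, x ≠ y → ∃ g ∈ M, g x ≠ g y)
    (hint : ∀ g ∈ Submonoid.closure M, ∫ x, g x ∂P = ∫ x, g x ∂P') : P = P' := by
  let A : StarSubalgebra ℝ (E →ᵇ ℝ) :=
    { Algebra.adjoin ℝ M with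
      star_mem' := fun {g} hg => by rwa [show star g = g from by ext; simp] }
  refine ext_of_forall_mem_subalgebra_integral_eq_of_polish (𝕜 := ℝ) (A := A) ?_ fun g hg => ?_
  · intro x y hxy
    obtain ⟨g, hg, hgxy⟩ := hM x y hxy
    exact ⟨g, ⟨_, ⟨g, Algebra.subset_adjoin hg, rfl⟩, rfl⟩, hgxy⟩
  · replace hg : g ∈ Submodule.span ℝ (Submonoid.closure M : Set (E →ᵇ ℝ)) := by
      rw [← Algebra.adjoin_eq_span]
      exact hg
    induction hg using Submodule.span_induction with
    | mem g hg => exact hint g hg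
    | zero => simp
    | add f g _ _ hf hg =>
      simp only [BoundedContinuousFunction.coe_add, Pi.add_apply]
      rw [integral_add (f.integrable P) (g.integrable P),
        integral_add (f.integrable P') (g.integrable P'), hf, hg]
    | smul c g _ hg =>
      simp only [BoundedContinuousFunction.coe_smul, integral_smul, hg]

variable {X : Type*} [MeasurableSpace X] {μ ν : Measure X} [IsFiniteMeasure μ] [IsFiniteMeasure ν]

theorem map_eq_map_of_forall_integral_eq {ι : Type*} [Finite ι]
    {φ : X → ι → Set.Icc (-1 : ℝ) 1} (hφ : Measurable φ)
    (hint : ∀ f ∈ Submonoid.closure (Set.range fun i x => (φ x i : ℝ)),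
      ∫ x, f x ∂μ = ∫ x, f x ∂ν) :
    μ.map φ = ν.map φ := by
  let coord : ι → (ι → Set.Icc (-1 : ℝ) 1) →ᵇ ℝ := fun i =>
    .mkOfCompact ⟨fun y => (y i : ℝ), by fun_prop⟩
  refine ext_of_forall_mem_closure_integral_eq (M := Set.range coord) ?_ fun g hg => ?_
  · intro y y' hyy'
    obtain ⟨i, hi⟩ := Function.ne_iff.1 hyy'
    exact ⟨coord i, ⟨i, rfl⟩, fun h => hi (Subtype.ext h)⟩
  · rw [integral_map hφ.aemeasurable g.continuous.aestronglyMeasurable,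
      integral_map hφ.aemeasurable g.continuous.aestronglyMeasurable]
    refine hint (fun x => g (φ x)) ?_
    induction hg using Submonoid.closure_induction with
    | mem g hg =>
      obtain ⟨i, rfl⟩ := hg
      exact Submonoid.subset_closure ⟨i, rfl⟩
    | one => exact one_mem _
    | mul f g _ _ hf hg => exact mul_mem hf hg

theorem measure_eq_of_forall_integral_eq {ι : Type*} {F : ι → X → ℝ}
    (hF : ∀ i, IsUnitBounded (F i))
    (hint : ∀ f ∈ Submonoid.closure (Set.range F), ∫ x, f x ∂μ = ∫ x, f x ∂ν) {A : Set X}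
    (hA : MeasurableSet[⨆ i, MeasurableSpace.comap (F i) inferInstance] A) : μ A = ν A := by
  let m : ι → MeasurableSpace X := fun i => MeasurableSpace.comap (F i) inferInstance
  have hgen : ⨆ i, m i =
      .generateFrom (piiUnionInter (fun i => {s | MeasurableSet[m i] s}) Set.univ) := by
    simpa using (generateFrom_piiUnionInter_measurableSet m Set.univ).symm
  have hpi := isPiSystem_piiUnionInter (fun i => {s | MeasurableSet[m i] s})
    (fun i => @MeasurableSpace.isPiSystem_measurableSet X (m i)) Set.univ
  have huniv : μ Set.univ = ν Set.univ := by
    have h1 := hint 1 (one_mem _)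
    simp only [Pi.one_apply, integral_const, smul_eq_mul, mul_one] at h1
    exact (measureReal_eq_measureReal_iff).1 h1
  refine ext_on_measurableSpace_of_generate_finite _ _ ?_
    (iSup_le fun i => (hF i).measurable.comap_le) hgen hpi huniv hA
  rintro _ ⟨t, -, B, hB, rfl⟩
  let φ : X → t → Set.Icc (-1 : ℝ) 1 := fun x i => ⟨F i x, abs_le.1 ((hF i).norm_le_one x)⟩
  have hφ : Measurable φ :=
    measurable_pi_lambda _ fun i => (hF i).measurable.subtype_mk
  have hrange : (Set.range fun (i : t) x => (φ x i : ℝ)) ⊆ Set.range F := by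
    rintro _ ⟨i, rfl⟩
    exact ⟨i, rfl⟩
  have hmap : μ.map φ = ν.map φ := map_eq_map_of_forall_integral_eq hφ fun f hf =>
    hint f (Submonoid.closure_mono hrange hf)
  choose! D hD hDB using hB
  have hbox : ⋂ i ∈ t, B i = φ ⁻¹' ⋂ i : t, {y | (y i : ℝ) ∈ D i} := by
    ext x
    simp only [Set.mem_iInter, Set.mem_preimage, Set.mem_ofPred_eq, Subtype.forall]
    exact forall₂_congr fun i hi => by rw [← hDB i hi]; rfl
  have hmeas : MeasurableSet (⋂ i : t, {y : t → Set.Icc (-1 : ℝ) 1 | (y i : ℝ) ∈ D i}) :=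
    .iInter fun i => (measurable_subtype_coe.comp (measurable_pi_apply i)) (hD i i.2)
  rw [hbox, ← Measure.map_apply hφ hmeas, hmap, Measure.map_apply hφ hmeas]

end MultiplicativeSystems

section Independence

open ProbabilityTheory

variable {Y Z : Type*} [MeasurableSpace Y] [MeasurableSpace Z] {U : Ultrafilter ℕ} {R : Z → Z}
  {ρ : Measure Z} [IsProbabilityMeasure ρ] {S : Y → Y} {ν : Measure Y} [IsProbabilityMeasure ν]
  {τ : Z → Y}

theorem isUnitBounded_of_mem_closure {M : Set (Z → ℝ)} (hM : ∀ f ∈ M, IsUnitBounded f)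
    {f : Z → ℝ} (hf : f ∈ Submonoid.closure M) : IsUnitBounded f := by
  induction hf using Submonoid.closure_induction with
  | mem f hf => exact hM f hf
  | one => exact ⟨measurable_one, by simp⟩
  | mul f g _ _ hf hg => exact hf.mul hg

theorem integral_mul_centeredIndicator_of_mem_closure (hU : (U : Filter ℕ) ≤ atTop)
    (hR : MeasurePreserving R ρ ρ) (hS : MeasurePreserving S ν ν) (hmix : MeasureMixing S ν)
    (hτ : MeasurePreserving τ ρ ν) (hsemi : Function.Semiconj τ R S) {f : Z → ℝ}
    (hf : f ∈ Submonoid.closure (weakLimits U R ρ)) {C : Set Y} (hC : MeasurableSet C) :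
    ∫ z, f z * centeredIndicator ν C (τ z) ∂ρ = 0 := by
  obtain ⟨l, hl, rfl⟩ := Submonoid.exists_list_of_mem_closure hf
  rw [← integral_prod_weakLimits_mul_centeredIndicator hU hR hS hmix hτ hsemi Finset.univ
    (F := l.get) (fun i => hl _ (l.get_mem i)) hC]
  simp only [← Finset.prod_apply, ← List.prod_ofFn, List.ofFn_get]

theorem setIntegral_of_mem_closure_weakLimits (hU : (U : Filter ℕ) ≤ atTop)
    (hR : MeasurePreserving R ρ ρ) (hS : MeasurePreserving S ν ν) (hmix : MeasureMixing S ν)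
    (hτ : MeasurePreserving τ ρ ν) (hsemi : Function.Semiconj τ R S) {f : Z → ℝ}
    (hf : f ∈ Submonoid.closure (weakLimits U R ρ)) {C : Set Y} (hC : MeasurableSet C) :
    ∫ z in τ ⁻¹' C, f z ∂ρ = ν.real C * ∫ z, f z ∂ρ := by
  have hfb := isUnitBounded_of_mem_closure (fun _ => isUnitBounded_of_mem_weakLimits) hf
  have hτC := hτ.measurable hC
  have hint : Integrable (fun z => f z * (τ ⁻¹' C).indicator 1 z) ρ :=
    ((hfb.mul (.indicator_one hτC)).memLp 1 ρ).integrable le_rfl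
  have h0 := integral_mul_centeredIndicator_of_mem_closure hU hR hS hmix hτ hsemi hf hC
  rw [← integral_mul_indicator_one hτC, ← sub_eq_zero, ← h0, ← integral_const_mul,
    ← integral_sub hint (((hfb.memLp 1 ρ).integrable le_rfl).const_mul _)]
  refine integral_congr_ae (.of_forall fun z => ?_)
  simp only [centeredIndicator, mul_sub, mul_comm (f z) (ν.real C)]
  rfl

theorem indep_weakLimitSpace_comap (hU : (U : Filter ℕ) ≤ atTop)
    (hR : MeasurePreserving R ρ ρ) (hS : MeasurePreserving S ν ν) (hmix : MeasureMixing S ν)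
    (hτ : MeasurePreserving τ ρ ν) (hsemi : Function.Semiconj τ R S) :
    Indep (weakLimitSpace U R ρ) (MeasurableSpace.comap τ inferInstance) ρ := by
  rw [Indep_iff]
  rintro A _ hA ⟨C, hC, rfl⟩
  rw [weakLimitSpace, iSup_subtype'] at hA
  have : IsFiniteMeasure (ν C • ρ) := Measure.smul_finite ρ (measure_ne_top ν C)
  have h : ρ.restrict (τ ⁻¹' C) A = (ν C • ρ) A := by
    refine measure_eq_of_forall_integral_eq (fun F => isUnitBounded_of_mem_weakLimits F.2)
      (fun f hf => ?_) hA
    rw [Subtype.range_coe] at hf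
    rw [integral_smul_measure, setIntegral_of_mem_closure_weakLimits hU hR hS hmix hτ hsemi hf hC]
    rfl
  rw [Measure.restrict_apply' (hτ.measurable hC)] at h
  rw [h, Measure.smul_apply, smul_eq_mul, mul_comm, hτ.measure_preimage hC.nullMeasurableSet]

end Independence

section Joinings

variable {X X' Y Y' : Type*} [MeasurableSpace X] [MeasurableSpace X'] [MeasurableSpace Y]
  [MeasurableSpace Y']

/-- A joining of the systems `(X, T, μ)` and `(Y, S, ν)`: a measure on `X × Y` which is invariant
under `T × S` and has marginals `μ` and `ν`. -/
structure IsJoining {X Y : Type*} {mX : MeasurableSpace X} {mY : MeasurableSpace Y} (T : X → X)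
    (S : Y → Y) (μ : Measure X) (ν : Measure Y) (ρ : Measure (X × Y)) : Prop where
  measurePreserving : MeasurePreserving (Prod.map T S) ρ ρ
  measurePreserving_fst : MeasurePreserving Prod.fst ρ μ
  measurePreserving_snd : MeasurePreserving Prod.snd ρ ν

theorem IsJoining.isProbabilityMeasure {T : X → X} {S : Y → Y} {μ : Measure X} {ν : Measure Y}
    [IsProbabilityMeasure ν] {ρ : Measure (X × Y)} (h : IsJoining T S μ ν ρ) :
    IsProbabilityMeasure ρ := by
  have : IsProbabilityMeasure (ρ.map Prod.snd) := by rwa [h.measurePreserving_snd.map_eq]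
  exact Measure.isProbabilityMeasure_of_map Prod.snd

theorem IsJoining.map_snd {T : X → X} {S : Y → Y} {S' : Y' → Y'} {μ : Measure X} {ν : Measure Y}
    {ν' : Measure Y'} {ρ : Measure (X × Y)} (h : IsJoining T S μ ν ρ) (hT : Measurable T)
    (hS' : Measurable S') {c : Y → Y'} (hc : MeasurePreserving c ν ν')
    (hsemi : Function.Semiconj c S S') :
    IsJoining T S' μ ν' (ρ.map (Prod.map id c)) := by
  have hidc : MeasurePreserving (Prod.map id c) ρ (ρ.map (Prod.map id c)) :=
    (measurable_id.prodMap hc.measurable).measurePreserving ρ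
  refine ⟨.of_semiconj hidc h.measurePreserving ?_ (hT.prodMap hS'),
    .map_of_comp h.measurePreserving_fst measurable_fst hidc.measurable,
    .map_of_comp (hc.comp h.measurePreserving_snd) measurable_snd hidc.measurable⟩
  exact fun z => Prod.ext rfl (hsemi z.2)

open ProbabilityTheory

theorem map_compProd_comap {μ : Measure X} [SFinite μ] (κ : Kernel X' Y) [IsSFiniteKernel κ]
    {f : X → X'} (hf : Measurable f) :
    (μ ⊗ₘ κ.comap f hf).map (Prod.map f id) = μ.map f ⊗ₘ κ := by
  ext s hs
  have hfid : Measurable (Prod.map f (id : Y → Y)) := hf.prodMap measurable_id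
  rw [Measure.map_apply hfid hs, Measure.compProd_apply (hfid hs), Measure.compProd_apply hs,
    lintegral_map (Kernel.measurable_kernel_prodMk_left hs) hf]
  rfl

theorem kernel_map_ae_eq_comap {T T' : X → X} {S : Y → Y} {μ : Measure X} [IsFiniteMeasure μ]
    {κ : Kernel X Y} [IsFiniteKernel κ] [MeasurableSpace.CountableOrCountablyGenerated X Y]
    (hT : MeasurePreserving T μ μ) (hT' : Measurable T') (hTT' : Function.LeftInverse T' T)
    (hTS : MeasurePreserving (Prod.map T S) (μ ⊗ₘ κ) (μ ⊗ₘ κ)) (hS : Measurable S) :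
    κ.map S =ᵐ[μ] κ.comap T hT.measurable := by
  refine Kernel.ae_eq_of_compProd_eq ?_
  have hTid : Measurable (Prod.map T (id : Y → Y)) := hT.measurable.prodMap measurable_id
  have hT'id : Measurable (Prod.map T' (id : Y → Y)) := hT'.prodMap measurable_id
  have hcancel : ∀ σ : Measure (X × Y), (σ.map (Prod.map T id)).map (Prod.map T' id) = σ := by
    intro σ
    rw [Measure.map_map hT'id hTid, Prod.map_comp_map, hTT'.comp_eq_id, Function.id_comp,
      Prod.map_id, Measure.map_id]
  rw [← hcancel (μ ⊗ₘ κ.map S), ← hcancel (μ ⊗ₘ κ.comap T _)]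
  congr 1
  rw [map_compProd_comap, hT.map_eq, Measure.compProd_map hS,
    Measure.map_map hTid (measurable_id.prodMap hS), Prod.map_comp_map, Function.comp_id,
    Function.id_comp, hTS.map_eq]

theorem IsJoining.exists_lift [StandardBorelSpace Y] [Nonempty Y] {T : X → X} {T' T'' : X' → X'}
    {S : Y → Y} {π : X → X'} {μ : Measure X} {μ' : Measure X'} [IsFiniteMeasure μ]
    {ν : Measure Y} {ρ : Measure (X' × Y)} [IsFiniteMeasure ρ] (hρ : IsJoining T' S μ' ν ρ)
    (hT : MeasurePreserving T μ μ) (hT' : Measurable T') (hT'' : Measurable T'')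
    (hinv : Function.LeftInverse T'' T') (hS : Measurable S) (hπ : MeasurePreserving π μ μ')
    (hsemi : Function.Semiconj π T T') :
    ∃ σ : Measure (X × Y), IsJoining T S μ ν σ ∧ MeasurePreserving (Prod.map π id) σ ρ := by
  have hfst : ρ.fst = μ' := hρ.measurePreserving_fst.map_eq
  have : IsFiniteMeasure μ' := hfst ▸ inferInstance
  have hdis : μ' ⊗ₘ ρ.condKernel = ρ := by rw [← hfst, ρ.disintegrate]
  have hequi : ρ.condKernel.map S =ᵐ[μ'] ρ.condKernel.comap T' hT' :=
    kernel_map_ae_eq_comap (.of_semiconj hπ hT hsemi hT') hT'' hinv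
      (by rw [hdis]; exact hρ.measurePreserving) hS
  let κ : Kernel X Y := ρ.condKernel.comap π hπ.measurable
  have hκ : κ.map S =ᵐ[μ] κ.comap T hT.measurable := by
    filter_upwards [hπ.quasiMeasurePreserving.ae hequi] with x hx
    rw [Kernel.map_apply _ hS] at hx ⊢
    rw [Kernel.comap_apply, Kernel.comap_apply, Kernel.comap_apply, hsemi x, hx,
      Kernel.comap_apply]
  have hlift : MeasurePreserving (Prod.map π id) (μ ⊗ₘ κ) ρ :=
    ⟨hπ.measurable.prodMap measurable_id, by rw [map_compProd_comap, hπ.map_eq, hdis]⟩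
  have hinvariant : (μ ⊗ₘ κ).map (Prod.map T S) = μ ⊗ₘ κ := calc
    (μ ⊗ₘ κ).map (Prod.map T S) = ((μ ⊗ₘ κ).map (Prod.map id S)).map (Prod.map T id) := by
      rw [Measure.map_map (hT.measurable.prodMap measurable_id) (measurable_id.prodMap hS)]
      rfl
    _ = (μ ⊗ₘ κ.comap T hT.measurable).map (Prod.map T id) := by
      rw [← Measure.compProd_map hS, Measure.compProd_congr hκ]
    _ = μ ⊗ₘ κ := by rw [map_compProd_comap, hT.map_eq]
  exact ⟨μ ⊗ₘ κ, ⟨⟨hT.measurable.prodMap hS, hinvariant⟩,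
    ⟨measurable_fst, Measure.fst_compProd μ κ⟩, hρ.measurePreserving_snd.comp hlift⟩, hlift⟩

end Joinings

section Nontriviality

variable {X : Type*} [MeasurableSpace X] {T : X → X} {μ : Measure X}

theorem IsWeakLimit.integral_eq [IsFiniteMeasure μ] {U : Filter ℕ} [U.NeBot] {h F : X → ℝ}
    (hF : IsWeakLimit U T μ h F) (hT : MeasurePreserving T μ μ) : ∫ x, F x ∂μ = ∫ x, h x ∂μ := by
  have hlim := hF.tendsto (fun _ => 1) (memLp_const 1)
  simp only [mul_one, integral_comp_of_measurePreserving (hT.iterate _)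
    hF.isUnitBounded_source.measurable.aestronglyMeasurable] at hlim
  exact (tendsto_nhds_unique tendsto_const_nhds hlim).symm

theorem ae_eq_integral_of_forall_preimage [IsProbabilityMeasure μ] {F : X → ℝ}
    (h : ∀ s, MeasurableSet s → μ (F ⁻¹' s) = 0 ∨ μ (F ⁻¹' s)ᶜ = 0) :
    F =ᵐ[μ] fun _ => ∫ x, F x ∂μ := by
  obtain ⟨a, ha⟩ := Filter.exists_eventuallyEq_const_of_forall_separating MeasurableSet
    (f := F) (l := ae μ) fun s hs => (h s hs).symm.imp id measure_eq_zero_iff_ae_notMem.1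
  have hmean : ∫ x, F x ∂μ = a := by
    rw [integral_congr_ae ha]
    simp
  rwa [hmean]

theorem IsWeakLimit.tendsto_measure_inter [IsProbabilityMeasure μ] {U : Filter ℕ} [U.NeBot]
    {B : Set X} {F : X → ℝ} (hF : IsWeakLimit U T μ (B.indicator 1) F)
    (hT : MeasurePreserving T μ μ) (hconst : F =ᵐ[μ] fun _ => ∫ x, F x ∂μ) {A : Set X}
    (hA : MeasurableSet A) (hB : MeasurableSet B) :
    Tendsto (fun n => μ (A ∩ T^[n] ⁻¹' B)) U (𝓝 (μ A * μ B)) := by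
  have hinter : ∀ n, ∫ x, B.indicator (1 : X → ℝ) (T^[n] x) * A.indicator 1 x ∂μ =
      (μ (A ∩ T^[n] ⁻¹' B)).toReal := fun n => by
    rw [← Measure.real, ← integral_indicator_one (hA.inter (hT.measurable.iterate n hB)),
      Set.inter_indicator_one, mul_comm]
    rfl
  have hlimit : ∫ x, F x * A.indicator 1 x ∂μ = (μ A * μ B).toReal := by
    rw [integral_mul_indicator_one hA, integral_congr_ae (ae_restrict_of_ae hconst),
      hF.integral_eq hT, integral_indicator_one hB]
    simp [Measure.real]
  have hlim := hF.tendsto _ ((IsUnitBounded.indicator_one hA).memLp 2 μ)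
  simp only [hinter, hlimit] at hlim
  exact (ENNReal.tendsto_toReal_iff (fun n => measure_ne_top _ _)
    (ENNReal.mul_ne_top (measure_ne_top _ _) (measure_ne_top _ _))).1 hlim

theorem exists_measurableSet_weakLimitSpace_of_not_measureMixing [IsProbabilityMeasure μ]
    (hT : MeasurePreserving T μ μ) (hnm : ¬ MeasureMixing T μ) :
    ∃ U : Ultrafilter ℕ, (U : Filter ℕ) ≤ atTop ∧
      ∃ A, MeasurableSet[weakLimitSpace U T μ] A ∧ 0 < μ A ∧ μ A < 1 := by
  contrapose! hnm
  intro A B hA hB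
  rw [tendsto_iff_ultrafilter]
  intro U hU
  obtain ⟨F, hF⟩ := exists_isWeakLimit U hT.measurable μ (.indicator_one hB)
  refine hF.tendsto_measure_inter hT (ae_eq_integral_of_forall_preimage fun s hs => ?_) hA hB
  have hFs : MeasurableSet[weakLimitSpace U T μ] (F ⁻¹' s) :=
    measurable_of_mem_weakLimits ⟨_, hF⟩ hs
  rw [prob_compl_eq_zero_iff (hF.isUnitBounded_limit.measurable hs)]
  refine (eq_or_ne _ 0).imp_right fun h0 => ?_
  exact prob_le_one.antisymm (hnm U hU _ hFs (pos_iff_ne_zero.2 h0))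

end Nontriviality

section Disjointness

open ProbabilityTheory

variable {X X' Y Y' : Type*} {mX : MeasurableSpace X} {mX' : MeasurableSpace X'}
  {mY : MeasurableSpace Y} {mY' : MeasurableSpace Y'}

theorem MeasureMixing.of_semiconj {S : Y → Y} {S' : Y' → Y'} {ν : Measure Y} {ν' : Measure Y'}
    (hmix : MeasureMixing S ν) (hS' : Measurable S') {c : Y → Y'} (hc : MeasurePreserving c ν ν')
    (hsemi : Function.Semiconj c S S') : MeasureMixing S' ν' := by
  intro A B hA hB
  have hit : ∀ n, S^[n] ⁻¹' (c ⁻¹' B) = c ⁻¹' (S'^[n] ⁻¹' B) := fun n =>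
    Set.preimage_comp.symm.trans ((hsemi.iterate_right n).comp_eq ▸ Set.preimage_comp)
  have h := hmix _ _ (hc.measurable hA) (hc.measurable hB)
  rw [hc.measure_preimage hA.nullMeasurableSet, hc.measure_preimage hB.nullMeasurableSet] at h
  refine h.congr fun n => ?_
  rw [hit, ← Set.preimage_inter,
    hc.measure_preimage (hA.inter (hS'.iterate n hB)).nullMeasurableSet]

/-- The sequence of visits to `C` along the orbit of `y`. It codes the factor of `(Y, S)` generated
by `C` as a shift on the standard Borel space `ℕ → Prop`. -/
def itinerary {Y : Type*} (S : Y → Y) (C : Set Y) (y : Y) (n : ℕ) : Prop :=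
  S^[n] y ∈ C

theorem measurable_itinerary {S : Y → Y} (hS : Measurable S) {C : Set Y} (hC : MeasurableSet C) :
    Measurable (itinerary S C) :=
  measurable_pi_lambda _ fun n => (measurable_mem.2 hC).comp (hS.iterate n)

variable {U : Ultrafilter ℕ} {T : X → X} {T' T'' : X' → X'} {S : Y → Y} {π : X → X'}
  {μ : Measure X} {μ' : Measure X'} [IsFiniteMeasure μ] {ν : Measure Y} [IsProbabilityMeasure ν]
  {ρ : Measure (X' × Y)}

theorem IsJoining.measure_prod_eq_of_standardBorel [StandardBorelSpace Y]
    (hρ : IsJoining T' S μ' ν ρ) (hU : (U : Filter ℕ) ≤ atTop) (hT : MeasurePreserving T μ μ)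
    (hT' : Measurable T') (hT'' : Measurable T'') (hinv : Function.LeftInverse T'' T')
    (hS : MeasurePreserving S ν ν) (hmix : MeasureMixing S ν) (hπ : MeasurePreserving π μ μ')
    (hsemi : Function.Semiconj π T T') (hπU : Measurable[weakLimitSpace U T μ] π) {A : Set X'}
    (hA : MeasurableSet A) {C : Set Y} (hC : MeasurableSet C) : ρ (A ×ˢ C) = μ' A * ν C := by
  have : Nonempty Y := nonempty_of_isProbabilityMeasure ν
  have := hρ.isProbabilityMeasure
  obtain ⟨σ, hσ, hσρ⟩ := hρ.exists_lift hT hT' hT'' hinv hS.measurable hπ hsemi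
  have := hσ.isProbabilityMeasure
  have hind := (Indep_iff _ _ _).1 <| indep_weakLimitSpace_comap hU hσ.measurePreserving hS hmix
    hσ.measurePreserving_snd fun _ => rfl
  have hfst : Measurable[weakLimitSpace U (Prod.map T S) σ, weakLimitSpace U T μ] Prod.fst :=
    measurable_weakLimitSpace hT.measurable hσ.measurePreserving_fst fun _ => rfl
  calc ρ (A ×ˢ C) = σ (Prod.fst ⁻¹' (π ⁻¹' A) ∩ Prod.snd ⁻¹' C) :=
        (hσρ.measure_preimage (hA.prod hC).nullMeasurableSet).symm
    _ = σ (Prod.fst ⁻¹' (π ⁻¹' A)) * σ (Prod.snd ⁻¹' C) :=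
        hind _ _ (hfst (hπU hA)) ⟨C, hC, rfl⟩
    _ = μ' A * ν C := by
        rw [hσ.measurePreserving_fst.measure_preimage (hπ.measurable hA).nullMeasurableSet,
          hπ.measure_preimage hA.nullMeasurableSet,
          hσ.measurePreserving_snd.measure_preimage hC.nullMeasurableSet]

theorem IsJoining.eq_prod (hρ : IsJoining T' S μ' ν ρ) (hU : (U : Filter ℕ) ≤ atTop)
    (hT : MeasurePreserving T μ μ) (hT' : Measurable T') (hT'' : Measurable T'')
    (hinv : Function.LeftInverse T'' T') (hS : MeasurePreserving S ν ν) (hmix : MeasureMixing S ν)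
    (hπ : MeasurePreserving π μ μ') (hsemi : Function.Semiconj π T T')
    (hπU : Measurable[weakLimitSpace U T μ] π) : ρ = μ'.prod ν := by
  have : IsFiniteMeasure μ' := hπ.map_eq ▸ inferInstance
  refine (Measure.prod_eq fun A C hA hC => ?_).symm
  let c := itinerary S C
  have hc : MeasurePreserving c ν (ν.map c) :=
    (measurable_itinerary hS.measurable hC).measurePreserving ν
  have := Measure.isProbabilityMeasure_map (μ := ν) hc.aemeasurable
  have hshift : Measurable fun (x : ℕ → Prop) n => x (n + 1) := by fun_prop
  have hsemi_shift : Function.Semiconj c S fun x n => x (n + 1) := fun _ => rfl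
  have hC0 : MeasurableSet {x : ℕ → Prop | x 0} := measurableSet_setOfPred.2 (measurable_pi_apply 0)
  have hprod := (hρ.map_snd hT' hshift hc hsemi_shift).measure_prod_eq_of_standardBorel hU hT hT'
    hT'' hinv (.of_semiconj hc hS hsemi_shift hshift) (hmix.of_semiconj hshift hc hsemi_shift)
    hπ hsemi hπU hA hC0
  rwa [Measure.map_apply (measurable_id.prodMap hc.measurable) (hA.prod hC0),
    Measure.map_apply hc.measurable hC0] at hprod

end Disjointness

theorem nonmixing_has_factor_disjoint_from_mixing_general
    {X : Type*} [mX : MeasurableSpace X] (μ : Measure X) [IsProbabilityMeasure μ]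
    (T : X ≃ᵐ X) (hT : MeasurePreserving T μ μ) (hTnm : ¬ MeasureMixing T μ) :
    ∃ (𝓐 : MeasurableSpace X) (h𝓐 : 𝓐 ≤ mX),
      (∀ A : Set X, MeasurableSet[𝓐] A → MeasurableSet[𝓐] (T ⁻¹' A)) ∧
      (∃ A : Set X, MeasurableSet[𝓐] A ∧ 0 < μ A ∧ μ A < 1) ∧
      (∀ (Y : Type*) (mY : MeasurableSpace Y) (ν : Measure Y), IsProbabilityMeasure ν →
        ∀ S : Y → Y, MeasurePreserving S ν ν → MeasureMixing S ν →
        ∀ ρ : @Measure (X × Y) (𝓐.prod mY), IsJoining T S (μ.trim h𝓐) ν ρ →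
          ρ = @Measure.prod _ _ 𝓐 mY (μ.trim h𝓐) ν) := by
  obtain ⟨U, hU, hnontrivial⟩ := exists_measurableSet_weakLimitSpace_of_not_measureMixing hT hTnm
  have h𝓐 := weakLimitSpace_le U T μ
  have hTU : Measurable[weakLimitSpace U T μ, weakLimitSpace U T μ] T :=
    measurable_weakLimitSpace hT.measurable hT fun _ => rfl
  have hTU' : Measurable[weakLimitSpace U T μ, weakLimitSpace U T μ] T.symm :=
    measurable_weakLimitSpace hT.measurable hT.symm fun _ => by simp
  have hid : @MeasurePreserving X X mX (weakLimitSpace U T μ) id μ (μ.trim h𝓐) :=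
    @MeasurePreserving.mk _ _ _ (_) _ _ _ (measurable_id'' h𝓐) (trim_eq_map h𝓐).symm
  refine ⟨weakLimitSpace U T μ, h𝓐, fun A hA => hTU hA, hnontrivial, ?_⟩
  intro Y mY ν _ S hS hmix ρ hρ
  exact hρ.eq_prod hU hT hTU hTU' T.left_inv hS hmix hid (fun _ => rfl)
    (@measurable_id _ (weakLimitSpace U T μ))

/-- Any non-mixing automorphism `T` of a standard Borel probability space `(X, μ)` has a
`T`-invariant sub-σ-algebra `𝓐`, nontrivial mod `μ`, such that for every mixing automorphism
`S` of a probability space `(Y, ν)`, every `(T × S)`-invariant probability measure on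
`(X × Y, 𝓐 ⊗ 𝓒)` with marginals `μ|𝓐` and `ν` is the product measure. -/
theorem nonmixing_has_factor_disjoint_from_mixing
    {X : Type*} [mX : MeasurableSpace X] [StandardBorelSpace X]
    (μ : Measure X) [IsProbabilityMeasure μ]
    (T : X ≃ᵐ X) (hT : MeasurePreserving T μ μ)
    (hTnm : ¬ MeasureMixing (⇑T) μ) :
    ∃ (𝓐 : MeasurableSpace X) (h𝓐 : 𝓐 ≤ mX),
      (∀ A : Set X, MeasurableSet[𝓐] A → MeasurableSet[𝓐] (⇑T ⁻¹' A)) ∧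
      (∃ A : Set X, MeasurableSet[𝓐] A ∧ 0 < μ A ∧ μ A < 1) ∧
      (∀ (Y : Type*) (mY : MeasurableSpace Y) (ν : Measure Y),
        IsProbabilityMeasure ν →
        ∀ S : Y ≃ᵐ Y, MeasurePreserving S ν ν → MeasureMixing (⇑S) ν →
        ∀ ρ : @Measure (X × Y) (𝓐.prod mY), @IsProbabilityMeasure _ (𝓐.prod mY) ρ →
          @Measure.map _ _ (𝓐.prod mY) (𝓐.prod mY) (Prod.map ⇑T ⇑S) ρ = ρ →
          @Measure.map _ _ (𝓐.prod mY) 𝓐 Prod.fst ρ = μ.trim h𝓐 →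
          @Measure.map _ _ (𝓐.prod mY) mY Prod.snd ρ = ν →
          ρ = @Measure.prod _ _ 𝓐 mY (μ.trim h𝓐) ν) := by
  obtain ⟨𝓐, h𝓐, hinv, hnontrivial, hdisj⟩ :=
    nonmixing_has_factor_disjoint_from_mixing_general μ T hT hTnm
  exact ⟨𝓐, h𝓐, hinv, hnontrivial, fun Y mY ν hν S hS hmix ρ _ hρ hfst hsnd =>
    hdisj Y mY ν hν S hS hmix ρ
      ⟨⟨.prodMap hinv hS.measurable, hρ⟩, ⟨measurable_fst, hfst⟩, ⟨measurable_snd, hsnd⟩⟩⟩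
end

section
/- Let T be a measure-preserving automorphism of a standard Borel probability space (X, 𝓑, μ), let (k_j) be a strictly increasing sequence of natural numbers, and suppose the Koopman powers U_T^{k_j} converge weakly to a bounded operator V on L²(μ). Let 𝓐 be the smallest sub-σ-algebra of 𝓑 (mod μ) with respect to which V f is measurable for every bounded measurable f : X → ℝ. Then for every probability space (Y, 𝓒, ν) and every mixing measure-preserving automorphism S of (Y, ν), every probability measure ρ on (X × Y, 𝓐 ⊗ 𝓒) that is invariant under T × S and has marginals μ restricted to 𝓐 and ν equals the product measure (μ|𝓐) ⊗ ν. -/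
open MeasureTheory Filter Topology

/-- The sub-σ-algebra generated by the images `V f` of (classes of) bounded measurable
functions `f` under the operator `V` on `L²(μ)`: the smallest σ-algebra making every such
`V f` measurable. -/
def generatedFactor {X : Type*} [MeasurableSpace X] (μ : Measure X)
    (V : Lp ℝ 2 μ →L[ℝ] Lp ℝ 2 μ) : MeasurableSpace X :=
  MeasurableSpace.generateFrom
    {s : Set X | ∃ f : Lp ℝ 2 μ,
      (∃ f₀ : X → ℝ, Measurable f₀ ∧ (∃ C : ℝ, ∀ x, |f₀ x| ≤ C) ∧ (f : X → ℝ) =ᵐ[μ] f₀) ∧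
      ∃ B : Set ℝ, MeasurableSet B ∧ s = ⇑(V f) ⁻¹' B}

lemma generatedFactor_le {X : Type*} [mX : MeasurableSpace X] (μ : Measure X)
    (V : Lp ℝ 2 μ →L[ℝ] Lp ℝ 2 μ) : generatedFactor μ V ≤ mX := by
  refine MeasurableSpace.generateFrom_le ?_
  rintro s ⟨f, -, B, hB, rfl⟩
  exact (Lp.stronglyMeasurable (V f)).measurable hB

/-!
If the autocorrelations `⟪U^n u, u⟫` of a vector `u` tend to zero, then `U^n a` converges weakly to
zero against `u`, for every `a`; hence in any extension of `(X, T)` every `V f` is orthogonal to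
every such `u`. Mixing of `S` produces such vectors: if `z` is an equivariant variable independent
of `y`, then `u = 1_E(z) (1_C(y) - ν C)` has decaying autocorrelations.

The graph joinings of `T ^ k j` accumulate at a self-joining of `μ`, which represents `V` as the
averaging operator of a Markov kernel `κ` commuting with `T`. Adjoin to `(x, y)` points
`x₁, x₂, …` drawn independently from `κ x`. By the orthogonality, if `(x₁, …, x_n)` is independent
of `y`, then so is `(x₁, …, x_{n+1})`. Thus the moments `∏ i, V f_i`, being conditional
expectations of `∏ i, f_i(x_i)` given `(x, y)`, are uncorrelated with every event `y ∈ C`. The `V f`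
are bounded, so their moments determine their joint law, and the σ-algebra they generate is
independent of `y`.

A joining of the factor `𝓐` with `(Y, S)` reduces to one of `(X, T)` with `(Y, S)` through its
relatively independent extension over `𝓐`.
-/

open ProbabilityTheory Set

section Hilbert

variable {𝕜 H : Type*} [RCLike 𝕜] [NormedAddCommGroup H] [InnerProductSpace 𝕜 H]

theorem isClosed_setOf_tendsto_inner_iterate (U : H →ₗᵢ[𝕜] H) (u : H) :
    IsClosed {a | Tendsto (fun n => inner 𝕜 (U^[n] a) u) atTop (𝓝 0)} := by
  have hLipschitz (n : ℕ) : LipschitzWith ‖u‖₊ fun a => inner 𝕜 (U^[n] a) u :=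
    LipschitzWith.of_dist_le_mul fun a b => by
      rw [dist_eq_norm, ← inner_sub_left]
      calc ‖inner 𝕜 (U^[n] a - U^[n] b) u‖ ≤ dist (U^[n] a) (U^[n] b) * ‖u‖ := by
            simpa only [dist_eq_norm] using norm_inner_le_norm _ _
        _ ≤ ‖u‖₊ * dist a b := by
            rw [mul_comm]
            gcongr
            · rfl
            · simpa using (U.lipschitz.iterate n).dist_le_mul a b
  exact (LipschitzWith.uniformEquicontinuous _ _ hLipschitz).equicontinuous
    |>.isClosed_setOfPred_tendsto continuous_const

/-- If `U^[l] b = u` for some `l`, then `⟪U^[n] b, u⟫` is a shifted autocorrelation of `u`; if `a`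
is orthogonal to all such `b`, then `⟪U^[n] a, u⟫ = 0` for every `n`. -/
theorem tendsto_inner_iterate_zero [CompleteSpace H] {U : H →ₗᵢ[𝕜] H}
    (hU : Function.Surjective U) {u : H}
    (hu : Tendsto (fun n => inner 𝕜 (U^[n] u) u) atTop (𝓝 0)) (a : H) :
    Tendsto (fun n => inner 𝕜 (U^[n] a) u) atTop (𝓝 0) := by
  let M := Submodule.span 𝕜 {b | ∃ l, U^[l] b = u}
  have hmap (n : ℕ) (b c : H) : inner 𝕜 (U^[n] b) (U^[n] c) = inner 𝕜 b c := by
    induction n with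
    | zero => rfl
    | succ n ih => simp only [Function.iterate_succ_apply', U.inner_map_map, ih]
  have hiter (n : ℕ) : ⇑(U.toLinearMap ^ n) = U^[n] := Module.End.coe_pow _ _
  have hadd (n : ℕ) (b c : H) : U^[n] (b + c) = U^[n] b + U^[n] c := by simp only [← hiter, map_add]
  have hM : ∀ b ∈ M, Tendsto (fun n => inner 𝕜 (U^[n] b) u) atTop (𝓝 0) := fun b hb => by
    induction hb using Submodule.span_induction with
    | mem b hb =>
      obtain ⟨l, hl⟩ := hb
      rw [← tendsto_add_atTop_iff_nat l]
      simpa only [Function.iterate_add_apply, hl] using hu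
    | zero => simp
    | add b c _ _ hb hc => simpa [hadd, inner_add_left] using hb.add hc
    | smul r b _ hb => simpa [← hiter, inner_smul_left] using hb.const_mul ((starRingEnd 𝕜) r)
  obtain ⟨b, hb, c, hc, rfl⟩ := M.topologicalClosure.exists_add_mem_mem_orthogonal a
  have hb : Tendsto (fun n => inner 𝕜 (U^[n] b) u) atTop (𝓝 0) :=
    closure_minimal hM (isClosed_setOf_tendsto_inner_iterate U u) hb
  have hc (n : ℕ) : inner 𝕜 (U^[n] c) u = 0 := by
    obtain ⟨d, rfl⟩ := hU.iterate n u
    rw [hmap, Submodule.inner_left_of_mem_orthogonal (M.le_topologicalClosure _) hc]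
    exact Submodule.subset_span ⟨n, rfl⟩
  simpa [hadd, inner_add_left, hc] using hb

end Hilbert

section Koopman

variable {α β : Type*} [MeasurableSpace α] [MeasurableSpace β] {μ : Measure α} {ν : Measure β}

/-- The Koopman operator `f ↦ f ∘ T` from `L²(ν)` to `L²(μ)` of a measure-preserving map `T`. -/
noncomputable abbrev koopman {T : α → β} (hT : MeasurePreserving T μ ν) :
    Lp ℝ 2 ν →ₗᵢ[ℝ] Lp ℝ 2 μ :=
  Lp.compMeasurePreservingₗᵢ ℝ T hT

theorem coeFn_koopman {T : α → β} (hT : MeasurePreserving T μ ν) (f : Lp ℝ 2 ν) :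
    koopman hT f =ᵐ[μ] f ∘ T :=
  Lp.coeFn_compMeasurePreserving f hT

theorem coeFn_koopman_iterate {T : α → α} (hT : MeasurePreserving T μ μ) (n : ℕ) (f : Lp ℝ 2 μ) :
    (koopman hT)^[n] f =ᵐ[μ] f ∘ T^[n] := by
  have h : (koopman hT)^[n] f = koopman (hT.iterate n) f :=
    congrFun (Lp.compMeasurePreserving_iterate hT n) f
  rw [h]
  exact coeFn_koopman _ f

theorem inner_eq_integral_of_ae_eq {f g : Lp ℝ 2 μ} {f₀ g₀ : α → ℝ} (hf : f =ᵐ[μ] f₀)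
    (hg : g =ᵐ[μ] g₀) : inner ℝ f g = ∫ x, f₀ x * g₀ x ∂μ := by
  rw [L2.inner_def]
  refine integral_congr_ae ?_
  filter_upwards [hf, hg] with x hfx hgx
  rw [hfx, hgx, RCLike.inner_apply, conj_trivial, mul_comm]

theorem koopman_koopman_symm (T : α ≃ᵐ β) (hT : MeasurePreserving T μ ν) (f : Lp ℝ 2 μ) :
    koopman hT (koopman (hT.symm T) f) = f := by
  refine (Lp.compMeasurePreserving_comp_apply f (hT.symm T) hT).symm.trans ?_
  simp only [T.symm_comp_self, Lp.compMeasurePreserving_id_apply]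

theorem koopman_surjective (T : α ≃ᵐ β) (hT : MeasurePreserving T μ ν) :
    Function.Surjective (koopman hT) := fun f =>
  ⟨koopman (hT.symm T) f, koopman_koopman_symm T hT f⟩

theorem koopman_semiconj {p : α → β} {W : α → α} {T : β → β} (hp : MeasurePreserving p μ ν)
    (hW : MeasurePreserving W μ μ) (hT : MeasurePreserving T ν ν) (h : Function.Semiconj p W T) :
    Function.Semiconj (koopman hp) (koopman hT) (koopman hW) := fun f => by
  refine (Lp.compMeasurePreserving_comp_apply f hT hp).symm.trans ?_
  simp only [← h.comp_eq]
  exact Lp.compMeasurePreserving_comp_apply f hp hW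

end Koopman

section WeakLimit

variable {Ω X ι : Type*} [MeasurableSpace Ω] [MeasurableSpace X] {P : Measure Ω} {μ : Measure X}
  {T : X → X} {hT : MeasurePreserving T μ μ} {k : ι → ℕ} {l : Filter ι} [l.NeBot]
  {V : Lp ℝ 2 μ →L[ℝ] Lp ℝ 2 μ}

/-- `V` is the limit of the powers `U_T ^ k j` of the Koopman operator in the weak operator
topology, along a filter on the index `j`. -/
def IsWeakKoopmanLimit (hT : MeasurePreserving T μ μ) (k : ι → ℕ) (l : Filter ι)
    (V : Lp ℝ 2 μ →L[ℝ] Lp ℝ 2 μ) : Prop :=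
  ∀ f g : Lp ℝ 2 μ, Tendsto (fun j => inner ℝ ((koopman hT)^[k j] f) g) l (𝓝 (inner ℝ (V f) g))

namespace IsWeakKoopmanLimit

theorem commute (hV : IsWeakKoopmanLimit hT k l V) (f : Lp ℝ 2 μ) :
    V (koopman hT f) = koopman hT (V f) := by
  refine ext_inner_right ℝ fun g => ?_
  let U := (koopman hT).toContinuousLinearMap
  have h := hV f (U.adjoint g)
  simp only [U.adjoint_inner_right] at h
  refine tendsto_nhds_unique ((hV (koopman hT f) g).congr fun j => ?_) h
  rw [← Function.iterate_succ_apply, Function.iterate_succ_apply']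
  rfl

theorem inner_koopman_eq_zero (hV : IsWeakKoopmanLimit hT k l V) (hk : Tendsto k l atTop)
    {p : Ω → X} (hp : MeasurePreserving p P μ) (W : Ω ≃ᵐ Ω) (hW : MeasurePreserving W P P)
    (hpW : Function.Semiconj p W T) {u : Lp ℝ 2 P}
    (hu : Tendsto (fun n => inner ℝ ((koopman hW)^[n] u) u) atTop (𝓝 0)) (f : Lp ℝ 2 μ) :
    inner ℝ (koopman hp (V f)) u = 0 := by
  have hlim := hV f ((koopman hp).toContinuousLinearMap.adjoint u)
  simp only [ContinuousLinearMap.adjoint_inner_right] at hlim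
  refine tendsto_nhds_unique (hlim.congr fun j => ?_)
    ((tendsto_inner_iterate_zero (koopman_surjective W hW) hu (koopman hp f)).comp hk)
  exact congrArg (inner ℝ · u) ((koopman_semiconj hp hW hT hpW).iterate_right (k j) f)

end IsWeakKoopmanLimit

end WeakLimit

section Kernel

theorem isCompact_setOf_coupling {X Y : Type*} [MeasurableSpace X] [TopologicalSpace X]
    [PolishSpace X] [BorelSpace X] [MeasurableSpace Y] [TopologicalSpace Y] [PolishSpace Y]
    [BorelSpace Y] (μ : ProbabilityMeasure X) (ν : ProbabilityMeasure Y) :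
    IsCompact {π : ProbabilityMeasure (X × Y) |
      π.map measurable_fst.aemeasurable = μ ∧ π.map measurable_snd.aemeasurable = ν} := by
  set C := {π : ProbabilityMeasure (X × Y) |
    π.map measurable_fst.aemeasurable = μ ∧ π.map measurable_snd.aemeasurable = ν}
  have hclosed : IsClosed C :=
    (isClosed_eq (ProbabilityMeasure.continuous_map continuous_fst) continuous_const).inter
      (isClosed_eq (ProbabilityMeasure.continuous_map continuous_snd) continuous_const)
  have htight :
      IsTightMeasureSet {((π : ProbabilityMeasure (X × Y)) : Measure (X × Y)) | π ∈ C} := by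
    refine .prodMk ((isTightMeasureSet_singleton (μ := (μ : Measure X))).subset ?_)
      ((isTightMeasureSet_singleton (μ := (ν : Measure Y))).subset ?_)
    · rintro _ ⟨_, ⟨π, hπ, rfl⟩, rfl⟩
      exact congrArg ProbabilityMeasure.toMeasure hπ.1
    · rintro _ ⟨_, ⟨π, hπ, rfl⟩, rfl⟩
      exact congrArg ProbabilityMeasure.toMeasure hπ.2
  exact hclosed.closure_eq ▸ isCompact_closure_of_isTightMeasureSet htight

section HasKernel

variable {X : Type*} [MeasurableSpace X] {μ : Measure X} {V : Lp ℝ 2 μ →L[ℝ] Lp ℝ 2 μ}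
  {κ : Kernel X X}

/-- `V` is the averaging operator `(V f) x = ∫ y, f y ∂κ x` of the transition kernel `κ`. -/
def HasKernel (V : Lp ℝ 2 μ →L[ℝ] Lp ℝ 2 μ) (κ : Kernel X X) : Prop :=
  ∀ f (hf : MemLp f 2 μ), V (hf.toLp f) =ᵐ[μ] fun x => ∫ y, f y ∂κ x

namespace HasKernel

variable [IsFiniteMeasure μ] (hκ : HasKernel V κ)
include hκ

theorem apply_indicatorConstLp_ae_eq {D : Set X} (hD : MeasurableSet D) :
    V (indicatorConstLp 2 hD (measure_ne_top μ D) 1) =ᵐ[μ] fun x => (κ x).real D :=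
  (hκ _ (memLp_indicator_const 2 hD 1 (.inr (measure_ne_top μ D)))).trans
    (.of_forall fun _ => integral_indicator_one hD)

theorem ae_apply_eq [IsFiniteKernel κ] {T : X → X} {hT : MeasurePreserving T μ μ}
    (hcomm : ∀ f, V (koopman hT f) = koopman hT (V f)) {D : Set X} (hD : MeasurableSet D) :
    ∀ᵐ x ∂μ, κ (T x) D = κ x (T ⁻¹' D) := by
  let f := indicatorConstLp 2 hD (measure_ne_top μ D) (1 : ℝ)
  have hf : koopman hT f = indicatorConstLp 2 (hT.measurable hD) (measure_ne_top μ _) 1 :=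
    Lp.indicatorConstLp_compMeasurePreserving hD (measure_ne_top μ D) 1 hT
  have hpre := hκ.apply_indicatorConstLp_ae_eq (hT.measurable hD)
  rw [← hf, hcomm] at hpre
  filter_upwards [hpre, coeFn_koopman hT (V f),
    hT.quasiMeasurePreserving.ae_eq_comp (hκ.apply_indicatorConstLp_ae_eq hD)] with x h₁ h₂ h₃
  rw [← measureReal_eq_measureReal_iff, ← h₁, h₂]
  exact h₃.symm

end HasKernel

end HasKernel

variable {X ι : Type*} [MeasurableSpace X] [StandardBorelSpace X] {μ : Measure X}
  [IsProbabilityMeasure μ] {T : X → X} {hT : MeasurePreserving T μ μ} {k : ι → ℕ} {l : Filter ι}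
  [l.NeBot] {V : Lp ℝ 2 μ →L[ℝ] Lp ℝ 2 μ}

namespace IsWeakKoopmanLimit

theorem exists_coupling (hV : IsWeakKoopmanLimit hT k l V) :
    ∃ (π : Measure (X × X)) (hfst : MeasurePreserving Prod.fst π μ)
      (hsnd : MeasurePreserving Prod.snd π μ),
      ∀ f g : Lp ℝ 2 μ, inner ℝ (V f) g = inner ℝ (koopman hsnd f) (koopman hfst g) := by
  let := upgradeStandardBorel X
  let μ' : ProbabilityMeasure X := ⟨μ, inferInstance⟩
  have hgraph (j : ι) : Measurable fun x => (x, T^[k j] x) :=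
    measurable_id.prodMk (hT.measurable.iterate _)
  let γ (j : ι) : ProbabilityMeasure (X × X) := μ'.map (hgraph j).aemeasurable
  have hγ (j : ι) : (γ j).map measurable_fst.aemeasurable = μ' ∧
      (γ j).map measurable_snd.aemeasurable = μ' :=
    ⟨Subtype.ext ((Measure.map_map measurable_fst (hgraph j)).trans Measure.map_id),
      Subtype.ext ((Measure.map_map measurable_snd (hgraph j)).trans (hT.iterate _).map_eq)⟩
  obtain ⟨π, ⟨hfst, hsnd⟩, hπ⟩ := (isCompact_setOf_coupling μ' μ').ultrafilter_le_nhds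
    ((Ultrafilter.of l).map γ) (tendsto_principal.2 (Eventually.of_forall hγ))
  have hfst : MeasurePreserving Prod.fst (π : Measure (X × X)) μ :=
    ⟨measurable_fst, congrArg ProbabilityMeasure.toMeasure hfst⟩
  have hsnd : MeasurePreserving Prod.snd (π : Measure (X × X)) μ :=
    ⟨measurable_snd, congrArg ProbabilityMeasure.toMeasure hsnd⟩
  refine ⟨π, hfst, hsnd, fun f g => ?_⟩
  have hdense := BoundedContinuousFunction.toLp_denseRange ℝ μ ℝ (p := 2) (by simp)
  refine hdense.induction_on₂ (isClosed_eq (by fun_prop) (by fun_prop)) (fun f g => ?_) f g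
  have hf := BoundedContinuousFunction.coeFn_toLp (p := 2) (𝕜 := ℝ) μ f
  have hg := BoundedContinuousFunction.coeFn_toLp (p := 2) (𝕜 := ℝ) μ g
  have hlim := (hV (f.toLp 2 μ ℝ) (g.toLp 2 μ ℝ)).mono_left (Ultrafilter.of_le l)
  refine tendsto_nhds_unique hlim ?_
  let fg : BoundedContinuousFunction (X × X) ℝ :=
    f.compContinuous ⟨Prod.snd, continuous_snd⟩ * g.compContinuous ⟨Prod.fst, continuous_fst⟩
  have hfg := ProbabilityMeasure.tendsto_iff_forall_integral_tendsto.1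
    (show Tendsto γ (Ultrafilter.of l) (𝓝 π) from hπ) fg
  convert! hfg using 2 with j
  · exact (inner_eq_integral_of_ae_eq ((coeFn_koopman_iterate hT _ _).trans
      ((hT.iterate _).quasiMeasurePreserving.ae_eq_comp hf)) hg).trans
      (integral_map (hgraph j).aemeasurable fg.continuous.aestronglyMeasurable).symm
  · exact inner_eq_integral_of_ae_eq
      ((coeFn_koopman hsnd _).trans (hsnd.quasiMeasurePreserving.ae_eq_comp hf))
      ((coeFn_koopman hfst _).trans (hfst.quasiMeasurePreserving.ae_eq_comp hg))

theorem exists_kernel (hV : IsWeakKoopmanLimit hT k l V) :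
    ∃ κ : Kernel X X, IsMarkovKernel κ ∧ HasKernel V κ := by
  obtain ⟨π, hfst, hsnd, hπ⟩ := hV.exists_coupling
  have : Nonempty X := μ.nonempty_of_neZero
  obtain ⟨κ, hκ, rfl⟩ : ∃ κ : Kernel X X, IsMarkovKernel κ ∧ π = μ ⊗ₘ κ := by
    have : IsProbabilityMeasure (π.map Prod.fst) := by rwa [hfst.map_eq]
    have : IsProbabilityMeasure π := Measure.isProbabilityMeasure_of_map Prod.fst
    exact ⟨π.condKernel, inferInstance, by
      simpa only [Measure.fst, hfst.map_eq] using (π.disintegrate π.condKernel).symm⟩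
  refine ⟨κ, hκ, fun f hf => ?_⟩
  have h_int : Integrable (fun z => f z.2) (μ ⊗ₘ κ) :=
    hsnd.integrable_comp_of_integrable (hf.integrable one_le_two)
  refine Integrable.ae_eq_of_forall_setIntegral_eq _ _ ((Lp.memLp _).integrable one_le_two)
    h_int.integral_compProd fun A hA _ => ?_
  calc ∫ x in A, V (hf.toLp f) x ∂μ
      = inner ℝ (V (hf.toLp f)) (indicatorConstLp 2 hA (measure_ne_top μ A) 1) := by
        rw [real_inner_comm, L2.inner_indicatorConstLp_one]
    _ = ∫ z, f z.2 * A.indicator 1 z.1 ∂(μ ⊗ₘ κ) := by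
        rw [hπ]
        exact inner_eq_integral_of_ae_eq
          ((coeFn_koopman hsnd _).trans (hsnd.quasiMeasurePreserving.ae_eq_comp hf.coeFn_toLp))
          ((coeFn_koopman hfst _).trans
            (hfst.quasiMeasurePreserving.ae_eq_comp indicatorConstLp_coeFn))
    _ = ∫ z in A ×ˢ univ, f z.2 ∂(μ ⊗ₘ κ) := by
        rw [← integral_indicator (hA.prod .univ)]
        refine integral_congr_ae (.of_forall fun z => ?_)
        by_cases hz : z.1 ∈ A <;> simp [hz]
    _ = ∫ x in A, ∫ y, f y ∂κ x ∂μ := by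
        simp only [Measure.setIntegral_compProd hA .univ h_int.integrableOn, Measure.restrict_univ]

end IsWeakKoopmanLimit

end Kernel

section Mixing

variable {Y : Type*} [MeasurableSpace Y] {ν : Measure Y} {S : Y → Y}

theorem MeasureMixing.tendsto_integral_iterate_mul [IsProbabilityMeasure ν]
    (hmix : MeasureMixing S ν) (hS : MeasurePreserving S ν ν) {C : Set Y} (hC : MeasurableSet C) :
    Tendsto (fun n => ∫ y, (C.indicator 1 (S^[n] y) - ν.real C) * (C.indicator 1 y - ν.real C) ∂ν)
      atTop (𝓝 0) := by
  have hreal : Tendsto (fun n => ν.real (C ∩ S^[n] ⁻¹' C) - ν.real C * ν.real C) atTop (𝓝 0) := by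
    have h := (ENNReal.tendsto_toReal (by finiteness)).comp (hmix C C hC hC)
    simpa [Measure.real, ENNReal.toReal_mul] using h.sub_const (ν.real C * ν.real C)
  refine hreal.congr fun n => ?_
  have hCn : MeasurableSet (S^[n] ⁻¹' C) := (hS.iterate n).measurable hC
  have hmem {A : Set Y} (hA : MeasurableSet A) : MemLp (A.indicator (1 : Y → ℝ)) 2 ν :=
    (memLp_const 1).indicator hA
  have hcov := covariance_eq_sub (hmem hCn) (hmem hC)
  rw [← inter_indicator_one, integral_indicator_one hCn, integral_indicator_one hC,
    integral_indicator_one (hCn.inter hC), (hS.iterate n).measureReal_preimage hC.nullMeasurableSet,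
    inter_comm] at hcov
  rw [← hcov, covariance, integral_indicator_one hCn, integral_indicator_one hC,
    (hS.iterate n).measureReal_preimage hC.nullMeasurableSet]
  rfl

end Mixing

section IndependentExtension

variable {Ω X Y Z : Type*} [MeasurableSpace Ω] [MeasurableSpace X] [MeasurableSpace Y]
  [MeasurableSpace Z]

theorem indepFun_prodMk_left {P : Measure Ω} [IsFiniteMeasure P] {f : Ω → X} {g : Ω → Y} {q : Ω → Z}
    (hf : Measurable f) (hg : Measurable g) (hq : Measurable q)
    (h : ∀ A B C, MeasurableSet A → MeasurableSet B → MeasurableSet C →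
      P (f ⁻¹' A ∩ g ⁻¹' B ∩ q ⁻¹' C) = P (f ⁻¹' A ∩ g ⁻¹' B) * P (q ⁻¹' C)) :
    (fun ω => (f ω, g ω)) ⟂ᵢ[P] q := by
  have hfg := hf.prodMk hg
  rw [indepFun_iff_map_prod_eq_prod_map_map hfg.aemeasurable hq.aemeasurable]
  refine Measure.ext_prod₃' fun {A B C} hA hB hC => ?_
  rw [Measure.map_apply (hfg.prodMk hq) ((hA.prod hB).prod hC), Measure.prod_prod,
    Measure.map_apply hfg (hA.prod hB), Measure.map_apply hq hC]
  exact h A B C hA hB hC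

theorem compProd_real_prod {P : Measure Ω} [IsFiniteMeasure P] (η : Kernel Ω X) [IsFiniteKernel η]
    {A : Set Ω} (hA : MeasurableSet A) {D : Set X} (hD : MeasurableSet D) :
    (P ⊗ₘ η).real (A ×ˢ D) = ∫ ω in A, (η ω).real D ∂P := by
  rw [measureReal_def, Measure.compProd_apply_prod hA hD, ← integral_toReal
    (η.measurable_coe hD).aemeasurable (.of_forall fun _ => measure_lt_top _ _)]
  rfl

theorem measurePreserving_prodMap_compProd {P : Measure Ω} [IsFiniteMeasure P] {W : Ω → Ω}
    (hW : MeasurePreserving W P P) {T : X → X} (hT : Measurable T) (η : Kernel Ω X)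
    [IsFiniteKernel η]
    (hη : ∀ D, MeasurableSet D → ∀ᵐ ω ∂P, η (W ω) D = η ω (T ⁻¹' D)) :
    MeasurePreserving (Prod.map W T) (P ⊗ₘ η) (P ⊗ₘ η) := by
  have hmap : Measurable (Prod.map W T) := hW.measurable.prodMap hT
  refine ⟨hmap, Measure.ext_prod fun {E D} hE hD => ?_⟩
  rw [Measure.map_apply hmap (hE.prod hD), Set.preimage_prod_map_prod,
    Measure.compProd_apply_prod (hW.measurable hE) (hT hD), Measure.compProd_apply_prod hE hD,
    ← hW.setLIntegral_comp_preimage hE (η.measurable_coe hD)]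
  exact setLIntegral_congr_fun_ae (hW.measurable hE) ((hη D hD).mono fun ω hω _ => hω.symm)

/-- A system `(Ω, P, W)` with equivariant maps `p`, `q`, `z` to `(X, T)`, `(Y, S)`, `(Z, R)` such
that `p` and `q` have laws `μ` and `ν`, and `z` is independent of `q`. The variable `z` collects the
points drawn so far from a kernel at `p`. -/
structure IndependentExtension (μ : Measure X) (T : X → X) (ν : Measure Y) (S : Y → Y)
    (R : Z → Z) (P : Measure Ω) (W : Ω ≃ᵐ Ω) (p : Ω → X) (q : Ω → Y) (z : Ω → Z) : Prop where
  measurePreserving : MeasurePreserving W P P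
  measurePreserving_fst : MeasurePreserving p P μ
  measurePreserving_snd : MeasurePreserving q P ν
  measurable : Measurable z
  measurable_action : Measurable R
  semiconj_fst : Function.Semiconj p W T
  semiconj_snd : Function.Semiconj q W S
  semiconj : Function.Semiconj z W R
  indepFun : z ⟂ᵢ[P] q

namespace IndependentExtension

variable {μ : Measure X} {T : X ≃ᵐ X} {hT : MeasurePreserving T μ μ} {ν : Measure Y} {S : Y → Y}
  {R : Z → Z} {P : Measure Ω} {W : Ω ≃ᵐ Ω} {p : Ω → X} {q : Ω → Y} {z : Ω → Z}

theorem isProbabilityMeasure [IsProbabilityMeasure ν]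
    (h : IndependentExtension μ T ν S R P W p q z) : IsProbabilityMeasure P :=
  have : IsProbabilityMeasure (P.map q) := by rwa [h.measurePreserving_snd.map_eq]
  Measure.isProbabilityMeasure_of_map q

theorem tendsto_inner_iterate_koopman [IsProbabilityMeasure ν]
    (h : IndependentExtension μ T ν S R P W p q z)
    (hS : MeasurePreserving S ν ν) (hmix : MeasureMixing S ν) {E : Set Z} (hE : MeasurableSet E)
    {C : Set Y} (hC : MeasurableSet C) {u : Lp ℝ 2 P}
    (hu : u =ᵐ[P] fun ω => E.indicator 1 (z ω) * (C.indicator 1 (q ω) - ν.real C)) :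
    Tendsto (fun n => inner ℝ ((koopman h.measurePreserving)^[n] u) u) atTop (𝓝 0) := by
  have := h.isProbabilityMeasure
  let F (n : ℕ) (t : Z) : ℝ := E.indicator 1 (R^[n] t) * E.indicator 1 t
  let G (n : ℕ) (y : Y) : ℝ := (C.indicator 1 (S^[n] y) - ν.real C) * (C.indicator 1 y - ν.real C)
  have hF (n : ℕ) : Measurable (F n) :=
    ((measurable_one.indicator hE).comp (h.measurable_action.iterate n)).mul
      (measurable_one.indicator hE)
  have hG (n : ℕ) : Measurable (G n) :=
    (((measurable_one.indicator hC).comp (hS.measurable.iterate n)).sub_const _).mul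
      ((measurable_one.indicator hC).sub_const _)
  have hFG (n : ℕ) : inner ℝ ((koopman h.measurePreserving)^[n] u) u =
      (∫ ω, F n (z ω) ∂P) * ∫ y, G n y ∂ν := by
    have hun := (coeFn_koopman_iterate h.measurePreserving n u).trans
      ((h.measurePreserving.iterate n).quasiMeasurePreserving.ae_eq_comp hu)
    have hGq : ∫ y, G n y ∂ν = ∫ ω, G n (q ω) ∂P := by
      rw [← integral_map h.measurePreserving_snd.aemeasurable (hG n).aestronglyMeasurable,
        h.measurePreserving_snd.map_eq]
    rw [inner_eq_integral_of_ae_eq hun hu, hGq,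
      ← h.indepFun.integral_fun_comp_mul_comp h.measurable.aemeasurable
        h.measurePreserving_snd.aemeasurable (hF n).aestronglyMeasurable
        (hG n).aestronglyMeasurable]
    refine integral_congr_ae (.of_forall fun ω => ?_)
    simp only [Function.comp_apply, (h.semiconj.iterate_right n).eq,
      (h.semiconj_snd.iterate_right n).eq, F, G]
    ring
  have hbound (n : ℕ) : |∫ ω, F n (z ω) ∂P| ≤ 1 := by
    have hF_le (ω : Ω) : ‖F n (z ω)‖ ≤ 1 := by
      by_cases h₁ : R^[n] (z ω) ∈ E <;> by_cases h₂ : z ω ∈ E <;> simp [F, h₁, h₂]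
    simpa using norm_integral_le_of_norm_le_const (μ := P) (.of_forall hF_le)
  simp only [hFG]
  exact bdd_le_mul_tendsto_zero' 1 (.of_forall hbound) (hmix.tendsto_integral_iterate_mul hS hC)

variable [IsProbabilityMeasure ν] {ι : Type*} {k : ι → ℕ} {l : Filter ι} [l.NeBot]
  {V : Lp ℝ 2 μ →L[ℝ] Lp ℝ 2 μ} {κ : Kernel X X}

theorem setIntegral_kernel_eq
    (h : IndependentExtension μ T ν S R P W p q z) (hS : MeasurePreserving S ν ν)
    (hmix : MeasureMixing S ν) (hV : IsWeakKoopmanLimit hT k l V) (hk : Tendsto k l atTop)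
    (hκ : HasKernel V κ) {E : Set Z} (hE : MeasurableSet E) {C : Set Y} (hC : MeasurableSet C)
    {D : Set X} (hD : MeasurableSet D) :
    ∫ ω in z ⁻¹' E ∩ q ⁻¹' C, (κ (p ω)).real D ∂P =
      ν.real C * ∫ ω in z ⁻¹' E, (κ (p ω)).real D ∂P := by
  have := h.isProbabilityMeasure
  have hμ : IsFiniteMeasure μ := h.measurePreserving_fst.map_eq ▸ inferInstance
  have hzE : MeasurableSet (z ⁻¹' E) := h.measurable hE
  have hqC : MeasurableSet (q ⁻¹' C) := h.measurePreserving_snd.measurable hC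
  let a := indicatorConstLp 2 (hzE.inter hqC) (measure_ne_top P _) (1 : ℝ)
  let b := indicatorConstLp 2 hzE (measure_ne_top P _) (1 : ℝ)
  let v := koopman h.measurePreserving_fst (V (indicatorConstLp 2 hD (measure_ne_top μ D) 1))
  have hu : a - ν.real C • b =ᵐ[P]
      fun ω => E.indicator 1 (z ω) * (C.indicator 1 (q ω) - ν.real C) := by
    filter_upwards [Lp.coeFn_sub a (ν.real C • b), Lp.coeFn_smul (ν.real C) b,
      indicatorConstLp_coeFn (p := 2) (hs := hzE.inter hqC) (hμs := measure_ne_top P _)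
        (c := (1 : ℝ)),
      indicatorConstLp_coeFn (p := 2) (hs := hzE) (hμs := measure_ne_top P _) (c := (1 : ℝ))]
      with ω h₁ h₂ h₃ h₄
    rw [h₁, Pi.sub_apply, h₂, Pi.smul_apply, h₃, h₄]
    by_cases hE : z ω ∈ E <;> by_cases hC : q ω ∈ C <;> simp [hE, hC]
  have hv : v =ᵐ[P] fun ω => (κ (p ω)).real D :=
    (coeFn_koopman _ _).trans
      (h.measurePreserving_fst.quasiMeasurePreserving.ae_eq_comp
        (hκ.apply_indicatorConstLp_ae_eq hD))
  have hzero : inner ℝ v (a - ν.real C • b) = 0 :=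
    hV.inner_koopman_eq_zero hk h.measurePreserving_fst W h.measurePreserving h.semiconj_fst
      (h.tendsto_inner_iterate_koopman hS hmix hE hC hu) _
  rw [inner_sub_right, real_inner_smul_right, real_inner_comm, L2.inner_indicatorConstLp_one,
    real_inner_comm, L2.inner_indicatorConstLp_one, sub_eq_zero] at hzero
  rwa [setIntegral_congr_ae (hzE.inter hqC) (hv.mono fun _ hω _ => hω),
    setIntegral_congr_ae hzE (hv.mono fun _ hω _ => hω)] at hzero

theorem adjoin [IsMarkovKernel κ] (h : IndependentExtension μ T ν S R P W p q z)
    (hS : MeasurePreserving S ν ν) (hmix : MeasureMixing S ν) (hV : IsWeakKoopmanLimit hT k l V)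
    (hk : Tendsto k l atTop) (hκ : HasKernel V κ) :
    IndependentExtension μ T ν S (Prod.map R T)
      (P ⊗ₘ κ.comap p h.measurePreserving_fst.measurable) (W.prodCongr T) (p ∘ Prod.fst)
      (q ∘ Prod.fst) (Prod.map z id) := by
  have := h.isProbabilityMeasure
  have hμ : IsFiniteMeasure μ := h.measurePreserving_fst.map_eq ▸ inferInstance
  let η := κ.comap p h.measurePreserving_fst.measurable
  have hfst : MeasurePreserving Prod.fst (P ⊗ₘ η) P := ⟨measurable_fst, Measure.fst_compProd P η⟩
  have hη (D : Set X) (hD : MeasurableSet D) : ∀ᵐ ω ∂P, η (W ω) D = η ω (T ⁻¹' D) := by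
    filter_upwards [h.measurePreserving_fst.quasiMeasurePreserving.ae
      (hκ.ae_apply_eq hV.commute hD)] with ω hω
    rwa [Kernel.comap_apply, Kernel.comap_apply, h.semiconj_fst.eq]
  exact {
    measurePreserving :=
      measurePreserving_prodMap_compProd h.measurePreserving T.measurable η hη
    measurePreserving_fst := h.measurePreserving_fst.comp hfst
    measurePreserving_snd := h.measurePreserving_snd.comp hfst
    measurable := h.measurable.prodMap measurable_id
    measurable_action := h.measurable_action.prodMap T.measurable
    semiconj_fst := fun w => h.semiconj_fst w.1
    semiconj_snd := fun w => h.semiconj_snd w.1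
    semiconj := fun w => Prod.ext (h.semiconj w.1) rfl
    indepFun := by
      refine indepFun_prodMk_left (h.measurable.comp measurable_fst) measurable_snd
        (h.measurePreserving_snd.comp hfst).measurable fun E D C hE hD hC => ?_
      have hzE := h.measurable hE
      have hqC := h.measurePreserving_snd.measurable hC
      have hC_real : ν.real C = (P ⊗ₘ η).real (q ∘ Prod.fst ⁻¹' C) :=
        ((h.measurePreserving_snd.comp hfst).measureReal_preimage hC.nullMeasurableSet).symm
      have hrect : (P ⊗ₘ η).real ((z ⁻¹' E ∩ q ⁻¹' C) ×ˢ D) =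
          (P ⊗ₘ η).real ((z ⁻¹' E) ×ˢ D) * (P ⊗ₘ η).real (q ∘ Prod.fst ⁻¹' C) := by
        rw [compProd_real_prod η (hzE.inter hqC) hD, compProd_real_prod η hzE hD, ← hC_real,
          mul_comm]
        exact h.setIntegral_kernel_eq hS hmix hV hk hκ hE hC hD
      rw [Set.inter_right_comm]
      refine (ENNReal.toReal_eq_toReal_iff' (by finiteness) (by finiteness)).1 ?_
      rw [ENNReal.toReal_mul]
      exact hrect }

end IndependentExtension

end IndependentExtension

section Moments

universe u v

/-- The bounded measurable real functions on `X`, as a multiplicative submonoid: the monomials in a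
set of them form its `Submonoid.closure`. -/
def boundedMeasurable (X : Type*) [MeasurableSpace X] : Submonoid (X → ℝ) where
  carrier := {f | Measurable f ∧ ∃ C, ∀ x, |f x| ≤ C}
  one_mem' := ⟨measurable_const, 1, fun _ => by simp⟩
  mul_mem' := by
    rintro f g ⟨hf, A, hA⟩ ⟨hg, B, hB⟩
    refine ⟨hf.mul hg, A * B, fun x => ?_⟩
    rw [Pi.mul_apply, abs_mul]
    exact mul_le_mul (hA x) (hB x) (abs_nonneg _) ((abs_nonneg _).trans (hA x))

variable {X : Type u} [MeasurableSpace X]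

theorem comp_mem_boundedMeasurable {Y : Type*} [MeasurableSpace Y] {f : X → ℝ}
    (hf : f ∈ boundedMeasurable X) {p : Y → X} (hp : Measurable p) :
    f ∘ p ∈ boundedMeasurable Y :=
  ⟨hf.1.comp hp, hf.2.imp fun _ hC y => hC (p y)⟩

theorem memLp_of_mem_boundedMeasurable {f : X → ℝ} (hf : f ∈ boundedMeasurable X)
    (μ : Measure X) [IsFiniteMeasure μ] (r : ENNReal) : MemLp f r μ :=
  hf.2.elim fun C hC => .of_bound hf.1.aestronglyMeasurable C (.of_forall hC)

/-- The functions `x ↦ ∫ y, f y ∂κ x` with `f` bounded and measurable, that is, pointwise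
versions of the `V f` for the operator `V` with kernel `κ`. -/
def kernelAverages (κ : Kernel X X) : Set (X → ℝ) :=
  (fun (f : X → ℝ) x => ∫ y, f y ∂κ x) '' boundedMeasurable X

theorem closure_kernelAverages_le (κ : Kernel X X) [IsMarkovKernel κ] :
    Submonoid.closure (kernelAverages κ) ≤ boundedMeasurable X := by
  rw [Submonoid.closure_le]
  rintro _ ⟨f, ⟨hf, C, hC⟩, rfl⟩
  refine ⟨hf.stronglyMeasurable.integral_kernel.measurable, C, fun x => ?_⟩
  simpa using norm_integral_le_of_norm_le_const (μ := κ x) (f := f) (.of_forall hC)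

theorem setIntegral_compProd_mul {Ω : Type*} [MeasurableSpace Ω] {P : Measure Ω} [IsFiniteMeasure P]
    (η : Kernel Ω X) [IsMarkovKernel η] {F : Ω → ℝ} (hF : F ∈ boundedMeasurable Ω) {f : X → ℝ}
    (hf : f ∈ boundedMeasurable X) {A : Set Ω} (hA : MeasurableSet A) :
    ∫ w in Prod.fst ⁻¹' A, F w.1 * f w.2 ∂(P ⊗ₘ η) = ∫ ω in A, F ω * ∫ y, f y ∂η ω ∂P := by
  have h_int : Integrable (fun w : Ω × X => F w.1 * f w.2) (P ⊗ₘ η) :=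
    memLp_one_iff_integrable.1 <| memLp_of_mem_boundedMeasurable (mul_mem
      (comp_mem_boundedMeasurable hF measurable_fst)
      (comp_mem_boundedMeasurable hf measurable_snd)) _ 1
  rw [← prod_univ, Measure.setIntegral_compProd hA .univ h_int.integrableOn]
  simp only [Measure.restrict_univ, integral_const_mul]

theorem IndependentExtension.setIntegral_eq_of_mem_closure {Y : Type v} [MeasurableSpace Y]
    {μ : Measure X} {T : X ≃ᵐ X} {hT : MeasurePreserving T μ μ} {ν : Measure Y}
    [IsProbabilityMeasure ν] {S : Y → Y} (hS : MeasurePreserving S ν ν) (hmix : MeasureMixing S ν)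
    {ι : Type*} {k : ι → ℕ} {l : Filter ι} [l.NeBot] {V : Lp ℝ 2 μ →L[ℝ] Lp ℝ 2 μ}
    {κ : Kernel X X} [IsMarkovKernel κ] (hV : IsWeakKoopmanLimit hT k l V) (hk : Tendsto k l atTop)
    (hκ : HasKernel V κ) {G : X → ℝ} (hG : G ∈ Submonoid.closure (kernelAverages κ))
    {C : Set Y} (hC : MeasurableSet C)
    {Ω : Type (max u v)} [MeasurableSpace Ω] {Z : Type u} [MeasurableSpace Z] {R : Z → Z}
    {P : Measure Ω} {W : Ω ≃ᵐ Ω} {p : Ω → X} {q : Ω → Y} {z : Ω → Z}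
    (h : IndependentExtension μ T ν S R P W p q z) {F : Z → ℝ} (hF : F ∈ boundedMeasurable Z) :
    ∫ ω in q ⁻¹' C, F (z ω) * G (p ω) ∂P = ν.real C * ∫ ω, F (z ω) * G (p ω) ∂P := by
  induction hG using Submonoid.closure_induction_left generalizing Ω Z with
  | one =>
    have hq := h.measurePreserving_snd
    simpa [hq.measureReal_preimage hC.nullMeasurableSet] using
      Indep.setIntegral_eq_mul hq.measurable.comap_le h.indepFun.symm h.measurable.aemeasurable
        ⟨C, hC, rfl⟩ hF.1.aestronglyMeasurable
  | mul_left g hg G hG ih =>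
    obtain ⟨f, hf, rfl⟩ := hg
    have := h.isProbabilityMeasure
    have hp := h.measurePreserving_fst.measurable
    have hFf : (fun w : Z × X => F w.1 * f w.2) ∈ boundedMeasurable (Z × X) :=
      mul_mem (comp_mem_boundedMeasurable hF measurable_fst)
        (comp_mem_boundedMeasurable hf measurable_snd)
    have hFG : (fun ω => F (z ω) * G (p ω)) ∈ boundedMeasurable Ω :=
      mul_mem (comp_mem_boundedMeasurable hF h.measurable)
        (comp_mem_boundedMeasurable (closure_kernelAverages_le κ hG) hp)
    have hfiber {A : Set Ω} (hA : MeasurableSet A) :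
        ∫ w in Prod.fst ⁻¹' A, F (z w.1) * f w.2 * G (p w.1) ∂(P ⊗ₘ κ.comap p hp) =
          ∫ ω in A, F (z ω) * ((∫ y, f y ∂κ (p ω)) * G (p ω)) ∂P := by
      simpa only [mul_right_comm, mul_assoc, mul_comm (G _), Kernel.comap_apply] using
        setIntegral_compProd_mul (P := P) (κ.comap p hp) hFG hf hA
    have hadjoin := ih (h.adjoin hS hmix hV hk hκ) hFf
    have huniv := hfiber .univ
    rw [preimage_univ, setIntegral_univ, setIntegral_univ] at huniv
    exact (hfiber (h.measurePreserving_snd.measurable hC)).symm.trans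
      (hadjoin.trans (congrArg _ huniv))

end Moments

section MomentMethod

open BoundedContinuousFunction in
theorem ext_of_forall_mem_closure_integral_eq_s1 {K : Type*} [PseudoEMetricSpace K] [CompactSpace K]
    [MeasurableSpace K] [BorelSpace K] {m₁ m₂ : Measure K} [IsFiniteMeasure m₁]
    [IsFiniteMeasure m₂] {s : Set (BoundedContinuousFunction K ℝ)}
    (hs : ∀ a b, a ≠ b → ∃ f ∈ s, f a ≠ f b)
    (h : ∀ G ∈ Submonoid.closure s, ∫ x, G x ∂m₁ = ∫ x, G x ∂m₂) : m₁ = m₂ := by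
  let A : StarSubalgebra ℝ (BoundedContinuousFunction K ℝ) :=
    { Algebra.adjoin ℝ s with star_mem' := id }
  have hA : (A.map (toContinuousMapStarₐ ℝ)).SeparatesPoints := by
    intro a b hab
    obtain ⟨f, hf, hfab⟩ := hs a b hab
    exact ⟨f, ⟨_, ⟨f, Algebra.subset_adjoin hf, rfl⟩, rfl⟩, hfab⟩
  refine ext_of_forall_mem_subalgebra_integral_eq_of_pseudoEMetric_complete_countable hA
    fun f hf => ?_
  replace hf : f ∈ Submodule.span ℝ (Submonoid.closure s : Set _) :=
    Algebra.adjoin_eq_span ℝ s ▸ hf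
  have h_int (m : Measure K) [IsFiniteMeasure m] (f : BoundedContinuousFunction K ℝ) :
      Integrable f m := f.integrable m
  induction hf using Submodule.span_induction with
  | mem f hf => exact h f hf
  | zero => simp
  | add f g _ _ hf hg => simpa [integral_add, h_int] using congrArg₂ (· + ·) hf hg
  | smul r f _ hf => simpa [integral_const_mul] using congrArg (r * ·) hf

variable {X ι : Type*} [MeasurableSpace X] {m₁ m₂ : Measure X} [IsFiniteMeasure m₁]

theorem map_pi_eq_of_forall_mem_closure_integral_eq [IsFiniteMeasure m₂] [Finite ι]
    {g : ι → X → ℝ} (hg : ∀ i, g i ∈ boundedMeasurable X)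
    (h : ∀ G ∈ Submonoid.closure (range g), ∫ x, G x ∂m₁ = ∫ x, G x ∂m₂) :
    m₁.map (fun x i => g i x) = m₂.map (fun x i => g i x) := by
  have := Fintype.ofFinite ι
  choose hg_meas C hC using hg
  let E := ∀ i, Icc (-C i) (C i)
  let γ (x : X) : E := fun i => ⟨g i x, abs_le.1 (hC i x)⟩
  have hγ : Measurable γ := measurable_pi_lambda _ fun i => (hg_meas i).subtype_mk
  let coord (i : ι) : BoundedContinuousFunction E ℝ :=
    .mkOfCompact ⟨fun e => e i, by fun_prop⟩
  have hcoord (a b : E) (hab : a ≠ b) : ∃ e ∈ range coord, e a ≠ e b := by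
    obtain ⟨i, hi⟩ := Function.ne_iff.1 hab
    exact ⟨coord i, ⟨i, rfl⟩, fun h => hi (Subtype.ext h)⟩
  have hγ_eq : m₁.map γ = m₂.map γ := by
    refine ext_of_forall_mem_closure_integral_eq_s1 hcoord fun e he => ?_
    rw [integral_map hγ.aemeasurable e.continuous.aestronglyMeasurable,
      integral_map hγ.aemeasurable e.continuous.aestronglyMeasurable]
    refine h _ ?_
    induction he using Submonoid.closure_induction with
    | mem e he => obtain ⟨i, rfl⟩ := he; exact Submonoid.subset_closure ⟨i, rfl⟩
    | one => exact one_mem _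
    | mul a b _ _ ha hb => exact mul_mem ha hb
  have hval : Measurable fun (e : E) i => (e i : ℝ) := by fun_prop
  have := congrArg (Measure.map fun (e : E) i => (e i : ℝ)) hγ_eq
  rwa [Measure.map_map hval hγ, Measure.map_map hval hγ] at this

theorem map_pi_eq_of_forall_finset {w : ι → X → ℝ} (hw : ∀ i, Measurable (w i))
    (h : ∀ I : Finset ι, m₁.map (fun x (i : I) => w i x) = m₂.map (fun x (i : I) => w i x)) :
    m₁.map (fun x i => w i x) = m₂.map (fun x i => w i x) := by
  have hw : Measurable fun x i => w i x := measurable_pi_lambda _ hw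
  refine IsProjectiveLimit.unique (P := fun I => m₁.map fun x (i : I) => w i x) (fun I => ?_)
    fun I => ?_
  · exact Measure.map_map (Finset.measurable_restrict I) hw
  · exact (Measure.map_map (Finset.measurable_restrict I) hw).trans (h I).symm

theorem generatedFactor_measure_eq [IsFiniteMeasure m₂] {μ : Measure X} [IsFiniteMeasure μ]
    {V : Lp ℝ 2 μ →L[ℝ] Lp ℝ 2 μ} {κ : Kernel X X} [IsMarkovKernel κ] (hκ : HasKernel V κ)
    (h₁ : m₁ ≪ μ) (h₂ : m₂ ≪ μ)
    (h : ∀ G ∈ Submonoid.closure (kernelAverages κ), ∫ x, G x ∂m₁ = ∫ x, G x ∂m₂)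
    {s : Set X} (hs : MeasurableSet[generatedFactor μ V] s) : m₁ s = m₂ s := by
  have hLp (f : boundedMeasurable X) : MemLp (f : X → ℝ) 2 μ :=
    memLp_of_mem_boundedMeasurable f.2 μ 2
  let w (f : boundedMeasurable X) : X → ℝ := V ((hLp f).toLp f)
  let g (f : boundedMeasurable X) (x : X) : ℝ := ∫ y, (f : X → ℝ) y ∂κ x
  have hg (f : boundedMeasurable X) : g f ∈ kernelAverages κ := ⟨f, f.2, rfl⟩
  have hw (f : boundedMeasurable X) : Measurable (w f) := (Lp.stronglyMeasurable _).measurable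
  have hmap : m₁.map (fun x f => w f x) = m₂.map (fun x f => w f x) := by
    refine map_pi_eq_of_forall_finset hw fun I => ?_
    have hwg : (fun x (f : I) => w f x) =ᵐ[μ] fun x (f : I) => g f x := by
      filter_upwards [ae_all_iff.2 fun f : I => hκ f (hLp f)] with x hx
      exact funext hx
    rw [Measure.map_congr (h₁.ae_le hwg), Measure.map_congr (h₂.ae_le hwg)]
    refine map_pi_eq_of_forall_mem_closure_integral_eq (g := fun f : I => g f)
      (fun f => closure_kernelAverages_le κ (Submonoid.subset_closure (hg f))) fun G hG => ?_
    exact h G (Submonoid.closure_mono (range_subset_iff.2 fun f : I => hg f) hG)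
  have hle : generatedFactor μ V ≤ MeasurableSpace.comap (fun x f => w f x) inferInstance := by
    refine MeasurableSpace.generateFrom_le ?_
    rintro _ ⟨f, ⟨f₀, hf₀, hbound, hf⟩, B, hB, rfl⟩
    obtain rfl : f = (hLp ⟨f₀, hf₀, hbound⟩).toLp f₀ := Lp.ext (hf.trans (MemLp.coeFn_toLp _).symm)
    exact ⟨_, measurable_pi_apply ⟨f₀, hf₀, hbound⟩ hB, rfl⟩
  obtain ⟨B, hB, rfl⟩ := hle s hs
  have hw : Measurable fun x f => w f x := measurable_pi_lambda _ hw
  rw [← Measure.map_apply hw hB, hmap, Measure.map_apply hw hB]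

end MomentMethod

section AEClosure

variable {X : Type*} {m mX : MeasurableSpace X} {μ : Measure X}

/-- The σ-algebra of the measurable sets that agree with a set of `m` up to a `μ`-null set. A map
`T` leaves `m` invariant modulo `μ` when it is measurable from `aeClosure μ m` to `m`. -/
abbrev aeClosure {mX : MeasurableSpace X} (μ : Measure X) (m : MeasurableSpace X) :
    MeasurableSpace X :=
  eventuallyMeasurableSpace m (ae μ) ⊓ mX

theorem le_aeClosure (hm : m ≤ mX) : m ≤ aeClosure μ m :=
  le_inf le_eventuallyMeasurableSpace hm

theorem measurable_aeClosure_aeClosure {T : X → X} (hT : Measure.QuasiMeasurePreserving T μ μ)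
    (h : Measurable[aeClosure μ m, m] T) : Measurable[aeClosure μ m, aeClosure μ m] T := by
  rintro s ⟨⟨t, ht, hst⟩, hs⟩
  obtain ⟨⟨r, hr, htr⟩, -⟩ := h ht
  exact ⟨⟨r, hr, (hT.preimage_ae_eq hst).trans htr⟩, hT.measurable hs⟩

theorem measurable_generatedFactor {T : X → X} {hT : MeasurePreserving T μ μ}
    {V : Lp ℝ 2 μ →L[ℝ] Lp ℝ 2 μ} (hcomm : ∀ f, V (koopman hT f) = koopman hT (V f)) :
    Measurable[aeClosure μ (generatedFactor μ V), generatedFactor μ V] T := by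
  refine measurable_iff_le_map.2 (MeasurableSpace.generateFrom_le ?_)
  rintro _ ⟨f, ⟨f₀, hf₀, ⟨C, hC⟩, hf⟩, B, hB, rfl⟩
  refine ⟨⟨V (koopman hT f) ⁻¹' B, MeasurableSpace.measurableSet_generateFrom
    ⟨koopman hT f, ⟨f₀ ∘ T, hf₀.comp hT.measurable, ⟨C, fun x => hC (T x)⟩, ?_⟩, B, hB, rfl⟩, ?_⟩,
    hT.measurable ((Lp.stronglyMeasurable (V f)).measurable hB)⟩
  · exact (coeFn_koopman hT f).trans (hT.quasiMeasurePreserving.ae_eq_comp hf)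
  · rw [hcomm]
    filter_upwards [coeFn_koopman hT (V f)] with x hx
    exact congrArg (· ∈ B) hx.symm

theorem koopman_symm_comm {T : X ≃ᵐ X} {hT : MeasurePreserving T μ μ}
    {V : Lp ℝ 2 μ →L[ℝ] Lp ℝ 2 μ} (hcomm : ∀ f, V (koopman hT f) = koopman hT (V f))
    (f : Lp ℝ 2 μ) : V (koopman (hT.symm T) f) = koopman (hT.symm T) (V f) := by
  apply (koopman hT).injective
  rw [← hcomm, koopman_koopman_symm, koopman_koopman_symm]

theorem setLIntegral_eq_of_mem_aeClosure {f g : X → ENNReal}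
    (h : ∀ A, MeasurableSet[m] A → ∫⁻ x in A, f x ∂μ = ∫⁻ x in A, g x ∂μ) {A : Set X}
    (hA : MeasurableSet[aeClosure μ m] A) : ∫⁻ x in A, f x ∂μ = ∫⁻ x in A, g x ∂μ := by
  obtain ⟨⟨A', hA', hAA'⟩, -⟩ := hA
  rw [setLIntegral_congr hAA', h A' hA', setLIntegral_congr hAA']

/-- With `φ = E[f | m]` and `ψ = E[f ∘ T | m]`: conditional expectation onto a `T`-invariant
σ-algebra commutes with `T`. -/
theorem comp_ae_eq_of_setLIntegral_eq [IsFiniteMeasure μ] (hm : m ≤ mX) {T : X ≃ᵐ X}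
    (hT : MeasurePreserving T μ μ) (hTm : Measurable[aeClosure μ m, m] T)
    (hTm_symm : Measurable[aeClosure μ m, m] T.symm) {f φ ψ : X → ENNReal} (hf : Measurable f)
    (hφ : Measurable[m] φ) (hψ : Measurable[m] ψ)
    (hφf : ∀ A, MeasurableSet[m] A → ∫⁻ x in A, φ x ∂μ = ∫⁻ x in A, f x ∂μ)
    (hψf : ∀ A, MeasurableSet[m] A → ∫⁻ x in A, ψ x ∂μ = ∫⁻ x in A, f (T x) ∂μ) :
    φ ∘ T =ᵐ[μ] ψ := by
  have hle : aeClosure μ m ≤ mX := inf_le_right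
  have hφT : Measurable[aeClosure μ m] (φ ∘ T) := hφ.comp hTm
  have hψ : Measurable[aeClosure μ m] ψ := hψ.mono (le_aeClosure hm) le_rfl
  refine ae_eq_of_ae_eq_trim (hm := hle) <|
    ae_eq_of_forall_setLIntegral_eq_of_sigmaFinite hφT hψ fun A hA _ => ?_
  have hA' : MeasurableSet[aeClosure μ m] (T.symm ⁻¹' A) :=
    measurable_aeClosure_aeClosure (hT.symm T).quasiMeasurePreserving hTm_symm hA
  have hTA : T ⁻¹' (T.symm ⁻¹' A) = A := T.toEquiv.preimage_symm_preimage A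
  calc ∫⁻ x in A, φ (T x) ∂μ.trim hle
      = ∫⁻ x in T ⁻¹' (T.symm ⁻¹' A), φ (T x) ∂μ := by
        rw [hTA]
        exact setLIntegral_trim hle hφT hA
    _ = ∫⁻ x in T.symm ⁻¹' A, φ x ∂μ :=
        hT.setLIntegral_comp_preimage (hle _ hA') (hφ.mono hm le_rfl)
    _ = ∫⁻ x in T.symm ⁻¹' A, f x ∂μ := setLIntegral_eq_of_mem_aeClosure hφf hA'
    _ = ∫⁻ x in T ⁻¹' (T.symm ⁻¹' A), f (T x) ∂μ :=
        (hT.setLIntegral_comp_preimage (hle _ hA') hf).symm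
    _ = ∫⁻ x in A, ψ x ∂μ.trim hle := by
        rw [hTA, setLIntegral_trim hle hψ hA, setLIntegral_eq_of_mem_aeClosure hψf hA]

end AEClosure

section RelativelyIndependentExtension

variable {X X₁ Y : Type*} [mX : MeasurableSpace X] [StandardBorelSpace X] [Nonempty X]
  [mX₁ : MeasurableSpace X₁] [MeasurableSpace Y] {μ : Measure X} [IsFiniteMeasure μ]
  {π : X → X₁} {ρ : Measure (X₁ × Y)} [IsFiniteMeasure ρ]

theorem condDistrib_comp_ae_eq (hπ : Measurable π) {T : X ≃ᵐ X} (hT : MeasurePreserving T μ μ)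
    (hTπ : Measurable[aeClosure μ (mX₁.comap π), mX₁.comap π] T)
    (hTπ_symm : Measurable[aeClosure μ (mX₁.comap π), mX₁.comap π] T.symm) {B : Set X}
    (hB : MeasurableSet B) :
    ∀ᵐ x ∂μ, condDistrib id π μ (π (T x)) B = condDistrib id π μ (π x) (T ⁻¹' B) := by
  have hmeas {D : Set X} (hD : MeasurableSet D) :
      Measurable[mX₁.comap π] fun x => condDistrib id π μ (π x) D :=
    (Kernel.measurable_coe _ hD).comp (comap_measurable π)
  have h_int {D : Set X} (hD : MeasurableSet D) (A : Set X) (hA : MeasurableSet[mX₁.comap π] A) :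
      ∫⁻ x in A, condDistrib id π μ (π x) D ∂μ = ∫⁻ x in A, D.indicator 1 x ∂μ := by
    rw [setLIntegral_condDistrib_of_measurableSet hπ aemeasurable_id hD hA,
      lintegral_indicator_one hD, Measure.restrict_apply hD, inter_comm, preimage_id]
  exact comp_ae_eq_of_setLIntegral_eq hπ.comap_le hT hTπ hTπ_symm (measurable_one.indicator hB)
    (hmeas hB) (hmeas (T.measurable hB)) (h_int hB) (h_int (T.measurable hB))

theorem measurePreserving_compProd_comap_condDistrib
    (hρ : ρ.map Prod.fst = μ.map π) :
    MeasurePreserving (Prod.map Prod.fst id)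
      (ρ ⊗ₘ (condDistrib id π μ).comap Prod.fst measurable_fst) (μ.map fun x => (π x, x)) := by
  have hmap : Measurable (Prod.map Prod.fst id : (X₁ × Y) × X → X₁ × X) := by fun_prop
  refine ⟨hmap, ?_⟩
  rw [show (μ.map fun x => (π x, x)) = μ.map π ⊗ₘ condDistrib id π μ from
    (compProd_map_condDistrib aemeasurable_id).symm]
  refine Measure.ext_prod fun {s B} hs hB => ?_
  rw [Measure.map_apply hmap (hs.prod hB), preimage_prod_map_prod,
    Measure.compProd_apply_prod (measurable_fst hs) (measurable_id hB),
    Measure.compProd_apply_prod hs hB, ← hρ,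
    setLIntegral_map hs (Kernel.measurable_coe _ hB) measurable_fst]
  rfl

/-- The relatively independent joining over `X₁` of a measure `ρ` on `X₁ × Y` with `(X, μ)`, where
`X` lies over `X₁` via `π`: draw `(x₁, y)` from `ρ`, and then `x` from the conditional law of `μ`
given `π x = x₁`. -/
noncomputable def relIndepExtension (μ : Measure X) [IsFiniteMeasure μ] (π : X → X₁)
    (ρ : Measure (X₁ × Y)) : Measure (X × Y) :=
  (ρ ⊗ₘ (condDistrib id π μ).comap Prod.fst measurable_fst).map fun w => (w.2, w.1.2)

theorem relIndepExtension_prod {B : Set X} (hB : MeasurableSet B) {C : Set Y}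
    (hC : MeasurableSet C) :
    relIndepExtension μ π ρ (B ×ˢ C) =
      ∫⁻ w in Prod.snd ⁻¹' C, condDistrib id π μ w.1 B ∂ρ := by
  have hpre : (fun w : (X₁ × Y) × X => (w.2, w.1.2)) ⁻¹' (B ×ˢ C) = (Prod.snd ⁻¹' C) ×ˢ B := by
    ext
    exact and_comm
  rw [relIndepExtension, Measure.map_apply (by fun_prop) (hB.prod hC), hpre,
    Measure.compProd_apply_prod (measurable_snd hC) hB]
  rfl

theorem map_fst_relIndepExtension (hπ : Measurable π) (hρ : ρ.map Prod.fst = μ.map π) :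
    (relIndepExtension μ π ρ).map Prod.fst = μ := by
  have h := congrArg (Measure.map Prod.snd)
    (measurePreserving_compProd_comap_condDistrib hρ).map_eq
  rw [Measure.map_map (by fun_prop) (by fun_prop), Measure.map_map (by fun_prop) (by fun_prop)] at h
  rw [relIndepExtension, Measure.map_map (by fun_prop) (by fun_prop)]
  exact h.trans Measure.map_id

theorem map_prodMap_relIndepExtension (hπ : Measurable π) (hρ : ρ.map Prod.fst = μ.map π) :
    (relIndepExtension μ π ρ).map (Prod.map π id) = ρ := by
  let Q := ρ ⊗ₘ (condDistrib id π μ).comap Prod.fst measurable_fst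
  have hQ := measurePreserving_compProd_comap_condDistrib hρ
  have hfst : Q.map Prod.fst = ρ := Measure.fst_compProd _ _
  rw [relIndepExtension, Measure.map_map (by fun_prop) (by fun_prop)]
  nth_rw 2 [← hfst]
  refine Measure.ext_prod fun {s C} hs hC => ?_
  rw [Measure.map_apply (by fun_prop) (hs.prod hC), Measure.map_apply measurable_fst (hs.prod hC)]
  have hae : ∀ᵐ w ∂Q, π w.2 ∈ s ↔ w.1.1 ∈ s := by
    have hgraph : ∀ᵐ v ∂μ.map fun x => (π x, x), π v.2 ∈ s ↔ v.1 ∈ s :=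
      (ae_map_iff (by fun_prop) ((hπ.comp measurable_snd hs).iff (measurable_fst hs))).2
        (.of_forall fun _ => Iff.rfl)
    exact hQ.quasiMeasurePreserving.ae hgraph
  refine measure_congr ?_
  filter_upwards [hae] with w hw
  exact propext (and_congr_left' hw)

theorem map_snd_relIndepExtension (hπ : Measurable π) (hρ : ρ.map Prod.fst = μ.map π) :
    (relIndepExtension μ π ρ).map Prod.snd = ρ.map Prod.snd := by
  conv_rhs => rw [← map_prodMap_relIndepExtension hπ hρ]
  rw [Measure.map_map measurable_snd (hπ.prodMap measurable_id)]
  rfl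

theorem eq_prod_of_relIndepExtension_prod (hπ : Measurable π) (hρ : ρ.map Prod.fst = μ.map π)
    {ν : Measure Y} [SigmaFinite ν]
    (h : ∀ s C, MeasurableSet s → MeasurableSet C →
      relIndepExtension μ π ρ ((π ⁻¹' s) ×ˢ C) = μ (π ⁻¹' s) * ν C) :
    ρ = (μ.map π).prod ν := by
  refine (Measure.prod_eq fun s C hs hC => ?_).symm
  conv_lhs => rw [← map_prodMap_relIndepExtension hπ hρ]
  rw [Measure.map_apply (by fun_prop) (hs.prod hC), Measure.map_apply hπ hs]
  exact h s C hs hC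

theorem measurePreserving_comp_of_map_eq {Ω Z : Type*} [MeasurableSpace Ω] [MeasurableSpace Z]
    {P : Measure Ω} {ρ : Measure Z} [NeZero ρ] {g : Ω → Z} {τ : Z → Z}
    (hg : MeasurePreserving g P ρ) (hτ : ρ.map τ = ρ) (hτg : Measurable (τ ∘ g)) :
    MeasurePreserving (τ ∘ g) P ρ := by
  have hτ_meas : AEMeasurable τ (P.map g) :=
    .of_map_ne_zero (by rw [hg.map_eq, hτ]; exact NeZero.ne ρ)
  exact ⟨hτg, by rw [← AEMeasurable.map_map_of_aemeasurable hτ_meas hg.aemeasurable, hg.map_eq, hτ]⟩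

theorem measurePreserving_relIndepExtension [NeZero ρ] (hπ : Measurable π)
    (hρ : ρ.map Prod.fst = μ.map π)
    {T : X ≃ᵐ X} (hT : MeasurePreserving T μ μ) {T₁ : X₁ → X₁} (hπT : Function.Semiconj π T T₁)
    (hTπ : Measurable[aeClosure μ (mX₁.comap π), mX₁.comap π] T)
    (hTπ_symm : Measurable[aeClosure μ (mX₁.comap π), mX₁.comap π] T.symm)
    {S : Y → Y} (hS : Measurable S) (hρTS : ρ.map (Prod.map T₁ S) = ρ) :
    MeasurePreserving (Prod.map T S) (relIndepExtension μ π ρ) (relIndepExtension μ π ρ) := by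
  let P := relIndepExtension μ π ρ
  have hfst : MeasurePreserving Prod.fst P μ := ⟨measurable_fst, map_fst_relIndepExtension hπ hρ⟩
  have hπP : MeasurePreserving (Prod.map π id) P ρ :=
    ⟨hπ.prodMap measurable_id, map_prodMap_relIndepExtension hπ hρ⟩
  have hπTS : MeasurePreserving (Prod.map (π ∘ T) S) P ρ := by
    have hcomp : Prod.map (π ∘ T) S = Prod.map T₁ S ∘ Prod.map π id := by
      rw [hπT.comp_eq, Prod.map_comp_map, Function.comp_id]
    exact hcomp ▸ measurePreserving_comp_of_map_eq hπP hρTS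
      (hcomp ▸ (hπ.comp T.measurable).prodMap hS)
  have : IsFiniteMeasure P := Measure.isFiniteMeasure_map _ _
  have hTS : Measurable (Prod.map T S) := T.measurable.prodMap hS
  refine ⟨hTS, (Measure.ext_prod fun {B C} hB hC => ?_).symm⟩
  have hΦ {D : Set X} (hD : MeasurableSet D) :
      Measurable fun w : X₁ × Y => condDistrib id π μ w.1 D :=
    (Kernel.measurable_coe _ hD).comp measurable_fst
  have hae := hfst.quasiMeasurePreserving.ae (condDistrib_comp_ae_eq hπ hT hTπ hTπ_symm hB)
  calc P (B ×ˢ C)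
      = ∫⁻ w in Prod.snd ⁻¹' C, condDistrib id π μ w.1 B ∂ρ := relIndepExtension_prod hB hC
    _ = ∫⁻ w in Prod.snd ⁻¹' (S ⁻¹' C), condDistrib id π μ (π (T w.1)) B ∂P :=
        (hπTS.setLIntegral_comp_preimage (measurable_snd hC) (hΦ hB)).symm
    _ = ∫⁻ w in Prod.snd ⁻¹' (S ⁻¹' C), condDistrib id π μ (π w.1) (T ⁻¹' B) ∂P :=
        lintegral_congr_ae (ae_restrict_of_ae hae)
    _ = ∫⁻ w in Prod.snd ⁻¹' (S ⁻¹' C), condDistrib id π μ w.1 (T ⁻¹' B) ∂ρ :=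
        hπP.setLIntegral_comp_preimage (measurable_snd (hS hC)) (hΦ (T.measurable hB))
    _ = P.map (Prod.map T S) (B ×ˢ C) := by
        rw [Measure.map_apply hTS (hB.prod hC), preimage_prod_map_prod]
        exact (relIndepExtension_prod (T.measurable hB) (hS hC)).symm

end RelativelyIndependentExtension

section Disjointness

theorem IsWeakKoopmanLimit.of_tendsto_integral {X ι : Type*} [MeasurableSpace X] {μ : Measure X}
    {T : X → X} (hT : MeasurePreserving T μ μ) {k : ι → ℕ} {l : Filter ι}
    {V : Lp ℝ 2 μ →L[ℝ] Lp ℝ 2 μ}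
    (hV : ∀ f g : Lp ℝ 2 μ,
      Tendsto (fun j => ∫ x, f (T^[k j] x) * g x ∂μ) l (𝓝 (inner ℝ (V f) g))) :
    IsWeakKoopmanLimit hT k l V := fun f g =>
  (hV f g).congr fun j =>
    (inner_eq_integral_of_ae_eq (coeFn_koopman_iterate hT (k j) f) (ae_eq_refl g)).symm

theorem measure_prod_eq_of_generatedFactor {X Y ι : Type*} [MeasurableSpace X]
    [StandardBorelSpace X] [MeasurableSpace Y] {μ : Measure X} [IsProbabilityMeasure μ]
    {ν : Measure Y} [IsProbabilityMeasure ν] {T : X ≃ᵐ X} {hT : MeasurePreserving T μ μ}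
    {k : ι → ℕ} {l : Filter ι} [l.NeBot] {V : Lp ℝ 2 μ →L[ℝ] Lp ℝ 2 μ}
    (hV : IsWeakKoopmanLimit hT k l V) (hk : Tendsto k l atTop) {S : Y ≃ᵐ Y}
    (hS : MeasurePreserving S ν ν) (hmix : MeasureMixing S ν) {P : Measure (X × Y)}
    (hP : MeasurePreserving (Prod.map T S) P P) (hfst : MeasurePreserving Prod.fst P μ)
    (hsnd : MeasurePreserving Prod.snd P ν) {s : Set X} (hs : MeasurableSet[generatedFactor μ V] s)
    {C : Set Y} (hC : MeasurableSet C) : P (s ×ˢ C) = μ s * ν C := by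
  obtain ⟨κ, _, hκ⟩ := hV.exists_kernel
  let z (_ : X × Y) : PUnit := PUnit.unit
  have : IsProbabilityMeasure P :=
    have : IsProbabilityMeasure (P.map Prod.fst) := by rwa [hfst.map_eq]
    Measure.isProbabilityMeasure_of_map Prod.fst
  have hext : IndependentExtension μ T ν S id P (T.prodCongr S) Prod.fst Prod.snd z :=
    { measurePreserving := hP
      measurePreserving_fst := hfst
      measurePreserving_snd := hsnd
      measurable := measurable_const
      measurable_action := measurable_id
      semiconj_fst := fun _ => rfl
      semiconj_snd := fun _ => rfl
      semiconj := fun _ => rfl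
      indepFun := indepFun_const_left _ _ }
  have hac : (P.restrict (Prod.snd ⁻¹' C)).map Prod.fst ≪ μ :=
    hfst.map_eq ▸ Measure.restrict_le_self.absolutelyContinuous.map measurable_fst
  have : IsFiniteMeasure (ν C • μ) := Measure.smul_finite μ (measure_ne_top ν C)
  have hmoment (G : X → ℝ) (hG : G ∈ Submonoid.closure (kernelAverages κ)) :
      ∫ x, G x ∂(P.restrict (Prod.snd ⁻¹' C)).map Prod.fst = ∫ x, G x ∂(ν C • μ) := by
    have hGm {m : Measure X} : AEStronglyMeasurable G m :=
      (closure_kernelAverages_le κ hG).1.aestronglyMeasurable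
    rw [integral_map measurable_fst.aemeasurable hGm, integral_smul_measure, ← hfst.map_eq,
      integral_map measurable_fst.aemeasurable hGm]
    simpa [← measureReal_def] using
      hext.setIntegral_eq_of_mem_closure hS hmix hV hk hκ hG hC (one_mem _)
  have h := generatedFactor_measure_eq hκ hac Measure.smul_absolutelyContinuous hmoment hs
  rw [Measure.map_apply measurable_fst (generatedFactor_le μ V s hs),
    Measure.restrict_apply (measurable_fst (generatedFactor_le μ V s hs))] at h
  exact h.trans (mul_comm _ _)

end Disjointness

/-- If the Koopman powers `U_T^{k_j}` of an automorphism `T` of a standard Borel probability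
space converge weakly to `V`, then the factor `𝓐` generated by the image of `V` is disjoint
from every mixing automorphism: every `(T × S)`-invariant probability measure on
`(X × Y, 𝓐 ⊗ 𝓒)` with marginals `μ|𝓐` and `ν` is the product measure. -/
theorem generatedFactor_disjoint_from_mixing
    {X : Type*} [mX : MeasurableSpace X] [StandardBorelSpace X]
    (μ : Measure X) [IsProbabilityMeasure μ]
    (T : X ≃ᵐ X) (hT : MeasurePreserving T μ μ)
    (k : ℕ → ℕ) (hk : StrictMono k)
    (V : Lp ℝ 2 μ →L[ℝ] Lp ℝ 2 μ)
    (hV : ∀ f g : Lp ℝ 2 μ,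
      Tendsto (fun j => ∫ x, f ((⇑T)^[k j] x) * g x ∂μ) atTop (𝓝 (@inner ℝ _ _ (V f) g))) :
    ∀ (Y : Type*) (mY : MeasurableSpace Y) (ν : Measure Y),
      IsProbabilityMeasure ν →
      ∀ S : Y ≃ᵐ Y, MeasurePreserving S ν ν → MeasureMixing (⇑S) ν →
      ∀ ρ : @Measure (X × Y) ((generatedFactor μ V).prod mY),
        @IsProbabilityMeasure _ ((generatedFactor μ V).prod mY) ρ →
        @Measure.map _ _ ((generatedFactor μ V).prod mY) ((generatedFactor μ V).prod mY)
          (Prod.map ⇑T ⇑S) ρ = ρ →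
        @Measure.map _ _ ((generatedFactor μ V).prod mY) (generatedFactor μ V) Prod.fst ρ
          = μ.trim (generatedFactor_le μ V) →
        @Measure.map _ _ ((generatedFactor μ V).prod mY) mY Prod.snd ρ = ν →
        ρ = @Measure.prod _ _ (generatedFactor μ V) mY (μ.trim (generatedFactor_le μ V)) ν := by
  intro Y mY ν hν S hS hmix ρ hρ hinv hfst hsnd
  have hlim := IsWeakKoopmanLimit.of_tendsto_integral hT hV
  have : Nonempty X := μ.nonempty_of_neZero
  have hid : Measurable[mX, generatedFactor μ V] id := measurable_id'' (generatedFactor_le μ V)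
  have hT𝓐 := measurable_generatedFactor hlim.commute
  have hT𝓐_symm := measurable_generatedFactor (koopman_symm_comm hlim.commute)
  rw [← MeasurableSpace.comap_id (m := generatedFactor μ V)] at hT𝓐 hT𝓐_symm
  rw [trim_eq_map (generatedFactor_le μ V)] at hfst ⊢
  have hP := measurePreserving_relIndepExtension (mX₁ := generatedFactor μ V) hid hfst hT
    (T₁ := T) (fun _ => rfl) hT𝓐 hT𝓐_symm hS.measurable hinv
  refine eq_prod_of_relIndepExtension_prod (mX₁ := generatedFactor μ V) hid hfst
    fun s C hs hC => measure_prod_eq_of_generatedFactor hlim hk.tendsto_atTop hS hmix hP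
    ⟨measurable_fst, map_fst_relIndepExtension (mX₁ := generatedFactor μ V) hid hfst⟩
    ⟨measurable_snd, (map_snd_relIndepExtension (mX₁ := generatedFactor μ V) hid hfst).trans hsnd⟩
    hs hC
end

section
/- Let T be a measure-preserving automorphism of a probability space (X, μ), let (k_j) be a strictly increasing sequence of natural numbers such that the Koopman powers U_T^{k_j} converge weakly to a bounded operator V on L²(μ). Let S be a mixing measure-preserving automorphism of a probability space (Y, ν) and let η be a joining of (X, μ, T) and (Y, ν, S). Then for every n ≥ 1, all bounded measurable f₁, …, fₙ : X → ℝ and every bounded measurable g : Y → ℝ one has ∫_{X×Y} (∏_{i=1}^n (V f_i)(x)) g(y) dη(x,y) = (∫_X ∏_{i=1}^n (V f_i) dμ) · (∫_Y g dν). -/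
/-!
Write the integral of `∏ (V fᵢ)(x) g(y)`, with `g` of mean zero, as the limit along `k` of
`a(n) = ∫ f₀(Tⁿ x) ∏_{i ∈ A} (V fᵢ)(x) g(y) dη`. Invariance of `η` and the Cauchy–Schwarz
inequality bound `(∑ₘ a(sₘ))²` by a double sum of integrals
`∫ ∏_{i ∈ A} ψᵢ(x) g(S^b y) g(S^c y) dη`, in which each `ψᵢ` is itself a weak limit along `k`,
namely that of `fᵢ(T^b x) fᵢ(T^c x)`. By induction on `A` these integrals split and leave only the
correlations of `g`, which mixing makes small as soon as the times `sₘ` are far apart.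
-/

open MeasureTheory Filter Topology

open scoped ENNReal NNReal RealInnerProductSpace

section Integrals

variable {X Z ι : Type*} [MeasurableSpace X] [MeasurableSpace Z] {μ : Measure X} {η : Measure Z}
  {T : X → X}

lemma integral_comp_of_measurePreserving_s2 {π : Z → X} (hπ : MeasurePreserving π η μ) {u : X → ℝ}
    (hu : AEStronglyMeasurable u μ) : ∫ z, u (π z) ∂η = ∫ x, u x ∂μ := by
  rw [← hπ.map_eq] at hu ⊢
  exact (integral_map hπ.aemeasurable hu).symm

lemma memLp_top_mul {u v : X → ℝ} (hu : MemLp u ∞ μ) (hv : MemLp v ∞ μ) :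
    MemLp (fun x => u x * v x) ∞ μ := hv.mul' hu

lemma memLp_top_finset_prod {u : ι → X → ℝ} (hu : ∀ i, MemLp (u i) ∞ μ)
    (A : Finset ι) : MemLp (fun x => ∏ i ∈ A, u i x) ∞ μ := by
  simpa using MemLp.prod' (s := A) (p := fun _ => ∞) fun i _ => hu i

lemma memLp_top_comp_iterate_mul_comp_iterate (hT : MeasurePreserving T μ μ) {f : X → ℝ}
    (hf : MemLp f ∞ μ) (a b : ℕ) : MemLp (fun x => f (T^[a] x) * f (T^[b] x)) ∞ μ :=
  memLp_top_mul (hf.comp_measurePreserving (hT.iterate a))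
    (hf.comp_measurePreserving (hT.iterate b))

lemma ae_abs_comp_iterate_mul_comp_iterate_le (hT : MeasurePreserving T μ μ) {f : X → ℝ}
    (hf : MemLp f ∞ μ) (a b : ℕ) :
    ∀ᵐ x ∂μ, |f (T^[a] x) * f (T^[b] x)| ≤ lpNorm f ∞ μ ^ 2 := by
  have hle (n : ℕ) : ∀ᵐ x ∂μ, |f (T^[n] x)| ≤ lpNorm f ∞ μ :=
    (hT.iterate n).quasiMeasurePreserving.ae (ae_le_lpNorm_exponent_top hf)
  filter_upwards [hle a, hle b] with x ha hb
  rw [abs_mul, sq]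
  exact mul_le_mul ha hb (abs_nonneg _) lpNorm_nonneg

lemma abs_integral_finset_prod_le [IsProbabilityMeasure μ] {A : Finset ι} {ψ : ι → X → ℝ}
    {c : ι → ℝ} (hψ : ∀ i ∈ A, ∀ᵐ x ∂μ, |ψ i x| ≤ c i) :
    |∫ x, ∏ i ∈ A, ψ i x ∂μ| ≤ ∏ i ∈ A, c i := by
  have hprod : ∀ᵐ x ∂μ, ‖∏ i ∈ A, ψ i x‖ ≤ ∏ i ∈ A, c i := by
    filter_upwards [(Finset.eventually_all A).2 hψ] with x hx
    rw [Real.norm_eq_abs, Finset.abs_prod]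
    exact Finset.prod_le_prod (fun i _ => abs_nonneg _) hx
  simpa using norm_integral_le_of_norm_le_const hprod

lemma integral_comp_iterate_mul_comp_iterate (hT : MeasurePreserving T μ μ) {f : X → ℝ}
    (hf : AEStronglyMeasurable f μ) (a b : ℕ) :
    ∫ x, f (T^[a] x) * f (T^[b] x) ∂μ = ∫ x, f x * f (T^[Nat.dist a b] x) ∂μ := by
  wlog hab : a ≤ b generalizing a b
  · simpa only [mul_comm, Nat.dist_comm] using this b a (by lia)
  obtain ⟨n, rfl⟩ := Nat.exists_eq_add_of_le' hab
  simp only [Nat.dist_eq_sub_of_le hab, Nat.add_sub_cancel, Function.iterate_add_apply]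
  exact integral_comp_of_measurePreserving_s2 (hT.iterate a)
    (hf.mul (hf.comp_measurePreserving (hT.iterate n)))

end Integrals

section WeakLimits

variable {X : Type*} [MeasurableSpace X] {μ : Measure X}

lemma inner_toLp_toLp_s2 {u v : X → ℝ} (hu : MemLp u 2 μ) (hv : MemLp v 2 μ) :
    ⟪hu.toLp u, hv.toLp v⟫ = ∫ x, u x * v x ∂μ := by
  rw [L2.inner_def]
  refine integral_congr_ae ?_
  filter_upwards [hu.coeFn_toLp, hv.coeFn_toLp] with x hux hvx
  rw [hux, hvx, Real.inner_apply]

lemma tendsto_apply_of_tendsto_apply_indicator {p : ℝ≥0∞} [Fact (1 ≤ p)] (hp : p ≠ ∞)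
    [IsFiniteMeasure μ] {L : ℕ → Lp ℝ p μ →L[ℝ] ℝ} {L' : Lp ℝ p μ →L[ℝ] ℝ} {C : ℝ≥0}
    (hL : ∀ n, ‖L n‖₊ ≤ C)
    (h : ∀ (s : Set X) (hs : MeasurableSet s),
      Tendsto (fun n => L n (indicatorConstLp p hs (measure_ne_top μ s) 1)) atTop
        (𝓝 (L' (indicatorConstLp p hs (measure_ne_top μ s) 1)))) (v : Lp ℝ p μ) :
    Tendsto (fun n => L n v) atTop (𝓝 (L' v)) := by
  induction v using Lp.induction hp with
  | @indicatorConst c s hs hμs =>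
    have hc : (Lp.simpleFunc.indicatorConst p hs hμs.ne c : Lp ℝ p μ) =
        c • indicatorConstLp p hs (measure_ne_top μ s) 1 := by
      rw [Lp.simpleFunc.coe_indicatorConst, indicatorConstLp, indicatorConstLp,
        ← MemLp.toLp_const_smul, MemLp.toLp_eq_toLp_iff]
      exact .of_forall fun x => by by_cases hx : x ∈ s <;> simp [hx]
    simp only [hc, map_smul]
    exact (h _ hs).const_smul c
  | add hf hg _ ihf ihg => simpa only [map_add] using ihf.add ihg
  | isClosed =>
    have hLip : ∀ n, LipschitzWith C (L n) := fun n => (L n).lipschitz.weaken (hL n)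
    exact (LipschitzWith.uniformEquicontinuous _ C hLip).equicontinuous.isClosed_setOfPred_tendsto
      L'.continuous

lemma tendsto_inner_of_tendsto_inner_indicator [IsFiniteMeasure μ]
    {U : ℕ → Lp ℝ 2 μ →L[ℝ] Lp ℝ 2 μ} {W : Lp ℝ 2 μ →L[ℝ] Lp ℝ 2 μ} {C : ℝ≥0}
    (hU : ∀ n, ‖U n‖₊ ≤ C)
    (h : ∀ (s t : Set X) (hs : MeasurableSet s) (ht : MeasurableSet t),
      Tendsto (fun n => ⟪indicatorConstLp 2 hs (measure_ne_top μ s) (1 : ℝ),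
          U n (indicatorConstLp 2 ht (measure_ne_top μ t) 1)⟫) atTop
        (𝓝 ⟪indicatorConstLp 2 hs (measure_ne_top μ s) (1 : ℝ),
          W (indicatorConstLp 2 ht (measure_ne_top μ t) 1)⟫)) (u v : Lp ℝ 2 μ) :
    Tendsto (fun n => ⟪u, U n v⟫) atTop (𝓝 ⟪u, W v⟫) := by
  have hleft (s : Set X) (hs : MeasurableSet s) (v : Lp ℝ 2 μ) :
      Tendsto (fun n => ⟪indicatorConstLp 2 hs (measure_ne_top μ s) (1 : ℝ), U n v⟫) atTop
        (𝓝 ⟪indicatorConstLp 2 hs (measure_ne_top μ s) (1 : ℝ), W v⟫) := by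
    set e : Lp ℝ 2 μ := indicatorConstLp 2 hs (measure_ne_top μ s) 1
    refine tendsto_apply_of_tendsto_apply_indicator ENNReal.ofNat_ne_top
      (L := fun n => innerSL ℝ e ∘L U n) (L' := innerSL ℝ e ∘L W) (C := ‖e‖₊ * C)
      (fun n => ?_) (fun t ht => h s t hs ht) v
    calc ‖innerSL ℝ e ∘L U n‖₊ ≤ ‖innerSL ℝ e‖₊ * ‖U n‖₊ :=
          ContinuousLinearMap.opNNNorm_comp_le _ _
      _ = ‖e‖₊ * ‖U n‖₊ := by congr 1; exact NNReal.eq (innerSL_apply_norm ℝ e)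
      _ ≤ ‖e‖₊ * C := by gcongr; exact hU n
  simp only [real_inner_comm _ u]
  refine tendsto_apply_of_tendsto_apply_indicator ENNReal.ofNat_ne_top
    (L := fun n => innerSL ℝ (U n v)) (L' := innerSL ℝ (W v)) (C := C * ‖v‖₊)
    (fun n => ?_) (fun s hs => ?_) u
  · calc ‖innerSL ℝ (U n v)‖₊ = ‖U n v‖₊ := NNReal.eq (innerSL_apply_norm ℝ _)
      _ ≤ ‖U n‖₊ * ‖v‖₊ := (U n).le_opNNNorm v
      _ ≤ C * ‖v‖₊ := by gcongr; exact hU n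
  · simpa only [innerSL_apply_apply, real_inner_comm] using hleft s hs v

end WeakLimits

section Mixing

variable {Y : Type*} [MeasurableSpace Y] {ν : Measure Y} [IsProbabilityMeasure ν] {S : Y → Y}

lemma MeasureMixing.tendsto_measureReal (hmix : MeasureMixing S ν) {A B : Set Y}
    (hA : MeasurableSet A) (hB : MeasurableSet B) :
    Tendsto (fun n => ν.real (A ∩ S^[n] ⁻¹' B)) atTop (𝓝 (ν.real A * ν.real B)) := by
  simp only [Measure.real, ← ENNReal.toReal_mul]
  exact (ENNReal.tendsto_toReal (by finiteness)).comp (hmix A B hA hB)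

theorem MeasureMixing.tendsto_integral_mul_comp_iterate (hmix : MeasureMixing S ν)
    (hS : MeasurePreserving S ν ν) {u v : Y → ℝ} (hu : MemLp u 2 ν) (hv : MemLp v 2 ν) :
    Tendsto (fun n => ∫ y, u y * v (S^[n] y) ∂ν) atTop (𝓝 ((∫ y, u y ∂ν) * ∫ y, v y ∂ν)) := by
  let one : Lp ℝ 2 ν := indicatorConstLp 2 .univ (measure_ne_top ν Set.univ) 1
  let U (n : ℕ) := Lp.compMeasurePreservingₗᵢ ℝ (E := ℝ) (p := 2) S^[n] (hS.iterate n)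
  have hone {w : Y → ℝ} (hw : MemLp w 2 ν) : ⟪one, hw.toLp w⟫ = ∫ y, w y ∂ν := by
    rw [L2.inner_indicatorConstLp_one, setIntegral_univ, integral_congr_ae hw.coeFn_toLp]
  have hlim := tendsto_inner_of_tendsto_inner_indicator (C := 1)
    (U := fun n => (U n).toContinuousLinearMap)
    (W := (innerSL ℝ one).smulRight one)
    (fun n => (U n).norm_toContinuousLinearMap_le)
    (fun A B hA hB => by
      have hU (n : ℕ) : U n (indicatorConstLp 2 hB (measure_ne_top ν B) 1) =
          indicatorConstLp 2 (hS.measurable.iterate n hB) (measure_ne_top ν _) 1 := rfl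
      simp only [LinearIsometry.coe_toContinuousLinearMap, hU,
        ContinuousLinearMap.smulRight_apply, innerSL_apply_apply, inner_smul_right, one,
        L2.real_inner_indicatorConstLp_one_indicatorConstLp_one, Set.univ_inter, Set.inter_univ,
        mul_comm (ν.real B)]
      exact hmix.tendsto_measureReal hA hB) (hu.toLp u) (hv.toLp v)
  simp only [ContinuousLinearMap.smulRight_apply, innerSL_apply_apply, inner_smul_right,
    real_inner_comm one, hone, mul_comm (∫ y, v y ∂ν)] at hlim
  exact hlim.congr fun n => inner_toLp_toLp_s2 hu (hv.comp_measurePreserving (hS.iterate n))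

end Mixing

section KoopmanLimit

variable {X Z : Type*} [MeasurableSpace X] [MeasurableSpace Z] {μ : Measure X} {η : Measure Z}
  {T : X → X} {R : Z → Z} {k : ℕ → ℕ} {f φ : X → ℝ}

/-- `φ` is the weak limit in `L²(μ)` of the translates `f ∘ T^{k_j}`. Stated for functions rather
than for classes in `Lp`, so that pointwise products can be formed freely. -/
def IsKoopmanLimit (μ : Measure X) (T : X → X) (k : ℕ → ℕ) (f φ : X → ℝ) : Prop :=
  MemLp φ 2 μ ∧ ∀ w, MemLp w 2 μ →
    Tendsto (fun j => ∫ x, f (T^[k j] x) * w x ∂μ) atTop (𝓝 (∫ x, φ x * w x ∂μ))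

lemma exists_integral_comp_mul_eq {π : Z → X} (hπ : MeasurePreserving π η μ) {w : Z → ℝ}
    (hw : MemLp w 2 η) :
    ∃ w' : X → ℝ, MemLp w' 2 μ ∧
      ∀ v, MemLp v 2 μ → ∫ z, v (π z) * w z ∂η = ∫ x, v x * w' x ∂μ := by
  let U := (Lp.compMeasurePreservingₗᵢ ℝ (E := ℝ) (p := 2) π hπ).toContinuousLinearMap
  let w' : Lp ℝ 2 μ := U.adjoint (hw.toLp w)
  refine ⟨w', Lp.memLp w', fun v hv => ?_⟩
  calc ∫ z, v (π z) * w z ∂η = ⟪U (hv.toLp v), hw.toLp w⟫ :=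
        (inner_toLp_toLp_s2 (hv.comp_measurePreserving hπ) hw).symm
    _ = ⟪hv.toLp v, (Lp.memLp w').toLp w'⟫ := by
        rw [Lp.toLp_coeFn, ContinuousLinearMap.adjoint_inner_right]
    _ = ∫ x, v x * w' x ∂μ := inner_toLp_toLp_s2 hv (Lp.memLp w')

lemma IsKoopmanLimit.comp_measurePreserving (h : IsKoopmanLimit μ T k f φ) (hf : MemLp f 2 μ)
    (hT : MeasurePreserving T μ μ) {π : Z → X} (hπ : MeasurePreserving π η μ)
    (hsemi : Function.Semiconj π R T) : IsKoopmanLimit η R k (f ∘ π) (φ ∘ π) := by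
  refine ⟨h.1.comp_measurePreserving hπ, fun w hw => ?_⟩
  obtain ⟨w', hw', hint⟩ := exists_integral_comp_mul_eq hπ hw
  have htranslate (j : ℕ) :
      ∫ z, (f ∘ π) (R^[k j] z) * w z ∂η = ∫ x, f (T^[k j] x) * w' x ∂μ := by
    simpa only [Function.comp_apply, (hsemi.iterate_right (k j)).eq] using
      hint _ (hf.comp_measurePreserving (hT.iterate (k j)))
  rw [show ∫ z, (φ ∘ π) z * w z ∂η = ∫ x, φ x * w' x ∂μ from hint φ h.1]
  simpa only [htranslate] using h.2 w' hw'

lemma IsKoopmanLimit.ae_le [IsFiniteMeasure μ] (h : IsKoopmanLimit μ T k f φ)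
    (hT : MeasurePreserving T μ μ) (hf : MemLp f 2 μ) {C : ℝ} (hfC : ∀ᵐ x ∂μ, f x ≤ C) :
    ∀ᵐ x ∂μ, φ x ≤ C := by
  refine ae_le_of_forall_setIntegral_le (h.1.integrable one_le_two) (integrable_const C)
    fun s hs _ => ?_
  have hmul (u : X → ℝ) : (fun x => u x * s.indicator 1 x) = s.indicator u := by
    ext x; by_cases hx : x ∈ s <;> simp [hx]
  have hlim := h.2 (s.indicator 1) ((memLp_const 1).indicator hs)
  simp only [hmul φ, hmul fun x => f (T^[k _] x), integral_indicator hs] at hlim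
  refine le_of_tendsto' hlim fun j => setIntegral_mono_ae ?_ (integrable_const C).integrableOn ?_
  · exact ((hf.comp_measurePreserving (hT.iterate (k j))).integrable one_le_two).integrableOn
  · exact (hT.iterate (k j)).quasiMeasurePreserving.ae hfC

lemma IsKoopmanLimit.neg (h : IsKoopmanLimit μ T k f φ) : IsKoopmanLimit μ T k (-f) (-φ) :=
  ⟨h.1.neg, fun w hw => by
    simpa only [Pi.neg_apply, neg_mul, integral_neg] using (h.2 w hw).neg⟩

lemma IsKoopmanLimit.ae_abs_le [IsFiniteMeasure μ] (h : IsKoopmanLimit μ T k f φ)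
    (hT : MeasurePreserving T μ μ) (hf : MemLp f 2 μ) {C : ℝ} (hfC : ∀ᵐ x ∂μ, |f x| ≤ C) :
    ∀ᵐ x ∂μ, |φ x| ≤ C := by
  filter_upwards [h.ae_le hT hf (hfC.mono fun x hx => (abs_le'.1 hx).1),
    h.neg.ae_le hT hf.neg (hfC.mono fun x hx => (abs_le'.1 hx).2)] with x hx hx'
  exact abs_le'.2 ⟨hx, hx'⟩

lemma IsKoopmanLimit.memLp_top [IsFiniteMeasure μ] (h : IsKoopmanLimit μ T k f φ)
    (hT : MeasurePreserving T μ μ) (hf : MemLp f ∞ μ) : MemLp φ ∞ μ :=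
  memLp_top_of_bound h.1.1 _ (h.ae_abs_le hT (hf.mono_exponent le_top)
    (ae_le_lpNorm_exponent_top hf))

lemma isKoopmanLimit_of_tendsto_inner (hT : MeasurePreserving T μ μ) {V : Lp ℝ 2 μ → Lp ℝ 2 μ}
    (hV : ∀ f g : Lp ℝ 2 μ,
      Tendsto (fun j => ∫ x, f (T^[k j] x) * g x ∂μ) atTop (𝓝 ⟪V f, g⟫))
    {f : X → ℝ} (hf : MemLp f 2 μ) : IsKoopmanLimit μ T k f (V (hf.toLp f)) := by
  refine ⟨Lp.memLp _, fun w hw => ?_⟩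
  rw [← inner_toLp_toLp_s2 (Lp.memLp _) hw, Lp.toLp_coeFn]
  refine (hV _ (hw.toLp w)).congr fun j => integral_congr_ae ?_
  filter_upwards [(hT.iterate (k j)).quasiMeasurePreserving.ae hf.coeFn_toLp, hw.coeFn_toLp]
    with x hfx hwx
  rw [hfx, hwx]

end KoopmanLimit

section CauchySchwarz

variable {Z M : Type*} [MeasurableSpace Z] [Fintype M] {η : Measure Z} {R : Z → Z}

lemma sq_sum_integral_mul_le {f : Z → ℝ} (hf : MemLp f 2 η) {v : M → Z → ℝ}
    (hv : ∀ m, MemLp (v m) 2 η) :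
    (∑ m, ∫ z, f z * v m z ∂η) ^ 2 ≤
      (∫ z, f z * f z ∂η) * ∑ m, ∑ l, ∫ z, v m z * v l z ∂η := by
  let F := hf.toLp f
  let G := ∑ m, (hv m).toLp (v m)
  calc (∑ m, ∫ z, f z * v m z ∂η) ^ 2 = ⟪F, G⟫ * ⟪F, G⟫ := by
        simp only [F, G, inner_sum, inner_toLp_toLp_s2, sq]
    _ ≤ ⟪F, F⟫ * ⟪G, G⟫ := real_inner_mul_inner_self_le F G
    _ = (∫ z, f z * f z ∂η) * ∑ m, ∑ l, ∫ z, v m z * v l z ∂η := by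
        simp only [F, G, sum_inner, inner_sum, inner_toLp_toLp_s2]
        rw [Finset.sum_comm]

lemma sq_sum_integral_comp_iterate_mul_le (hR : MeasurePreserving R η η) {s a : M → ℕ} {K : ℕ}
    (hsa : ∀ m, s m + a m = K) {f w : Z → ℝ} (hf : MemLp f 2 η) (hw : MemLp w 2 η) :
    (∑ m, ∫ z, f (R^[s m] z) * w z ∂η) ^ 2 ≤
      (∫ z, f z * f z ∂η) * ∑ m, ∑ l, ∫ z, w (R^[a m] z) * w (R^[a l] z) ∂η := by
  have hfn (n : ℕ) : MemLp (fun z => f (R^[n] z)) 2 η := hf.comp_measurePreserving (hR.iterate n)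
  have hshift (m : M) :
      ∫ z, f (R^[s m] z) * w z ∂η = ∫ z, f (R^[K] z) * w (R^[a m] z) ∂η := by
    simp only [← hsa m, Function.iterate_add_apply]
    exact (integral_comp_of_measurePreserving_s2 (hR.iterate (a m))
      ((hfn (s m)).1.mul hw.1)).symm
  have hnorm : ∫ z, f (R^[K] z) * f (R^[K] z) ∂η = ∫ z, f z * f z ∂η :=
    integral_comp_of_measurePreserving_s2 (hR.iterate K) (hf.1.mul hf.1)
  simp only [hshift, ← hnorm]
  exact sq_sum_integral_mul_le (hfn K) fun m => hw.comp_measurePreserving (hR.iterate (a m))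

/-- Each factor `φ i` is reached by multiplying `w` by the translate `f i ∘ R^{k_j}` and letting
`j → ∞`, one index at a time. -/
lemma sq_sum_integral_comp_iterate_mul_prod_le [IsFiniteMeasure η] (hR : MeasurePreserving R η η)
    {k : ℕ → ℕ} {s a : M → ℕ} {K : ℕ} (hsa : ∀ m, s m + a m = K) {ι : Type*}
    {f φ : ι → Z → ℝ} {ψ : M → M → ι → Z → ℝ} (hf : ∀ i, MemLp (f i) ∞ η)
    (hφ : ∀ i, IsKoopmanLimit η R k (f i) (φ i))
    (hψ : ∀ m l i, IsKoopmanLimit η R k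
      (fun z => f i (R^[a m] z) * f i (R^[a l] z)) (ψ m l i))
    {f₀ w : Z → ℝ} (hf₀ : MemLp f₀ ∞ η) (hw : MemLp w ∞ η) (A : Finset ι) :
    (∑ m, ∫ z, f₀ (R^[s m] z) * ((∏ i ∈ A, φ i z) * w z) ∂η) ^ 2 ≤
      (∫ z, f₀ z * f₀ z ∂η) * ∑ m, ∑ l,
        ∫ z, (∏ i ∈ A, ψ m l i z) * (w (R^[a m] z) * w (R^[a l] z)) ∂η := by
  classical
  have hcomp {u : Z → ℝ} (hu : MemLp u ∞ η) (n : ℕ) : MemLp (fun z => u (R^[n] z)) ∞ η :=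
    hu.comp_measurePreserving (hR.iterate n)
  induction A using Finset.induction generalizing w with
  | empty =>
    simpa using sq_sum_integral_comp_iterate_mul_le hR hsa (hf₀.mono_exponent le_top)
      (hw.mono_exponent le_top)
  | insert i A hi ih =>
    have hφA : MemLp (fun z => ∏ i ∈ A, φ i z) ∞ η :=
      memLp_top_finset_prod (fun i => (hφ i).memLp_top hR (hf i)) A
    have hψA (m l : M) : MemLp (fun z => ∏ i ∈ A, ψ m l i z) ∞ η :=
      memLp_top_finset_prod (fun i => (hψ m l i).memLp_top hR
        (memLp_top_comp_iterate_mul_comp_iterate hR (hf i) _ _)) A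
    have hcommute (m : M) (j : ℕ) (z : Z) : R^[k j] (R^[a m] z) = R^[a m] (R^[k j] z) :=
      (Function.Commute.iterate_iterate_self R (k j) (a m)).eq z
    have hleft (m : M) : Tendsto
        (fun j => ∫ z, f₀ (R^[s m] z) * ((∏ i ∈ A, φ i z) * (f i (R^[k j] z) * w z)) ∂η) atTop
        (𝓝 (∫ z, f₀ (R^[s m] z) * ((φ i z * ∏ i ∈ A, φ i z) * w z) ∂η)) := by
      convert (hφ i).2 _ ((memLp_top_mul (hcomp hf₀ (s m))
        (memLp_top_mul hφA hw)).mono_exponent le_top) using 4 <;> ring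
    have hright (m l : M) : Tendsto
        (fun j => ∫ z, (∏ i ∈ A, ψ m l i z) * ((f i (R^[k j] (R^[a m] z)) * w (R^[a m] z)) *
          (f i (R^[k j] (R^[a l] z)) * w (R^[a l] z))) ∂η) atTop
        (𝓝 (∫ z, (ψ m l i z * ∏ i ∈ A, ψ m l i z) * (w (R^[a m] z) * w (R^[a l] z)) ∂η)) := by
      simp only [hcommute]
      convert (hψ m l i).2 _ ((memLp_top_mul (hψA m l)
        (memLp_top_mul (hcomp hw (a m)) (hcomp hw (a l)))).mono_exponent le_top) using 4 <;> ring
    simp only [Finset.prod_insert hi]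
    exact le_of_tendsto_of_tendsto' ((tendsto_finsetSum _ fun m _ => hleft m).pow 2)
      ((tendsto_finsetSum _ fun m _ => tendsto_finsetSum _ fun l _ => hright m l).const_mul _)
      fun j => ih (memLp_top_mul (hcomp (hf i) (k j)) hw)

end CauchySchwarz

section VanDerCorput

lemma tendsto_dist_mul_atTop_of_strictMono {k : ℕ → ℕ} (hk : StrictMono k) {b c : ℕ}
    (hbc : b ≠ c) :
    Tendsto (fun n => Nat.dist (k (n * b)) (k (n * c))) atTop atTop := by
  wlog h : b < c generalizing b c
  · simpa only [Nat.dist_comm] using this hbc.symm (by lia)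
  refine tendsto_atTop_mono (fun n => ?_) tendsto_id
  obtain ⟨d, rfl⟩ := Nat.exists_eq_add_of_lt h
  have hgap := hk.add_le_nat (n * (d + 1)) (n * b)
  rw [show n * (d + 1) + n * b = n * (b + d + 1) by ring] at hgap
  rw [Nat.dist_eq_sub_of_le (hk.monotone (by gcongr)), id]
  have := Nat.le_mul_of_pos_right n d.succ_pos
  lia

/-- A van der Corput type estimate: sampling `a` along `N` widely separated times of the sequence
`k` leaves only the `N` diagonal terms on the right, against `N²` on the left. -/
lemma eq_zero_of_tendsto_of_sq_sum_le {k : ℕ → ℕ} (hk : Tendsto k atTop atTop) {a ρ : ℕ → ℝ}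
    {A C : ℝ} (ha : Tendsto (fun j => a (k j)) atTop (𝓝 A)) (hρ : Tendsto ρ atTop (𝓝 0))
    (h : ∀ (N : ℕ) (s : Fin N → ℕ),
      (∑ m, a (s m)) ^ 2 ≤ C * ∑ m, ∑ l, |ρ (Nat.dist (s m) (s l))|) : A = 0 := by
  obtain ⟨θ, hθ, hkθ⟩ := strictMono_subseq_of_tendsto_atTop hk
  have hdiag (N : ℕ) : (N * A) ^ 2 ≤ C * (N * |ρ 0|) := by
    let t (m : Fin N) (n : ℕ) : ℕ := n * (m + 1)
    have ht (m : Fin N) : Tendsto (t m) atTop atTop :=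
      tendsto_id.atTop_mul_const' m.val.succ_pos
    have hleft (m : Fin N) : Tendsto (fun n => a (k (θ (t m n)))) atTop (𝓝 A) :=
      ha.comp (hθ.tendsto_atTop.comp (ht m))
    have hright (m l : Fin N) :
        Tendsto (fun n => |ρ (Nat.dist (k (θ (t m n))) (k (θ (t l n))))|) atTop
          (𝓝 (if m = l then |ρ 0| else 0)) := by
      split_ifs with hml
      · simp [hml, Nat.dist_self]
      · have hne : (m : ℕ) + 1 ≠ l + 1 := by lia
        simpa using (hρ.comp (tendsto_dist_mul_atTop_of_strictMono hkθ hne)).abs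
    have hlim := le_of_tendsto_of_tendsto' ((tendsto_finsetSum _ fun m _ => hleft m).pow 2)
      ((tendsto_finsetSum _ fun m _ => tendsto_finsetSum _ fun l _ => hright m l).const_mul C)
      fun n => h N fun m => k (θ (t m n))
    simpa using hlim
  by_contra hA
  have hA2 : 0 < A ^ 2 := by positivity
  obtain ⟨N, hN⟩ := exists_nat_gt (C * |ρ 0| / A ^ 2)
  rw [div_lt_iff₀ hA2] at hN
  have hsucc := hdiag (N + 1)
  push_cast at hsucc
  nlinarith

end VanDerCorput

section Joinings

variable {X Y ι : Type*} [MeasurableSpace X] [MeasurableSpace Y] {μ : Measure X} {ν : Measure Y}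
  {η : Measure (X × Y)} {T : X → X} {S : Y → Y} {k : ℕ → ℕ}

/-- `η` is a joining of the measure-preserving systems `(X, μ, T)` and `(Y, ν, S)`: a
coupling of `μ` and `ν` invariant under `T × S`. -/
structure IsJoining_s2 (T : X → X) (S : Y → Y) (μ : Measure X) (ν : Measure Y)
    (η : Measure (X × Y)) : Prop where
  left : MeasurePreserving T μ μ
  right : MeasurePreserving S ν ν
  prodMap : MeasurePreserving (Prod.map T S) η η
  fst : MeasurePreserving Prod.fst η μ
  snd : MeasurePreserving Prod.snd η ν

lemma IsJoining_s2.isProbabilityMeasure [IsProbabilityMeasure μ] (hη : IsJoining_s2 T S μ ν η) :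
    IsProbabilityMeasure η :=
  (Measure.isProbabilityMeasure_map_iff hη.fst.aemeasurable).1 (hη.fst.map_eq ▸ inferInstance)

/-- Under the coupling `η` of `μ` and `ν`, the function `h` of the first coordinate is
uncorrelated with every bounded function of the second coordinate. -/
def IsDecorrelated (μ : Measure X) (ν : Measure Y) (η : Measure (X × Y)) (h : X → ℝ) : Prop :=
  ∀ g, MemLp g ∞ ν → ∫ p, h p.1 * g p.2 ∂η = (∫ x, h x ∂μ) * ∫ y, g y ∂ν

lemma isDecorrelated_of_forall_integral_eq_zero [IsProbabilityMeasure η] [IsProbabilityMeasure ν]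
    (hfst : MeasurePreserving Prod.fst η μ) (hsnd : MeasurePreserving Prod.snd η ν)
    {h : X → ℝ} (hh : MemLp h ∞ μ)
    (H : ∀ g, MemLp g ∞ ν → ∫ y, g y ∂ν = 0 → ∫ p, h p.1 * g p.2 ∂η = 0) :
    IsDecorrelated μ ν η h := by
  intro g hg
  set c := ∫ y, g y ∂ν
  have hhη : MemLp (fun p : X × Y => h p.1) ∞ η := hh.comp_measurePreserving hfst
  have hgη : MemLp (fun p : X × Y => g p.2) ∞ η := hg.comp_measurePreserving hsnd
  have hcentre : ∫ y, (g y - c) ∂ν = 0 := by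
    rw [integral_sub (hg.integrable le_top) (integrable_const c), integral_const, probReal_univ,
      one_smul, sub_self]
  have hzero := H (fun y => g y - c) (hg.sub (memLp_const c)) hcentre
  simp only [mul_sub] at hzero
  rw [integral_sub ((memLp_top_mul hhη hgη).integrable le_top)
    ((hhη.integrable le_top).mul_const c), integral_mul_const,
    integral_comp_of_measurePreserving_s2 hfst hh.1] at hzero
  exact sub_eq_zero.1 hzero

lemma IsDecorrelated.integral_mul_comp_iterate_mul_comp_iterate {h : X → ℝ}
    (hh : IsDecorrelated μ ν η h) (hS : MeasurePreserving S ν ν) {g : Y → ℝ} (hg : MemLp g ∞ ν)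
    (a b : ℕ) : ∫ p, h p.1 * (g (S^[a] p.2) * g (S^[b] p.2)) ∂η =
      (∫ x, h x ∂μ) * ∫ y, g y * g (S^[Nat.dist a b] y) ∂ν := by
  rw [← integral_comp_iterate_mul_comp_iterate hS hg.1]
  exact hh _ (memLp_top_comp_iterate_mul_comp_iterate hS hg a b)

lemma IsJoining_s2.isKoopmanLimit_comp_fst (hη : IsJoining_s2 T S μ ν η) {f φ : X → ℝ}
    (hf : MemLp f 2 μ) (hφ : IsKoopmanLimit μ T k f φ) :
    IsKoopmanLimit η (Prod.map T S) k (f ∘ Prod.fst) (φ ∘ Prod.fst) :=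
  hφ.comp_measurePreserving hf hη.left hη.fst fun _ => rfl

lemma IsJoining_s2.sq_sum_integral_le_sum_sum [IsProbabilityMeasure μ] (hη : IsJoining_s2 T S μ ν η)
    {M : Type*} [Fintype M] {s a : M → ℕ} {K : ℕ} (hsa : ∀ m, s m + a m = K)
    {f φ : ι → X → ℝ} {ψ : M → M → ι → X → ℝ} (hf : ∀ i, MemLp (f i) ∞ μ)
    (hφ : ∀ i, IsKoopmanLimit μ T k (f i) (φ i))
    (hψ : ∀ m l i, IsKoopmanLimit μ T k (fun x => f i (T^[a m] x) * f i (T^[a l] x)) (ψ m l i))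
    {f₀ : X → ℝ} (hf₀ : MemLp f₀ ∞ μ) {g : Y → ℝ} (hg : MemLp g ∞ ν) (A : Finset ι) :
    (∑ m, ∫ p, f₀ (T^[s m] p.1) * ((∏ i ∈ A, φ i p.1) * g p.2) ∂η) ^ 2 ≤
      (∫ x, f₀ x * f₀ x ∂μ) * ∑ m, ∑ l,
        ∫ p, (∏ i ∈ A, ψ m l i p.1) * (g (S^[a m] p.2) * g (S^[a l] p.2)) ∂η := by
  have := hη.isProbabilityMeasure
  have hcs := sq_sum_integral_comp_iterate_mul_prod_le hη.prodMap hsa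
    (f := fun i => f i ∘ Prod.fst) (ψ := fun m l i => ψ m l i ∘ Prod.fst)
    (fun i => (hf i).comp_measurePreserving hη.fst)
    (fun i => hη.isKoopmanLimit_comp_fst ((hf i).mono_exponent le_top) (hφ i))
    (fun m l i => by
      simpa only [Function.comp_def, Prod.map_iterate, Prod.map_fst] using
        hη.isKoopmanLimit_comp_fst ((memLp_top_comp_iterate_mul_comp_iterate hη.left (hf i)
          (a m) (a l)).mono_exponent le_top) (hψ m l i))
    (hf₀.comp_measurePreserving hη.fst) (hg.comp_measurePreserving hη.snd) A
  have hnorm : ∫ p : X × Y, f₀ p.1 * f₀ p.1 ∂η = ∫ x, f₀ x * f₀ x ∂μ :=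
    integral_comp_of_measurePreserving_s2 hη.fst (hf₀.1.mul hf₀.1)
  simpa only [Function.comp_apply, Prod.map_iterate, Prod.map_fst, Prod.map_snd, hnorm]
    using hcs

lemma IsJoining_s2.sq_sum_integral_le_sum_sum_correlation [IsProbabilityMeasure μ]
    (hη : IsJoining_s2 T S μ ν η) (hlim : ∀ f, MemLp f ∞ μ → ∃ φ, IsKoopmanLimit μ T k f φ)
    {A : Finset ι}
    (hA : ∀ f φ : ι → X → ℝ, (∀ i, MemLp (f i) ∞ μ) →
      (∀ i, IsKoopmanLimit μ T k (f i) (φ i)) → IsDecorrelated μ ν η fun x => ∏ i ∈ A, φ i x)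
    {f φ : ι → X → ℝ} (hf : ∀ i, MemLp (f i) ∞ μ)
    (hφ : ∀ i, IsKoopmanLimit μ T k (f i) (φ i)) {f₀ : X → ℝ} (hf₀ : MemLp f₀ ∞ μ) {g : Y → ℝ}
    (hg : MemLp g ∞ ν) {M : Type*} [Fintype M] (s : M → ℕ) :
    (∑ m, ∫ p, f₀ (T^[s m] p.1) * ((∏ i ∈ A, φ i p.1) * g p.2) ∂η) ^ 2 ≤
      ((∫ x, f₀ x * f₀ x ∂μ) * ∏ i ∈ A, lpNorm (f i) ∞ μ ^ 2) *
        ∑ m, ∑ l, |∫ y, g y * g (S^[Nat.dist (s m) (s l)] y) ∂ν| := by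
  let K := Finset.univ.sup s
  let a (m : M) : ℕ := K - s m
  have hsa (m : M) : s m + a m = K := Nat.add_sub_cancel' (Finset.le_sup (Finset.mem_univ m))
  have hdist (m l : M) : Nat.dist (a m) (a l) = Nat.dist (s m) (s l) := by
    have := hsa m
    have := hsa l
    unfold Nat.dist
    lia
  have hF (m l : M) (i : ι) : MemLp (fun x => f i (T^[a m] x) * f i (T^[a l] x)) ∞ μ :=
    memLp_top_comp_iterate_mul_comp_iterate hη.left (hf i) (a m) (a l)
  choose ψ hψ using fun m l i => hlim _ (hF m l i)
  have hbound (m l : M) : |∫ x, ∏ i ∈ A, ψ m l i x ∂μ| ≤ ∏ i ∈ A, lpNorm (f i) ∞ μ ^ 2 :=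
    abs_integral_finset_prod_le fun i _ =>
      (hψ m l i).ae_abs_le hη.left ((hF m l i).mono_exponent le_top)
        (ae_abs_comp_iterate_mul_comp_iterate_le hη.left (hf i) (a m) (a l))
  have hterm (m l : M) :
      ∫ p, (∏ i ∈ A, ψ m l i p.1) * (g (S^[a m] p.2) * g (S^[a l] p.2)) ∂η ≤
        (∏ i ∈ A, lpNorm (f i) ∞ μ ^ 2) * |∫ y, g y * g (S^[Nat.dist (s m) (s l)] y) ∂ν| := by
    rw [(hA _ _ (hF m l) (hψ m l)).integral_mul_comp_iterate_mul_comp_iterate hη.right hg, hdist]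
    exact (le_abs_self _).trans ((abs_mul _ _).trans_le (by gcongr; exact hbound m l))
  refine (hη.sq_sum_integral_le_sum_sum hsa hf hφ hψ hf₀ hg A).trans ?_
  rw [mul_assoc]
  refine mul_le_mul_of_nonneg_left ?_ (integral_nonneg fun x => mul_self_nonneg _)
  simpa only [Finset.mul_sum] using
    Finset.sum_le_sum fun m _ => Finset.sum_le_sum fun l _ => hterm m l

lemma IsJoining_s2.isDecorrelated_finset_prod [IsProbabilityMeasure μ] [IsProbabilityMeasure ν]
    (hη : IsJoining_s2 T S μ ν η) (hmix : MeasureMixing S ν) (hk : Tendsto k atTop atTop)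
    (hlim : ∀ f, MemLp f ∞ μ → ∃ φ, IsKoopmanLimit μ T k f φ) {f φ : ι → X → ℝ}
    (hf : ∀ i, MemLp (f i) ∞ μ) (hφ : ∀ i, IsKoopmanLimit μ T k (f i) (φ i)) (A : Finset ι) :
    IsDecorrelated μ ν η fun x => ∏ i ∈ A, φ i x := by
  classical
  have := hη.isProbabilityMeasure
  have hφtop (i : ι) : MemLp (φ i) ∞ μ := (hφ i).memLp_top hη.left (hf i)
  induction A using Finset.induction generalizing f φ with
  | empty =>
    intro g hg
    simpa using integral_comp_of_measurePreserving_s2 hη.snd hg.1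
  | insert i A hi ih =>
    refine isDecorrelated_of_forall_integral_eq_zero hη.fst hη.snd
      (memLp_top_finset_prod hφtop _) fun g hg hg0 => ?_
    have hg2 : MemLp g 2 ν := hg.mono_exponent le_top
    have hcorr : Tendsto (fun n => ∫ y, g y * g (S^[n] y) ∂ν) atTop (𝓝 0) := by
      simpa [hg0] using hmix.tendsto_integral_mul_comp_iterate hη.right hg2 hg2
    have hφA := memLp_top_mul ((memLp_top_finset_prod hφtop A).comp_measurePreserving hη.fst)
      (hg.comp_measurePreserving hη.snd)
    have hpull := hη.isKoopmanLimit_comp_fst ((hf i).mono_exponent le_top) (hφ i)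
    have htrans := hpull.2 _ (hφA.mono_exponent le_top)
    simp only [Function.comp_apply, Prod.map_iterate, Prod.map_fst, ← mul_assoc] at htrans
    simp only [Finset.prod_insert hi]
    refine eq_zero_of_tendsto_of_sq_sum_le hk
      (a := fun n => ∫ p, f i (T^[n] p.1) * ((∏ i ∈ A, φ i p.1) * g p.2) ∂η) ?_ hcorr
      fun N s => hη.sq_sum_integral_le_sum_sum_correlation hlim (fun f φ hf hφ => ih hf hφ
        fun i => (hφ i).memLp_top hη.left (hf i)) hf hφ (hf i) hg s
    simpa only [mul_assoc] using htrans

end Joinings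

theorem joining_integral_prod_image_of_weakLimit_general {X Y ι : Type*} [MeasurableSpace X]
    [MeasurableSpace Y] {μ : Measure X} {ν : Measure Y} [IsProbabilityMeasure μ]
    [IsProbabilityMeasure ν] {η : Measure (X × Y)} {T : X → X} {S : Y → Y}
    (hη : IsJoining_s2 T S μ ν η) (hmix : MeasureMixing S ν) {k : ℕ → ℕ}
    (hk : Tendsto k atTop atTop) (V : Lp ℝ 2 μ → Lp ℝ 2 μ)
    (hV : ∀ f g : Lp ℝ 2 μ,
      Tendsto (fun j => ∫ x, f (T^[k j] x) * g x ∂μ) atTop (𝓝 ⟪V f, g⟫))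
    (A : Finset ι) {F : ι → Lp ℝ 2 μ} (hF : ∀ i, MemLp (F i) ∞ μ) {g : Y → ℝ}
    (hg : MemLp g ∞ ν) :
    ∫ p, (∏ i ∈ A, V (F i) p.1) * g p.2 ∂η = (∫ x, ∏ i ∈ A, V (F i) x ∂μ) * ∫ y, g y ∂ν := by
  have hlim {f : X → ℝ} (hf : MemLp f 2 μ) : IsKoopmanLimit μ T k f (V (hf.toLp f)) :=
    isKoopmanLimit_of_tendsto_inner hη.left hV hf
  refine hη.isDecorrelated_finset_prod hmix hk
    (fun f hf => ⟨_, hlim (hf.mono_exponent le_top)⟩) hF (fun i => ?_) A g hg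
  simpa only [Lp.toLp_coeFn] using hlim (Lp.memLp (F i))

/-- If `U_T^{k_j} → V` weakly on `L²(μ)`, `S` is mixing and `η` is a joining of
`(X, μ, T)` and `(Y, ν, S)`, then for bounded measurable `f₁, …, fₙ` on `X` and `g` on `Y`,
`∫ (∏ i (V fᵢ)(x)) g(y) dη = (∫ ∏ i (V fᵢ) dμ) (∫ g dν)`. -/
theorem joining_integral_prod_image_of_weakLimit
    {X Y : Type*} [MeasurableSpace X] [MeasurableSpace Y]
    (μ : Measure X) (ν : Measure Y) [IsProbabilityMeasure μ] [IsProbabilityMeasure ν]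
    (T : X ≃ᵐ X) (hT : MeasurePreserving T μ μ)
    (k : ℕ → ℕ) (hk : StrictMono k)
    (V : Lp ℝ 2 μ →L[ℝ] Lp ℝ 2 μ)
    (hV : ∀ f g : Lp ℝ 2 μ,
      Tendsto (fun j => ∫ x, f ((⇑T)^[k j] x) * g x ∂μ) atTop (𝓝 (@inner ℝ _ _ (V f) g)))
    (S : Y ≃ᵐ Y) (hS : MeasurePreserving S ν ν) (hSmix : MeasureMixing (⇑S) ν)
    (η : Measure (X × Y)) [IsProbabilityMeasure η]
    (hηinv : η.map (Prod.map ⇑T ⇑S) = η)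
    (hη1 : η.map Prod.fst = μ) (hη2 : η.map Prod.snd = ν)
    (n : ℕ) (hn : 1 ≤ n)
    (f : Fin n → X → ℝ) (hfm : ∀ i, Measurable (f i)) (hfb : ∀ i, ∃ C : ℝ, ∀ x, |f i x| ≤ C)
    (F : Fin n → Lp ℝ 2 μ) (hF : ∀ i, (F i : X → ℝ) =ᵐ[μ] f i)
    (g : Y → ℝ) (hgm : Measurable g) (hgb : ∃ C : ℝ, ∀ y, |g y| ≤ C) :
    ∫ p, (∏ i, (V (F i) : X → ℝ) p.1) * g p.2 ∂η
      = (∫ x, ∏ i, (V (F i) : X → ℝ) x ∂μ) * ∫ y, g y ∂ν := by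
  have hη : IsJoining_s2 T S μ ν η :=
    ⟨hT, hS, ⟨hT.measurable.prodMap hS.measurable, hηinv⟩, ⟨measurable_fst, hη1⟩,
      ⟨measurable_snd, hη2⟩⟩
  have hFtop (i : Fin n) : MemLp (F i) ∞ μ := by
    obtain ⟨C, hC⟩ := hfb i
    exact (memLp_top_of_bound (hfm i).aestronglyMeasurable C (.of_forall hC)).ae_eq (hF i).symm
  obtain ⟨C, hC⟩ := hgb
  exact joining_integral_prod_image_of_weakLimit_general hη hSmix hk.tendsto_atTop V hV
    Finset.univ hFtop (memLp_top_of_bound hgm.aestronglyMeasurable C (.of_forall hC))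
end
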